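/- arXiv:2404.02005 — 2 statements merged into one kernel-verified Lean document; each statement's English description precedes it below -/
import Mathlib

section
/- Let (R, m) be an analytically unramified Gorenstein local ring with integral closure R̄ and conductor ideal 𝔠. If R̄ is a Cohen–Macaulay R-module, then 𝔠 is a maximal Cohen–Macaulay R-module, i.e. depth_R(𝔠) = dim R. -/
open CategoryTheory IsLocalRing

set_option synthInstance.maxHeartbeats 1000000
set_option maxHeartbeats 1000000

noncomputable section

/-- The integral closure `R̄` of `R` in its total ring of fractions, viewed as a type
(with its canonical `R`-algebra and `R`-module structures). -/
abbrev IntClosure (R : Type) [CommRing R] : Type :=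
  ↥(integralClosure R (FractionRing R))

/-- The quotient `R`-module `R̄/R`. -/
abbrev IntClosureQuot (R : Type) [CommRing R] : Type :=
  IntClosure R ⧸ LinearMap.range (Algebra.linearMap R (IntClosure R))

/-- The conductor ideal `𝔠 = Ann_R(R̄/R) = {r : R | r • R̄ ⊆ R}`. -/
def conductorIdeal (R : Type) [CommRing R] : Ideal R :=
  Module.annihilator R (IntClosureQuot R)

/-- A local ring `R` is analytically unramified if its `m`-adic completion is reduced. -/
def AnalyticallyUnramified (R : Type) [CommRing R] [IsLocalRing R] : Prop :=
  IsReduced (AdicCompletion (maximalIdeal R) R)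

/-- `R` is normal: it is reduced and equal to its integral closure `R̄` in its total
ring of fractions. -/
def IsNormalRing (R : Type) [CommRing R] : Prop :=
  IsReduced R ∧ integralClosure R (FractionRing R) = ⊥

/-- `Ext^i_R(M, N)` as a type. -/
abbrev ExtMod (R : Type) [CommRing R] (M : Type) [AddCommGroup M] [Module R M]
    (N : Type) [AddCommGroup N] [Module R N] (i : ℕ) : Type :=
  ↥(((Ext R (ModuleCat.{0} R) i).obj (Opposite.op (ModuleCat.of R M))).obj (ModuleCat.of R N))

/-- `M` has finite projective dimension over `R`:
`Ext^i_R(M, -)` vanishes for all `i` bigger than some `n`. -/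
def HasFiniteProjDim (R : Type) [CommRing R] (M : Type) [AddCommGroup M] [Module R M] : Prop :=
  ∃ n : ℕ, ∀ (N : ModuleCat.{0} R) (i : ℕ), n < i →
    Subsingleton ↥(((Ext R (ModuleCat.{0} R) i).obj (Opposite.op (ModuleCat.of R M))).obj N)

/-- `M` has finite injective dimension over `R`:
`Ext^i_R(-, M)` vanishes for all `i` bigger than some `n`. -/
def HasFiniteInjDim (R : Type) [CommRing R] (M : Type) [AddCommGroup M] [Module R M] : Prop :=
  ∃ n : ℕ, ∀ (N : ModuleCat.{0} R) (i : ℕ), n < i →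
    Subsingleton ↥(((Ext R (ModuleCat.{0} R) i).obj (Opposite.op N)).obj (ModuleCat.of R M))

/-- The depth of an `R`-module `M` over a local ring `(R, m)`: the least `i` such that
`Ext^i_R(R/m, M) ≠ 0` (`⊤` if there is no such `i`), valued in `WithBot (WithTop ℕ)`
for easy comparison with `ringKrullDim`. -/
def moduleDepth (R : Type) [CommRing R] [IsLocalRing R]
    (M : Type) [AddCommGroup M] [Module R M] : WithBot (WithTop ℕ) :=
  sInf { n : WithBot (WithTop ℕ) |
    ∃ i : ℕ, n = (i : ℕ) ∧ Nontrivial (ExtMod R (ResidueField R) M i) }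

/-- A Noetherian local ring is Gorenstein if it has finite injective dimension
as a module over itself. -/
def IsGorensteinLocal (R : Type) [CommRing R] [IsLocalRing R] : Prop :=
  IsNoetherianRing R ∧ HasFiniteInjDim R R

/-- A Noetherian local ring is Cohen–Macaulay if its depth equals its Krull dimension. -/
def IsCohenMacaulayLocal (R : Type) [CommRing R] [IsLocalRing R] : Prop :=
  IsNoetherianRing R ∧ moduleDepth R R = ringKrullDim R

/-- A ring is Cohen–Macaulay if it is Noetherian and all its localizations at primes
are Cohen–Macaulay local rings. -/
def IsCohenMacaulayRing (A : Type) [CommRing A] : Prop :=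
  IsNoetherianRing A ∧ ∀ (p : Ideal A) [p.IsPrime],
    moduleDepth (Localization.AtPrime p) (Localization.AtPrime p) =
      ringKrullDim (Localization.AtPrime p)

/-- Serre's condition `(S2)`: `depth (R_p) ≥ min {2, height p}` for every prime `p`
(`height p` being the dimension of `R_p`). -/
def SerreS2 (R : Type) [CommRing R] : Prop :=
  ∀ (p : Ideal R) [p.IsPrime],
    min 2 (ringKrullDim (Localization.AtPrime p)) ≤
      moduleDepth (Localization.AtPrime p) (Localization.AtPrime p)

/-- A Noetherian local ring is regular if its maximal ideal can be generated by
`dim R` elements. -/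
def IsRegularLocal (A : Type) [CommRing A] [IsLocalRing A] : Prop :=
  IsNoetherianRing A ∧ ∃ s : Finset A, Ideal.span (s : Set A) = maximalIdeal A ∧
    (s.card : WithBot (WithTop ℕ)) = ringKrullDim A

/-- Serre's condition `(R1)`: `R_p` is regular for every prime `p` of height at most `1`. -/
def SerreR1 (R : Type) [CommRing R] : Prop :=
  ∀ (p : Ideal R) [p.IsPrime], ringKrullDim (Localization.AtPrime p) ≤ 1 →
    IsRegularLocal (Localization.AtPrime p)

/-- The `i`-th local cohomology `H^i_m(M)` of `M` with support in the maximal ideal,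
as a type. -/
abbrev localCohMod (R : Type) [CommRing R] [IsLocalRing R] (i : ℕ)
    (M : Type) [AddCommGroup M] [Module R M] : Type :=
  ↥((localCohomology (maximalIdeal R) i).obj (ModuleCat.of R M))

/-- `x : Fin d → R` is a system of parameters for the local ring `(R, m)`:
`d = dim R`, all `x i` lie in `m`, and the ideal they generate is `m`-primary
(its radical is `m`). -/
def IsSystemOfParameters (R : Type) [CommRing R] [IsLocalRing R] {d : ℕ}
    (x : Fin d → R) : Prop :=
  (d : WithBot (WithTop ℕ)) = ringKrullDim R ∧ (∀ i, x i ∈ maximalIdeal R) ∧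
    (Ideal.span (Set.range x)).radical = maximalIdeal R

/-- `E` is an injective hull of the residue field of the local ring `R`:
`E` is injective and contains a copy of `R/m` as an essential submodule. -/
def IsInjectiveHullOfResidueField (R : Type) [CommRing R] [IsLocalRing R]
    (E : Type) [AddCommGroup E] [Module R E] : Prop :=
  Module.Injective R E ∧ ∃ f : ResidueField R →ₗ[R] E, Function.Injective f ∧
    ∀ N : Submodule R E, N ≠ ⊥ → N ⊓ LinearMap.range f ≠ ⊥

/-!
Evaluation at `1` identifies `𝔠` with the dual `Hom_R(R̄, R)`. Once `R̄` is known to be finite, it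
is a maximal Cohen–Macaulay module over a Gorenstein ring, so `Ext^i_R(R̄, R) = 0` for `i > 0`;
dualizing a free presentation of `R̄` and inducting on `i` then gives `Ext^i_R(k, R̄^*) = 0` for
`i < dim R`.

Finiteness of `R̄` is obtained from the Cohen–Macaulay hypothesis itself. Let `x` be a maximal
regular sequence of `R`. As `Ext^i_R(k, R̄) = 0` for `i < dim R` and `R / (x^n)` is self-injective,
an element of `R̄` outside `(x^n) R̄` is detected by an `R`-linear map from `R̄` to the completion
`S`. Since `S` is reduced and Noetherian, a nonzero `z : S` lies outside some power of `m S̄`, and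
approximating `z` by elements of `R` one finds `φ : R̄ → S` with `z * φ 1 ≠ 0`. So the ideal of all
`φ 1` has zero annihilator and contains a nonzerodivisor; the corresponding `φ` embeds `R̄ ⊗ S`
into `S`, and finiteness descends along the faithfully flat map `R → S`.
-/

universe u

section ExtComparison

variable {R : Type u} [CommRing R] {X : ModuleCat.{u} R}

theorem isZero_linearYonedaObj_homology_zero_iff (P : ProjectiveResolution X)
    (Y : ModuleCat.{u} R) :
    Limits.IsZero ((P.complex.linearYonedaObj R Y).homology 0) ↔
      Subsingleton (Abelian.Ext X Y 0) := by
  rw [← HomologicalComplex.exactAt_iff_isZero_homology,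
    HomologicalComplex.exactAt_iff' _ 0 0 1 (by simp) (by simp), ShortComplex.moduleCat_exact_iff]
  constructor
  · intro hexact
    refine subsingleton_of_forall_eq 0 fun c ↦ ?_
    obtain ⟨f, rfl⟩ := (Abelian.Ext.mk₀_bijective X Y).2 c
    have hcycle : P.complex.d 1 0 ≫ P.π.f 0 ≫ f = 0 :=
      (Category.assoc _ _ _).symm.trans
        ((congrArg (· ≫ f) P.complex_d_comp_π_f_zero).trans Limits.zero_comp)
    obtain ⟨g, hg⟩ := hexact (P.π.f 0 ≫ f) hcycle
    replace hg : P.complex.d 0 0 ≫ (show P.complex.X 0 ⟶ Y from g) = P.π.f 0 ≫ f := hg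
    rw [P.complex.shape 0 0 (by simp), Limits.zero_comp] at hg
    have hf : f = 0 := (cancel_epi (P.π.f 0)).1 (hg.symm.trans Limits.comp_zero.symm)
    rw [hf, Abelian.Ext.mk₀_zero]
  · intro _ f hf
    change P.complex.d 1 0 ≫ f = 0 at hf
    have hdesc : P.exact₀.desc f hf = 0 :=
      (Abelian.Ext.mk₀_bijective X Y).1 (Subsingleton.elim _ _)
    refine ⟨0, ?_⟩
    rw [map_zero, ← P.exact₀.g_desc f hf, hdesc]
    exact Limits.comp_zero.symm

theorem isZero_linearYonedaObj_homology_succ_iff (P : ProjectiveResolution X)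
    (Y : ModuleCat.{u} R) (n : ℕ) :
    Limits.IsZero ((P.complex.linearYonedaObj R Y).homology (n + 1)) ↔
      Subsingleton (Abelian.Ext X Y (n + 1)) := by
  rw [← HomologicalComplex.exactAt_iff_isZero_homology,
    HomologicalComplex.exactAt_iff' _ n (n + 1) (n + 2) (by simp) (by simp),
    ShortComplex.moduleCat_exact_iff]
  constructor
  · intro hexact
    refine subsingleton_of_forall_eq 0 fun c ↦ ?_
    obtain ⟨f, hf, rfl⟩ := P.extMk_surjective c (n + 2) rfl
    exact (P.extMk_eq_zero_iff f (n + 2) rfl hf n rfl).2 (hexact f hf)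
  · intro _ f hf
    exact (P.extMk_eq_zero_iff f (n + 2) rfl hf n rfl).1 (Subsingleton.elim _ _)

theorem subsingleton_extFunctor_iff (X Y : ModuleCat.{u} R) (n : ℕ) :
    Subsingleton ↥(((Ext R (ModuleCat.{u} R) n).obj (Opposite.op X)).obj Y) ↔
      Subsingleton (Abelian.Ext X Y n) := by
  let P := (HasProjectiveResolution.out (Z := X)).some
  rw [← ModuleCat.isZero_iff_subsingleton, (P.isoExt (R := R) n Y).isZero_iff]
  cases n with
  | zero => exact isZero_linearYonedaObj_homology_zero_iff P Y
  | succ n => exact isZero_linearYonedaObj_homology_succ_iff P Y n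

end ExtComparison

section ModuleExt

/-- `Ext^i_R(M, N)` for unbundled modules: Mathlib's Yoneda-style `Abelian.Ext`, whose composition
product carries the connecting maps of the long exact sequences. -/
abbrev ModuleExt (R : Type u) [CommRing R] (M N : Type u) [AddCommGroup M] [Module R M]
    [AddCommGroup N] [Module R N] (i : ℕ) : Type u :=
  Abelian.Ext (ModuleCat.of R M) (ModuleCat.of R N) i

/-- The vanishing `Ext^i_R(M, N) = 0`. -/
def ExtVanishes (R : Type u) [CommRing R] (M N : Type u) [AddCommGroup M] [Module R M]
    [AddCommGroup N] [Module R N] (i : ℕ) : Prop :=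
  ∀ e : ModuleExt R M N i, e = 0

variable {R : Type u} [CommRing R] {A B C A' B' C' L M N V : Type u}
  [AddCommGroup A] [Module R A] [AddCommGroup B] [Module R B] [AddCommGroup C] [Module R C]
  [AddCommGroup A'] [Module R A'] [AddCommGroup B'] [Module R B'] [AddCommGroup C'] [Module R C']
  [AddCommGroup L] [Module R L] [AddCommGroup M] [Module R M] [AddCommGroup N] [Module R N]
  [AddCommGroup V] [Module R V]

/-- A linear map as a class in `Ext^0`. -/
def extOfLinearMap (f : M →ₗ[R] N) : ModuleExt R M N 0 :=
  Abelian.Ext.mk₀ (ModuleCat.ofHom f)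

/-- The map `f^* : Ext^i(N, L) → Ext^i(M, L)` induced by `f : M → N`. -/
def extPrecomp (f : M →ₗ[R] N) {i : ℕ} : ModuleExt R N L i →ₗ[R] ModuleExt R M L i where
  toFun e := (extOfLinearMap f).comp e (zero_add i)
  map_add' := by simp
  map_smul' := by simp

/-- The map `f_* : Ext^i(L, M) → Ext^i(L, N)` induced by `f : M → N`. -/
def extPostcomp (f : M →ₗ[R] N) {i : ℕ} : ModuleExt R L M i →ₗ[R] ModuleExt R L N i where
  toFun e := e.comp (extOfLinearMap f) (add_zero i)
  map_add' := by simp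
  map_smul' := by simp

theorem extOfLinearMap_bijective :
    Function.Bijective (extOfLinearMap : (M →ₗ[R] N) → ModuleExt R M N 0) :=
  (Abelian.Ext.mk₀_bijective _ _).comp
    ⟨fun _ _ h ↦ congrArg ModuleCat.Hom.hom h, fun a ↦ ⟨a.hom, rfl⟩⟩

theorem extOfLinearMap_zero : extOfLinearMap (0 : M →ₗ[R] N) = 0 := by
  simp [extOfLinearMap]

theorem extOfLinearMap_eq_zero_iff {f : M →ₗ[R] N} : extOfLinearMap f = 0 ↔ f = 0 := by
  rw [← extOfLinearMap_zero, extOfLinearMap_bijective.1.eq_iff]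

theorem extOfLinearMap_smul (r : R) (f : M →ₗ[R] N) :
    extOfLinearMap (r • f) = r • extOfLinearMap f :=
  Abelian.Ext.mk₀_smul r (ModuleCat.ofHom f)

theorem extOfLinearMap_add (f g : M →ₗ[R] N) :
    extOfLinearMap (f + g) = extOfLinearMap f + extOfLinearMap g := by
  simp [extOfLinearMap, Abelian.Ext.mk₀_add]

theorem extPrecomp_extOfLinearMap (f : M →ₗ[R] N) (g : N →ₗ[R] L) :
    extPrecomp f (extOfLinearMap g) = extOfLinearMap (g ∘ₗ f) := by
  simp [extPrecomp, extOfLinearMap]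

theorem extPostcomp_extOfLinearMap (f : M →ₗ[R] N) (g : N →ₗ[R] L) :
    extPostcomp g (extOfLinearMap f) = extOfLinearMap (g ∘ₗ f) := by
  simp [extPostcomp, extOfLinearMap]

theorem extPrecomp_extPrecomp (f : M →ₗ[R] N) (g : N →ₗ[R] L) {i : ℕ} (e : ModuleExt R L V i) :
    extPrecomp f (extPrecomp g e) = extPrecomp (g ∘ₗ f) e := by
  simp [extPrecomp, extOfLinearMap]

theorem extPostcomp_extPostcomp (f : M →ₗ[R] N) (g : N →ₗ[R] L) {i : ℕ}
    (e : ModuleExt R V M i) : extPostcomp g (extPostcomp f e) = extPostcomp (g ∘ₗ f) e := by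
  simp [extPostcomp, extOfLinearMap]

theorem extPrecomp_id {i : ℕ} (e : ModuleExt R M N i) : extPrecomp LinearMap.id e = e := by
  simp [extPrecomp, extOfLinearMap]

theorem extPostcomp_id {i : ℕ} (e : ModuleExt R M N i) : extPostcomp LinearMap.id e = e := by
  simp [extPostcomp, extOfLinearMap]

theorem extPrecomp_smul (f : M →ₗ[R] N) (r : R) {i : ℕ} (e : ModuleExt R N V i) :
    extPrecomp (r • f) e = r • extPrecomp f e := by
  simp [extPrecomp, extOfLinearMap_smul]

theorem extPostcomp_smul (f : M →ₗ[R] N) (r : R) {i : ℕ} (e : ModuleExt R V M i) :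
    extPostcomp (r • f) e = r • extPostcomp f e := by
  simp [extPostcomp, extOfLinearMap_smul]

theorem extPrecomp_zero {i : ℕ} (e : ModuleExt R N V i) :
    extPrecomp (0 : M →ₗ[R] N) e = 0 := by
  simp [extPrecomp, extOfLinearMap]

theorem extPostcomp_zero {i : ℕ} (e : ModuleExt R V M i) :
    extPostcomp (0 : M →ₗ[R] N) e = 0 := by
  simp [extPostcomp, extOfLinearMap]

theorem extPostcomp_add (f g : M →ₗ[R] N) {i : ℕ} (e : ModuleExt R V M i) :
    extPostcomp (f + g) e = extPostcomp f e + extPostcomp g e := by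
  simp [extPostcomp, extOfLinearMap_add]

theorem extPrecomp_comp (f : M →ₗ[R] N) {i j n : ℕ} (h : i + j = n) (e : ModuleExt R N A i)
    (e' : ModuleExt R A B j) : extPrecomp f (e.comp e' h) = (extPrecomp f e).comp e' h :=
  (Abelian.Ext.comp_assoc _ _ _ (zero_add i) h (by omega)).symm

theorem extPostcomp_comp (f : M →ₗ[R] N) {i j n : ℕ} (h : i + j = n) (e : ModuleExt R A B i)
    (e' : ModuleExt R B M j) : extPostcomp f (e.comp e' h) = e.comp (extPostcomp f e') h :=
  Abelian.Ext.comp_assoc _ _ _ h (add_zero j) (by omega)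

theorem comp_extPrecomp (f : M →ₗ[R] N) {i j n : ℕ} (h : i + j = n)
    (e : ModuleExt R A M i) (e' : ModuleExt R N B j) :
    e.comp (extPrecomp f e') h = (extPostcomp f e).comp e' h :=
  (Abelian.Ext.comp_assoc _ _ _ (add_zero i) (zero_add j) (by omega)).symm

theorem extPrecomp_extPostcomp (f : M →ₗ[R] N) (g : A →ₗ[R] B) {i : ℕ} (e : ModuleExt R N A i) :
    extPrecomp f (extPostcomp g e) = extPostcomp g (extPrecomp f e) :=
  extPrecomp_comp f (add_zero i) e (extOfLinearMap g)

theorem smul_ext_eq_zero_of_smul_left {i : ℕ} {r : R} (h : ∀ m : M, r • m = 0)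
    (e : ModuleExt R M N i) : r • e = 0 := by
  rw [← extPrecomp_id e, ← extPrecomp_smul,
    show r • (LinearMap.id : M →ₗ[R] M) = 0 from LinearMap.ext h, extPrecomp_zero]

theorem extVanishes_iff_subsingleton {i : ℕ} :
    ExtVanishes R M N i ↔ Subsingleton (ModuleExt R M N i) :=
  ⟨fun h ↦ subsingleton_of_forall_eq 0 h, fun _ _ ↦ Subsingleton.elim _ _⟩

theorem ExtVanishes.of_linearEquiv_left (e : M ≃ₗ[R] N) {i : ℕ} (h : ExtVanishes R M V i) :
    ExtVanishes R N V i := by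
  intro x
  calc x = extPrecomp (e.symm : N →ₗ[R] M) (extPrecomp (e : M →ₗ[R] N) x) := by
        simp [extPrecomp_extPrecomp, extPrecomp_id]
    _ = 0 := by rw [h (extPrecomp _ x), map_zero]

theorem ExtVanishes.of_linearEquiv_right (e : M ≃ₗ[R] N) {i : ℕ} (h : ExtVanishes R V M i) :
    ExtVanishes R V N i := by
  intro x
  calc x = extPostcomp (e : M →ₗ[R] N) (extPostcomp (e.symm : N →ₗ[R] M) x) := by
        simp [extPostcomp_extPostcomp, extPostcomp_id]
    _ = 0 := by rw [h (extPostcomp _ x), map_zero]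

theorem extVanishes_succ_of_projective [Module.Projective R M] (i : ℕ) :
    ExtVanishes R M N (i + 1) :=
  fun e ↦ Abelian.Ext.eq_zero_of_projective e

theorem extVanishes_of_subsingleton_left [Subsingleton M] (i : ℕ) : ExtVanishes R M N i := by
  intro x
  rw [← extPrecomp_id x, show (LinearMap.id : M →ₗ[R] M) = 0 from Subsingleton.elim _ _,
    extPrecomp_zero]

/-- `0 → A → B → C → 0` is a short exact sequence of modules. -/
structure IsShortExact (f : A →ₗ[R] B) (g : B →ₗ[R] C) : Prop where
  injective : Function.Injective f
  surjective : Function.Surjective g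
  exact : Function.Exact f g

theorem isShortExact_subtype_ker (g : B →ₗ[R] C) (hg : Function.Surjective g) :
    IsShortExact (LinearMap.ker g).subtype g :=
  ⟨Subtype.val_injective, hg, fun _ ↦ by simp⟩

theorem isShortExact_subtype_mkQ (S : Submodule R M) : IsShortExact S.subtype S.mkQ :=
  ⟨Subtype.val_injective, S.mkQ_surjective, fun _ ↦ by simp⟩

namespace IsShortExact

variable {f : A →ₗ[R] B} {g : B →ₗ[R] C} {f' : A' →ₗ[R] B'} {g' : B' →ₗ[R] C'}

/-- The bundled form of a short exact sequence of modules. -/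
abbrev shortComplex (h : IsShortExact f g) : ShortComplex (ModuleCat.{u} R) :=
  ModuleCat.shortComplexOfCompEqZero f g h.exact.linearMap_comp_eq_zero

theorem shortExact (h : IsShortExact f g) : h.shortComplex.ShortExact :=
  ModuleCat.shortComplex_shortExact _ h.exact h.injective h.surjective

/-- The class in `Ext^1(C, A)` of the extension `0 → A → B → C → 0`. -/
def extClass (h : IsShortExact f g) : ModuleExt R C A 1 :=
  h.shortExact.extClass

theorem extClass_naturality (h : IsShortExact f g) (h' : IsShortExact f' g') {a : A →ₗ[R] A'}
    {b : B →ₗ[R] B'} {c : C →ₗ[R] C'} (hab : f' ∘ₗ a = b ∘ₗ f) (hbc : g' ∘ₗ b = c ∘ₗ g) :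
    extPostcomp a h.extClass = extPrecomp c h'.extClass :=
  ShortComplex.ShortExact.extClass_naturality h.shortExact h'.shortExact
    { τ₁ := ModuleCat.ofHom a, τ₂ := ModuleCat.ofHom b, τ₃ := ModuleCat.ofHom c
      comm₁₂ := by ext x; exact DFunLike.congr_fun hab x
      comm₂₃ := by ext x; exact DFunLike.congr_fun hbc x }

theorem covariant_exact₁ (h : IsShortExact f g) {i j : ℕ} (hij : i + 1 = j)
    (e : ModuleExt R V A j) (he : extPostcomp f e = 0) :
    ∃ a : ModuleExt R V C i, a.comp h.extClass hij = e :=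
  Abelian.Ext.covariant_sequence_exact₁ (ModuleCat.of R V) h.shortExact e he hij

theorem covariant_exact₃ (h : IsShortExact f g) {i j : ℕ} (hij : i + 1 = j)
    (e : ModuleExt R V C i) (he : e.comp h.extClass hij = 0) :
    ∃ a : ModuleExt R V B i, extPostcomp g a = e :=
  Abelian.Ext.covariant_sequence_exact₃ (ModuleCat.of R V) h.shortExact e hij he

theorem contravariant_exact₁ (h : IsShortExact f g) {i j : ℕ} (hij : 1 + i = j)
    (e : ModuleExt R A V i) (he : h.extClass.comp e hij = 0) :
    ∃ a : ModuleExt R B V i, extPrecomp f a = e :=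
  Abelian.Ext.contravariant_sequence_exact₁ h.shortExact (ModuleCat.of R V) e hij he

theorem contravariant_exact₂ (h : IsShortExact f g) {i : ℕ} (e : ModuleExt R B V i)
    (he : extPrecomp f e = 0) : ∃ a : ModuleExt R C V i, extPrecomp g a = e :=
  Abelian.Ext.contravariant_sequence_exact₂ h.shortExact (ModuleCat.of R V) e he

theorem contravariant_exact₃ (h : IsShortExact f g) {i j : ℕ} (hij : 1 + i = j)
    (e : ModuleExt R C V j) (he : extPrecomp g e = 0) :
    ∃ a : ModuleExt R A V i, h.extClass.comp a hij = e :=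
  Abelian.Ext.contravariant_sequence_exact₃ h.shortExact (ModuleCat.of R V) e he hij

theorem extPostcomp_zero_injective (h : IsShortExact f g) {e : ModuleExt R V A 0}
    (he : extPostcomp f e = 0) : e = 0 := by
  obtain ⟨φ, rfl⟩ := extOfLinearMap_bijective.2 e
  rw [extPostcomp_extOfLinearMap, extOfLinearMap_eq_zero_iff] at he
  rw [extOfLinearMap_eq_zero_iff]
  ext x
  exact h.injective (by simpa using DFunLike.congr_fun he x)

theorem extPrecomp_zero_injective (h : IsShortExact f g) {e : ModuleExt R C V 0}
    (he : extPrecomp g e = 0) : e = 0 := by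
  obtain ⟨φ, rfl⟩ := extOfLinearMap_bijective.2 e
  rw [extPrecomp_extOfLinearMap, extOfLinearMap_eq_zero_iff] at he
  rw [extOfLinearMap_eq_zero_iff]
  ext x
  obtain ⟨y, rfl⟩ := h.surjective x
  exact DFunLike.congr_fun he y

theorem covariant_vanishes₁_zero (h : IsShortExact f g) (hB : ExtVanishes R V B 0) :
    ExtVanishes R V A 0 :=
  fun _ ↦ h.extPostcomp_zero_injective (hB _)

theorem covariant_vanishes₁ (h : IsShortExact f g) {i : ℕ} (hC : ExtVanishes R V C i)
    (hB : ExtVanishes R V B (i + 1)) : ExtVanishes R V A (i + 1) := by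
  intro e
  obtain ⟨a, rfl⟩ := h.covariant_exact₁ rfl e (hB _)
  rw [hC a, Abelian.Ext.zero_comp]

theorem contravariant_vanishes₁ (h : IsShortExact f g) {i : ℕ} (hB : ExtVanishes R B V i)
    (hC : ExtVanishes R C V (i + 1)) : ExtVanishes R A V i := by
  intro e
  obtain ⟨a, rfl⟩ := h.contravariant_exact₁ (add_comm _ _) e (hC _)
  rw [hB a, map_zero]

theorem contravariant_vanishes₂ (h : IsShortExact f g) {i : ℕ} (hC : ExtVanishes R C V i)
    (hA : ExtVanishes R A V i) : ExtVanishes R B V i := by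
  intro e
  obtain ⟨a, rfl⟩ := h.contravariant_exact₂ e (hA _)
  rw [hC a, map_zero]

theorem contravariant_vanishes₃ (h : IsShortExact f g) {i : ℕ} (hA : ExtVanishes R A V i)
    (hB : ExtVanishes R B V (i + 1)) : ExtVanishes R C V (i + 1) := by
  intro e
  obtain ⟨a, rfl⟩ := h.contravariant_exact₃ (add_comm _ _) e (hB _)
  rw [hA a, Abelian.Ext.comp_zero]

end IsShortExact

end ModuleExt

open scoped Pointwise

section LocalExt

variable {R : Type u} [CommRing R] {L N V : Type u} [AddCommGroup L] [Module R L]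
  [AddCommGroup N] [Module R N] [AddCommGroup V] [Module R V]

theorem isShortExact_smul_mkQ {x : R} (hx : IsSMulRegular N x) :
    IsShortExact (x • (LinearMap.id : N →ₗ[R] N)) (x • (⊤ : Submodule R N)).mkQ :=
  ⟨fun _ _ h ↦ hx h, Submodule.mkQ_surjective _, LinearMap.exact_lsmul_mkQ_smul_top N x⟩

theorem isSMulRegular_quotient_of_notMem_prime {p : Ideal R} [p.IsPrime] {x : R} (hx : x ∉ p) :
    IsSMulRegular (R ⧸ p) x :=
  (isSMulRegular_quotient_iff_mem_of_smul_mem p x).2 fun _ h ↦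
    (Ideal.IsPrime.mem_or_mem ‹_› h).resolve_left hx

variable [IsNoetherianRing R] [IsLocalRing R]

theorem extVanishes_of_forall_exists_smul_eq [Module.Finite R N] [Module.Finite R L] {i : ℕ}
    {x : R} (hx : x ∈ maximalIdeal R)
    (h : ∀ e : ModuleExt R N L i, ∃ e' : ModuleExt R N L i, x • e' = e) : ExtVanishes R N L i := by
  have htop : (⊤ : Submodule R (ModuleExt R N L i)) = ⊥ := by
    refine Submodule.eq_bot_of_le_smul_of_le_jacobson_bot (maximalIdeal R) ⊤
      Module.Finite.fg_top (fun e _ ↦ ?_) (IsLocalRing.maximalIdeal_le_jacobson _)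
    obtain ⟨e', rfl⟩ := h e
    exact Submodule.smul_mem_smul hx trivial
  intro e
  exact (Submodule.mem_bot R).1 (htop ▸ Submodule.mem_top)

theorem ExtVanishes.of_quotSMulTop_left [Module.Finite R N] [Module.Finite R L] {i : ℕ}
    {x : R} (hx : x ∈ maximalIdeal R) (hreg : IsSMulRegular N x)
    (h : ExtVanishes R (QuotSMulTop x N) L (i + 1)) : ExtVanishes R N L i := by
  refine extVanishes_of_forall_exists_smul_eq hx fun e ↦ ?_
  obtain ⟨a, ha⟩ := (isShortExact_smul_mkQ hreg).contravariant_exact₁ (add_comm _ _) e (h _)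
  exact ⟨a, by rw [← ha, extPrecomp_smul, extPrecomp_id]⟩

theorem extVanishes_quotient_prime_of_ne_maximalIdeal [Module.Finite R L] {s : ℕ}
    (h : ∀ (N : Type u) [AddCommGroup N] [Module R N] [Module.Finite R N],
      ExtVanishes R N L (s + 1))
    (p : Ideal R) [p.IsPrime] (hp : p ≠ maximalIdeal R) : ExtVanishes R (R ⧸ p) L s := by
  have hlt : p < maximalIdeal R :=
    lt_of_le_of_ne (IsLocalRing.le_maximalIdeal (Ideal.IsPrime.ne_top ‹_›)) hp
  obtain ⟨x, hx, hxp⟩ := SetLike.exists_of_lt hlt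
  exact .of_quotSMulTop_left hx (isSMulRegular_quotient_of_notMem_prime hxp) (h _)

theorem extVanishes_of_extVanishes_succ_of_residueField [Module.Finite R L] {s : ℕ}
    (h : ∀ (N : Type u) [AddCommGroup N] [Module R N] [Module.Finite R N],
      ExtVanishes R N L (s + 1))
    (hk : ExtVanishes R (ResidueField R) L s)
    (N : Type u) [AddCommGroup N] [Module R N] [hN : Module.Finite R N] :
    ExtVanishes R N L s := by
  induction hN using IsNoetherianRing.induction_on_isQuotientEquivQuotientPrime R with
  | subsingleton N => exact extVanishes_of_subsingleton_left _
  | quotient N p e =>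
    refine .of_linearEquiv_left e.symm ?_
    by_cases hp : p.asIdeal = maximalIdeal R
    · rw [hp]; exact hk
    · exact extVanishes_quotient_prime_of_ne_maximalIdeal h _ hp
  | exact N₁ N₂ N₃ f g hf hg hfg h₁ h₃ =>
    exact IsShortExact.contravariant_vanishes₂ ⟨hf, hg, hfg⟩ h₃ h₁

theorem extVanishes_of_maximalIdeal_pow_le_annihilator {s n : ℕ}
    (hk : ExtVanishes R (ResidueField R) L s)
    (V : Type u) [AddCommGroup V] [Module R V] [hV : Module.Finite R V]
    (hann : maximalIdeal R ^ n ≤ Module.annihilator R V) : ExtVanishes R V L s := by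
  revert hann
  induction hV using IsNoetherianRing.induction_on_isQuotientEquivQuotientPrime R with
  | subsingleton V => exact fun _ ↦ extVanishes_of_subsingleton_left _
  | quotient V p e =>
    intro hann
    rw [e.annihilator_eq, Ideal.annihilator_quotient] at hann
    have hp : maximalIdeal R = p.asIdeal :=
      (maximalIdeal.isMaximal R).eq_of_le p.2.ne_top (Ideal.IsPrime.le_of_pow_le hann)
    refine .of_linearEquiv_left e.symm ?_
    rw [← hp]; exact hk
  | exact V₁ V₂ V₃ f g hf hg hfg h₁ h₃ =>
    intro hann
    exact IsShortExact.contravariant_vanishes₂ ⟨hf, hg, hfg⟩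
      (h₃ (hann.trans (g.annihilator_le_of_surjective hg)))
      (h₁ (hann.trans (f.annihilator_le_of_injective hf)))

end LocalExt

section Rees

variable {R : Type u} [CommRing R] {N Q Q' V : Type u} [AddCommGroup N] [Module R N]
  [AddCommGroup Q] [Module R Q] [AddCommGroup Q'] [Module R Q'] [AddCommGroup V] [Module R V]

theorem comp_extClass_bijective_of_smul_eq_zero {r : R} (hr : IsSMulRegular N r)
    (hV : ∀ v : V, r • v = 0) {n : ℕ} (hn : ExtVanishes R V N n) :
    Function.Bijective fun b : ModuleExt R V (QuotSMulTop r N) n ↦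
      b.comp (isShortExact_smul_mkQ hr).extClass rfl := by
  refine ⟨fun b b' hb ↦ ?_, fun a ↦ (isShortExact_smul_mkQ hr).covariant_exact₁ rfl a ?_⟩
  · have hsub : (b - b').comp (isShortExact_smul_mkQ hr).extClass rfl = 0 := by
      rw [sub_eq_add_neg, Abelian.Ext.add_comp, Abelian.Ext.neg_comp, ← sub_eq_add_neg]
      exact sub_eq_zero.2 hb
    obtain ⟨c, hc⟩ := (isShortExact_smul_mkQ hr).covariant_exact₃ rfl _ hsub
    rw [hn c, map_zero] at hc
    exact sub_eq_zero.1 hc.symm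
  · rw [extPostcomp_smul, extPostcomp_id, smul_ext_eq_zero_of_smul_left hV]

theorem extVanishes_zero_of_isSMulRegular {r : R} (hr : IsSMulRegular N r)
    (hV : ∀ v : V, r • v = 0) : ExtVanishes R V N 0 := by
  refine fun a ↦ (isShortExact_smul_mkQ hr).extPostcomp_zero_injective ?_
  rw [extPostcomp_smul, extPostcomp_id, smul_ext_eq_zero_of_smul_left hV]

theorem extVanishes_succ_of_quotSMulTop_right {r : R} (hr : IsSMulRegular N r)
    (hV : ∀ v : V, r • v = 0) {i : ℕ} (h : ExtVanishes R V (QuotSMulTop r N) i) :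
    ExtVanishes R V N (i + 1) := by
  intro a
  obtain ⟨b, rfl⟩ := (isShortExact_smul_mkQ hr).covariant_exact₁ rfl a (by
    rw [extPostcomp_smul, extPostcomp_id, smul_ext_eq_zero_of_smul_left hV])
  rw [h b, Abelian.Ext.zero_comp]

/-- The universal property of the class `e ∈ Ext^n(Q, N)` in Rees' lemma, where `Q = N / (rs) N`
and `rs` is a weakly regular sequence of length `n` on `N`: on modules `V` annihilated by `rs`,
`Ext^i(V, N) = 0` for `i < n`, and `f ↦ f^* e` is a bijection `Hom(V, Q) → Ext^n(V, N)`. -/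
def IsReesClass (rs : List R) {n : ℕ} (e : ModuleExt R Q N n) : Prop :=
  ∀ (V : Type u) [AddCommGroup V] [Module R V], (∀ r ∈ rs, ∀ v : V, r • v = 0) →
    (∀ i < n, ExtVanishes R V N i) ∧ Function.Bijective fun f : V →ₗ[R] Q ↦ extPrecomp f e

theorem IsReesClass.extPrecomp_linearEquiv {rs : List R} {n : ℕ} {e : ModuleExt R Q N n}
    (h : IsReesClass rs e) (q : Q' ≃ₗ[R] Q) :
    IsReesClass rs (extPrecomp (q : Q' →ₗ[R] Q) e) := by
  intro V _ _ hV
  obtain ⟨hvanish, hbij⟩ := h V hV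
  refine ⟨hvanish, ?_⟩
  simpa only [extPrecomp_extPrecomp] using! hbij.comp (LinearEquiv.congrRight q).bijective

theorem isReesClass_nil :
    IsReesClass ([] : List R) (extOfLinearMap (LinearMap.id : N →ₗ[R] N)) := by
  intro V _ _ _
  refine ⟨by simp, ?_⟩
  simpa only [extPrecomp_extOfLinearMap, LinearMap.id_comp] using! extOfLinearMap_bijective

theorem IsReesClass.cons {r : R} (hr : IsSMulRegular N r) {rs : List R} {n : ℕ}
    {e : ModuleExt R Q (QuotSMulTop r N) n} (h : IsReesClass rs e) :
    IsReesClass (r :: rs) (e.comp (isShortExact_smul_mkQ hr).extClass rfl) := by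
  intro V _ _ hV
  obtain ⟨hvanish, hbij⟩ := h V fun s hs ↦ hV s (by simp [hs])
  have hrV : ∀ v : V, r • v = 0 := hV r (by simp)
  have hvanish' : ∀ i < n + 1, ExtVanishes R V N i := by
    rintro (_ | i) hi
    · exact extVanishes_zero_of_isSMulRegular hr hrV
    · exact extVanishes_succ_of_quotSMulTop_right hr hrV (hvanish i (by omega))
  refine ⟨hvanish', ?_⟩
  simpa only [extPrecomp_comp] using!
    (comp_extClass_bijective_of_smul_eq_zero hr hrV (hvanish' n (by omega))).comp hbij

theorem exists_isReesClass (rs : List R) (N : Type u) [AddCommGroup N] [Module R N]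
    (hreg : RingTheory.Sequence.IsWeaklyRegular N rs) :
    ∃ e : ModuleExt R (N ⧸ (Ideal.ofList rs • ⊤ : Submodule R N)) N rs.length,
      IsReesClass rs e := by
  induction rs generalizing N with
  | nil => exact ⟨_, isReesClass_nil.extPrecomp_linearEquiv
      (Submodule.quotEquivOfEqBot _ (by simp))⟩
  | cons r rs ih =>
    rw [RingTheory.Sequence.isWeaklyRegular_cons_iff] at hreg
    obtain ⟨e, he⟩ := ih (QuotSMulTop r N) hreg.2
    exact ⟨_, (he.cons hreg.1).extPrecomp_linearEquiv
      (Submodule.quotOfListConsSMulTopEquivQuotSMulTopInner N r rs)⟩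

end Rees

section Koszul

variable {R : Type u} [CommRing R] {A B C M V W : Type u} [AddCommGroup A] [Module R A]
  [AddCommGroup B] [Module R B] [AddCommGroup C] [Module R C] [AddCommGroup M] [Module R M]
  [AddCommGroup V] [Module R V] [AddCommGroup W] [Module R W]

theorem IsShortExact.eq_zero_of_extPrecomp_eq_zero {f : A →ₗ[R] B} {g : B →ₗ[R] C}
    (h : IsShortExact f g) {n : ℕ} (hA : ∀ i < n, ExtVanishes R A V i) {e : ModuleExt R C V n}
    (he : extPrecomp g e = 0) : e = 0 := by
  cases n with
  | zero => exact h.extPrecomp_zero_injective he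
  | succ n =>
    obtain ⟨a, rfl⟩ := h.contravariant_exact₃ (add_comm _ _) e he
    rw [hA n n.lt_succ_self a, Abelian.Ext.comp_zero]

theorem smul_quotient_eq_zero_of_mem {J : Ideal R} {r : R} (hr : r ∈ J) (v : R ⧸ J) :
    r • v = 0 := by
  rw [Algebra.smul_def, Ideal.Quotient.algebraMap_eq, Ideal.Quotient.eq_zero_iff_mem.2 hr,
    zero_mul]

theorem isWeaklyRegular_concat_iff {xs : List R} {x : R} :
    RingTheory.Sequence.IsWeaklyRegular R (xs ++ [x]) ↔
      RingTheory.Sequence.IsWeaklyRegular R xs ∧ IsSMulRegular (R ⧸ Ideal.ofList xs) x := by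
  rw [RingTheory.Sequence.isWeaklyRegular_append_iff,
    RingTheory.Sequence.isWeaklyRegular_cons_iff]
  simp [isSMulRegular_quotient_iff_mem_of_smul_mem]

/-- The map `w ↦ w_* e` on `W = Hom(R, W)` given by a class `e ∈ Ext^n(V, R)`. -/
def extPushforward {n : ℕ} (e : ModuleExt R V R n) : W →ₗ[R] ModuleExt R V W n where
  toFun w := extPostcomp (LinearMap.toSpanSingleton R W w) e
  map_add' w w' := by rw [LinearMap.toSpanSingleton_add, extPostcomp_add]
  map_smul' r w := by rw [LinearMap.toSpanSingleton_smul, extPostcomp_smul, RingHom.id_apply]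

theorem extPushforward_comp {i j n : ℕ} (h : i + j = n) (a : ModuleExt R V M i)
    (e : ModuleExt R M R j) (w : W) :
    extPushforward (a.comp e h) w = a.comp (extPushforward e w) h :=
  extPostcomp_comp _ h a e

theorem extPrecomp_extPushforward {n : ℕ} (f : M →ₗ[R] V) (e : ModuleExt R V R n) (w : W) :
    extPrecomp f (extPushforward e w) = extPushforward (extPrecomp f e) w :=
  extPrecomp_extPostcomp f _ e

theorem extPushforward_smul {n : ℕ} (r : R) (e : ModuleExt R V R n) (w : W) :
    extPushforward (r • e) w = extPushforward e (r • w) := by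
  rw [map_smul]
  exact map_smul (extPostcomp (LinearMap.toSpanSingleton R W w)) r e

theorem smul_top_le_ker_extPushforward {J : Ideal R} {n : ℕ} (e : ModuleExt R (R ⧸ J) R n) :
    (J • ⊤ : Submodule R W) ≤ LinearMap.ker (extPushforward (W := W) e) := by
  refine Submodule.smul_le.2 fun r hr w _ ↦ ?_
  rw [LinearMap.mem_ker, map_smul]
  exact smul_ext_eq_zero_of_smul_left (smul_quotient_eq_zero_of_mem hr) _

/-- The universal property of the class `e ∈ Ext^n(R/J, R)` of the Koszul complex on a regular
sequence of length `n` generating `J`: for every module `W`, `Ext^i(R/J, W) = 0` for `i > n`, and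
`w ↦ w_* e` induces an isomorphism `W / J W ≅ Ext^n(R/J, W)`. -/
structure IsKoszulClass (J : Ideal R) {n : ℕ} (e : ModuleExt R (R ⧸ J) R n) : Prop where
  extVanishes (W : Type u) [AddCommGroup W] [Module R W] (i : ℕ) (hi : n < i) :
    ExtVanishes R (R ⧸ J) W i
  surjective (W : Type u) [AddCommGroup W] [Module R W] :
    Function.Surjective (extPushforward (W := W) e)
  ker_le (W : Type u) [AddCommGroup W] [Module R W] :
    LinearMap.ker (extPushforward (W := W) e) ≤ J • ⊤

theorem isKoszulClass_bot :
    IsKoszulClass (⊥ : Ideal R) (extOfLinearMap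
      (Submodule.quotEquivOfEqBot (⊥ : Ideal R) rfl : (R ⧸ (⊥ : Ideal R)) →ₗ[R] R)) where
  extVanishes W _ _ i hi := by
    have : Module.Projective R (R ⧸ (⊥ : Ideal R)) :=
      .of_equiv (Submodule.quotEquivOfEqBot (⊥ : Ideal R) rfl).symm
    obtain ⟨i, rfl⟩ := Nat.exists_eq_succ_of_ne_zero hi.ne'
    exact extVanishes_succ_of_projective i
  surjective W _ _ c := by
    obtain ⟨f, rfl⟩ := extOfLinearMap_bijective.2 c
    refine ⟨f 1, (extPostcomp_extOfLinearMap _ _).trans (congrArg extOfLinearMap ?_)⟩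
    ext
    exact one_smul R (f 1)
  ker_le W _ _ w hw := by
    have hzero := extOfLinearMap_eq_zero_iff.1 ((extPostcomp_extOfLinearMap _ _).symm.trans hw)
    have hw0 : w = 0 := (one_smul R w).symm.trans (DFunLike.congr_fun hzero 1)
    exact hw0 ▸ Submodule.zero_mem _

theorem isShortExact_smul_factor {J : Ideal R} {y : R} (hy : IsSMulRegular (R ⧸ J) y) :
    IsShortExact (y • (LinearMap.id : (R ⧸ J) →ₗ[R] (R ⧸ J)))
      (Submodule.factor (le_sup_left : J ≤ J ⊔ Ideal.span {y})) := by
  refine ⟨fun _ _ h ↦ hy h, Submodule.factor_surjective _, fun a ↦ ?_⟩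
  obtain ⟨a, rfl⟩ := Submodule.mkQ_surjective _ a
  have hker : Submodule.factor (le_sup_left : J ≤ J ⊔ Ideal.span {y}) (J.mkQ a) = 0 ↔
      a ∈ J ⊔ Ideal.span {y} := Submodule.Quotient.mk_eq_zero _
  rw [hker]
  simp only [Submodule.mem_sup, Ideal.mem_span_singleton', Set.mem_range,
    LinearMap.smul_apply, LinearMap.id_apply, Submodule.mkQ_apply]
  constructor
  · rintro ⟨u, hu, _, ⟨c, rfl⟩, rfl⟩
    refine ⟨Submodule.Quotient.mk c, ?_⟩
    rw [← Submodule.Quotient.mk_smul, Submodule.Quotient.eq, smul_eq_mul,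
      show y * c - (u + c * y) = -u by ring]
    exact J.neg_mem hu
  · rintro ⟨c, hc⟩
    obtain ⟨c, rfl⟩ := Submodule.mkQ_surjective _ c
    rw [Submodule.mkQ_apply, ← Submodule.Quotient.mk_smul, eq_comm, Submodule.Quotient.eq] at hc
    exact ⟨_, hc, _, ⟨c, rfl⟩, by rw [smul_eq_mul]; ring⟩

theorem IsKoszulClass.snoc {J : Ideal R} {n : ℕ} {e : ModuleExt R (R ⧸ J) R n}
    (h : IsKoszulClass J e) {y : R} (hy : IsSMulRegular (R ⧸ J) y) :
    IsKoszulClass (J ⊔ Ideal.span {y})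
      ((isShortExact_smul_factor hy).extClass.comp e (add_comm 1 n)) where
  extVanishes W _ _ i hi := by
    obtain ⟨i, rfl⟩ := Nat.exists_eq_succ_of_ne_zero (Nat.ne_zero_of_lt hi)
    exact (isShortExact_smul_factor hy).contravariant_vanishes₃
      (h.extVanishes W _ (by omega)) (h.extVanishes W _ (by omega))
  surjective W _ _ c := by
    obtain ⟨a, rfl⟩ := (isShortExact_smul_factor hy).contravariant_exact₃ (add_comm 1 n) c
      (h.extVanishes W _ (by omega) _)
    obtain ⟨w, rfl⟩ := h.surjective W a
    exact ⟨w, extPushforward_comp _ _ _ _⟩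
  ker_le W _ _ w hw := by
    rw [LinearMap.mem_ker, extPushforward_comp] at hw
    obtain ⟨a, ha⟩ := (isShortExact_smul_factor hy).contravariant_exact₁ (add_comm 1 n) _ hw
    obtain ⟨w', rfl⟩ := h.surjective W a
    rw [extPrecomp_smul, extPrecomp_id, ← map_smul] at ha
    have hdiff : w - y • w' ∈ (J • ⊤ : Submodule R W) :=
      h.ker_le W (by rw [LinearMap.mem_ker, map_sub, ha, sub_self])
    rw [← sub_add_cancel w (y • w')]
    exact Submodule.add_mem _ (Submodule.smul_mono_left le_sup_left hdiff)
      (Submodule.smul_mem_smul (Ideal.mem_sup_right (Ideal.mem_span_singleton_self y)) trivial)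

/-- `Ext^n(R/J, R)` and `Ext^n(R/K, R)` with `K ≤ J` have Koszul classes `e` and `e'` such that the
projection `R/K → R/J` pulls `e` back to `X • e'`. Under the isomorphisms `Ext^n(R/J, W) ≅ W / J W`
the map induced by the projection is then multiplication by `X`. -/
def HasKoszulTransition (J K : Ideal R) (n : ℕ) (X : R) : Prop :=
  ∃ (hle : K ≤ J) (e : ModuleExt R (R ⧸ J) R n) (e' : ModuleExt R (R ⧸ K) R n),
    IsKoszulClass J e ∧ IsKoszulClass K e' ∧ extPrecomp (Submodule.factor hle) e = X • e'

theorem hasKoszulTransition_bot : HasKoszulTransition (⊥ : Ideal R) ⊥ 0 1 := by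
  refine ⟨le_rfl, _, _, isKoszulClass_bot, isKoszulClass_bot, ?_⟩
  rw [one_smul, extPrecomp_extOfLinearMap]
  congr 1
  ext
  rfl

theorem HasKoszulTransition.snoc {J K : Ideal R} {n : ℕ} {X : R} (h : HasKoszulTransition J K n X)
    {x y : R} (hy : IsSMulRegular (R ⧸ J) y) (hxy : IsSMulRegular (R ⧸ K) (x * y)) :
    HasKoszulTransition (J ⊔ Ideal.span {y}) (K ⊔ Ideal.span {x * y}) (n + 1) (X * x) := by
  obtain ⟨hle, e, e', he, he', hpull⟩ := h
  have hle' : K ⊔ Ideal.span {x * y} ≤ J ⊔ Ideal.span {y} :=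
    sup_le_sup hle (Ideal.span_singleton_le_span_singleton.2 (dvd_mul_left y x))
  refine ⟨hle', _, _, he.snoc hy, he'.snoc hxy, ?_⟩
  have hnat := (isShortExact_smul_factor hxy).extClass_naturality (isShortExact_smul_factor hy)
    (a := x • Submodule.factor hle) (b := Submodule.factor hle) (c := Submodule.factor hle')
    (by ext; simp [smul_smul, mul_comm]) (by ext; rfl)
  rw [extPrecomp_comp, ← hnat, ← comp_extPrecomp, extPrecomp_smul, hpull, smul_smul, mul_comm x X]
  exact Abelian.Ext.comp_smul _ _ _ _

/-- The ideal `(x₁^n, …, x_d^n)` for a list `xs = [x₁, …, x_d]`. -/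
abbrev ofListPow (xs : List R) (n : ℕ) : Ideal R :=
  Ideal.ofList (xs.map (· ^ n))

theorem hasKoszulTransition_ofListPow (n : ℕ) (xs : List R)
    (hn : RingTheory.Sequence.IsWeaklyRegular R (xs.map (· ^ n)))
    (hn' : RingTheory.Sequence.IsWeaklyRegular R (xs.map (· ^ (n + 1)))) :
    HasKoszulTransition (ofListPow xs n) (ofListPow xs (n + 1)) xs.length xs.prod := by
  induction xs using List.reverseRecOn with
  | nil => simpa [ofListPow] using hasKoszulTransition_bot (R := R)
  | append_singleton xs x ih =>
    simp only [List.map_append, List.map_cons, List.map_nil, isWeaklyRegular_concat_iff] at hn hn'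
    have hsnoc := (ih hn.1 hn'.1).snoc (x := x) hn.2 (by rw [← pow_succ']; exact hn'.2)
    rw [← pow_succ'] at hsnoc
    simpa [ofListPow, Ideal.ofList_append] using hsnoc

theorem mem_of_smul_mem_of_hasKoszulTransition [IsNoetherianRing R] [IsLocalRing R]
    {J K : Ideal R} {n : ℕ} {X : R} (h : HasKoszulTransition J K n X)
    {t : ℕ} (ht : maximalIdeal R ^ t ≤ K)
    (hM : ∀ i < n, ExtVanishes R (ResidueField R) M i) {m : M}
    (hm : X • m ∈ (K • ⊤ : Submodule R M)) : m ∈ (J • ⊤ : Submodule R M) := by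
  obtain ⟨hle, e, e', he, -, hpull⟩ := h
  have hpull_zero : extPrecomp (Submodule.factor hle) (extPushforward e m) = 0 := by
    rw [extPrecomp_extPushforward, hpull, extPushforward_smul]
    exact smul_top_le_ker_extPushforward e' hm
  have hker : ∀ i < n, ExtVanishes R (LinearMap.ker (Submodule.factor hle)) M i := by
    refine fun i hi ↦ extVanishes_of_maximalIdeal_pow_le_annihilator (hM i hi) _ (ht.trans ?_)
    have := (LinearMap.ker (Submodule.factor hle)).subtype.annihilator_le_of_injective
      Subtype.val_injective
    rwa [Ideal.annihilator_quotient] at this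
  exact he.ker_le M ((isShortExact_subtype_ker _ (Submodule.factor_surjective hle))
    |>.eq_zero_of_extPrecomp_eq_zero hker hpull_zero)

end Koszul

section Gorenstein

variable {R : Type u} [CommRing R]

theorem smul_quotient_eq_zero_of_ofList_le {J : Ideal R} {xs : List R} (h : Ideal.ofList xs ≤ J) :
    ∀ r ∈ xs, ∀ v : R ⧸ J, r • v = 0 :=
  fun _ hr ↦ smul_quotient_eq_zero_of_mem (h (Ideal.subset_span hr))

theorem exists_isReesClass_self {xs : List R} (hreg : RingTheory.Sequence.IsWeaklyRegular R xs) :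
    ∃ e : ModuleExt R (R ⧸ Ideal.ofList xs) R xs.length, IsReesClass xs e := by
  obtain ⟨e, he⟩ := exists_isReesClass xs R hreg
  exact ⟨_, he.extPrecomp_linearEquiv (Submodule.quotEquivOfEq (Ideal.ofList xs)
    (Ideal.ofList xs • ⊤ : Submodule R R) (by simp))⟩

theorem IsReesClass.extVanishes_iff {N Q V : Type u} [AddCommGroup N] [Module R N]
    [AddCommGroup Q] [Module R Q] [AddCommGroup V] [Module R V] {rs : List R} {n : ℕ}
    {e : ModuleExt R Q N n} (h : IsReesClass rs e) (hV : ∀ r ∈ rs, ∀ v : V, r • v = 0) :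
    ExtVanishes R V N n ↔ ∀ f : V →ₗ[R] Q, f = 0 := by
  obtain ⟨-, hinj, hsurj⟩ := h V hV
  refine ⟨fun hz f ↦ hinj ((hz _).trans (hz _).symm), fun hf c ↦ ?_⟩
  obtain ⟨f, rfl⟩ := hsurj c
  simp only [hf f, extPrecomp_zero]

theorem extVanishes_quotient_ofList {W : Type u} [AddCommGroup W] [Module R W] (rs : List R)
    {n : ℕ} (N : Type u) [AddCommGroup N] [Module R N]
    (hreg : RingTheory.Sequence.IsWeaklyRegular N rs) (hN : ∀ i > n, ExtVanishes R N W i) :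
    ∀ i > n + rs.length,
      ExtVanishes R (N ⧸ (Ideal.ofList rs • ⊤ : Submodule R N)) W i := by
  induction rs generalizing n N with
  | nil =>
    exact fun i hi ↦ (hN i hi).of_linearEquiv_left (Submodule.quotEquivOfEqBot _ (by simp)).symm
  | cons r rs ih =>
    intro i hi
    rw [RingTheory.Sequence.isWeaklyRegular_cons_iff] at hreg
    have hquot : ∀ j > n + 1, ExtVanishes R (QuotSMulTop r N) W j := by
      intro j hj
      obtain ⟨j, rfl⟩ := Nat.exists_eq_succ_of_ne_zero (Nat.ne_zero_of_lt hj)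
      exact (isShortExact_smul_mkQ hreg.1).contravariant_vanishes₃
        (hN _ (by omega)) (hN _ (by omega))
    rw [List.length_cons] at hi
    exact (ih _ hreg.2 hquot i (by omega)).of_linearEquiv_left
      (Submodule.quotOfListConsSMulTopEquivQuotSMulTopInner N r rs).symm

theorem extVanishes_quotient_ofList_self {W : Type u} [AddCommGroup W] [Module R W] {xs : List R}
    (hreg : RingTheory.Sequence.IsWeaklyRegular R xs) {i : ℕ} (hi : xs.length < i) :
    ExtVanishes R (R ⧸ Ideal.ofList xs) W i := by
  have hproj : ∀ j > 0, ExtVanishes R R W j := by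
    intro j hj
    obtain ⟨j, rfl⟩ := Nat.exists_eq_succ_of_ne_zero hj.ne'
    exact extVanishes_succ_of_projective j
  exact (extVanishes_quotient_ofList xs R hreg hproj i (by omega)).of_linearEquiv_left
    (Submodule.quotEquivOfEq _ _ (by simp))

theorem not_extVanishes_self_zero [Nontrivial R] : ¬ ExtVanishes R R R 0 := fun h ↦
  one_ne_zero (DFunLike.congr_fun
    (extOfLinearMap_eq_zero_iff.1 (h (extOfLinearMap (LinearMap.id : R →ₗ[R] R)))) (1 : R))

theorem exists_linearMap_quotient_ne_zero_of_mem_associatedPrimes [IsNoetherianRing R] {M : Type u}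
    [AddCommGroup M] [Module R M] {q : Ideal R} (hq : q ∈ associatedPrimes R M) :
    ∃ f : (R ⧸ q) →ₗ[R] M, f ≠ 0 := by
  rw [AssociatedPrimes.mem_iff, isAssociatedPrime_iff_exists_injective_linearMap] at hq
  obtain ⟨hprime, f, hf⟩ := hq
  refine ⟨f, fun hzero ↦ hprime.ne_top ?_⟩
  exact Ideal.Quotient.subsingleton_iff.1 ⟨fun a b ↦ hf (by rw [hzero]; rfl)⟩

/-- `R` has finite injective dimension as a module over itself, tested on finitely generated
modules. -/
def HasFiniteSelfInjDim (R : Type u) [CommRing R] : Prop :=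
  ∃ s : ℕ, ∀ i ≥ s, ∀ (N : Type u) [AddCommGroup N] [Module R N] [Module.Finite R N],
    ExtVanishes R N R i

variable [IsLocalRing R]

/-- `xs` is a maximal regular sequence in a Gorenstein local ring `R`; its length is both the
dimension and the self-injective dimension of `R`, and it generates an `m`-primary ideal. -/
structure IsGorensteinSystem (xs : List R) : Prop where
  mem_maximalIdeal : ∀ x ∈ xs, x ∈ maximalIdeal R
  isRegular : RingTheory.Sequence.IsRegular R xs
  eq_maximalIdeal : ∀ p : Ideal R, p.IsPrime → Ideal.ofList xs ≤ p → p = maximalIdeal R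
  extVanishes_of_length_lt : ∀ i > xs.length, ∀ (N : Type u) [AddCommGroup N] [Module R N]
    [Module.Finite R N], ExtVanishes R N R i
  extVanishes_residueField : ∀ i < xs.length, ExtVanishes R (ResidueField R) R i

theorem IsGorensteinSystem.ofList_le {xs : List R} (h : IsGorensteinSystem xs) :
    Ideal.ofList xs ≤ maximalIdeal R :=
  Ideal.span_le.2 h.mem_maximalIdeal

theorem IsGorensteinSystem.krullDimLE_quotient {xs : List R}
    (h : IsGorensteinSystem xs) : Ring.KrullDimLE 0 (R ⧸ Ideal.ofList xs) := by
  rw [Ring.krullDimLE_zero_iff]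
  intro I hI
  have hle : Ideal.ofList xs ≤ I.comap (Ideal.Quotient.mk _) :=
    Ideal.mk_ker.ge.trans (Ideal.ker_le_comap _)
  have hmax : (I.comap (Ideal.Quotient.mk (Ideal.ofList xs))).IsMaximal :=
    h.eq_maximalIdeal _ inferInstance hle ▸ inferInstance
  rw [← Ideal.map_comap_of_surjective _ Ideal.Quotient.mk_surjective I] at hI ⊢
  exact (Ideal.map_eq_top_or_isMaximal_of_surjective _ Ideal.Quotient.mk_surjective hmax)
    |>.resolve_left hI.ne_top

theorem length_eq_of_not_extVanishes_residueField {xs : List R}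
    (hxs : ∀ x ∈ xs, x ∈ maximalIdeal R) (hreg : RingTheory.Sequence.IsWeaklyRegular R xs)
    (hlen : ¬ ExtVanishes R (ResidueField R) R xs.length) {s : ℕ}
    (hs : ∀ i > s, ∀ (N : Type u) [AddCommGroup N] [Module R N] [Module.Finite R N],
      ExtVanishes R N R i) (hk : ¬ ExtVanishes R (ResidueField R) R s) : xs.length = s := by
  have hle : xs.length ≤ s := by
    by_contra! hlt
    exact hlen (hs _ hlt _)
  refine hle.eq_of_not_lt fun hlt ↦ hk ?_
  obtain ⟨e, he⟩ := exists_isReesClass_self hreg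
  obtain ⟨f, hf⟩ : ∃ f : ResidueField R →ₗ[R] R ⧸ Ideal.ofList xs, f ≠ 0 := by
    by_contra! hzero
    exact hlen ((he.extVanishes_iff (smul_quotient_eq_zero_of_ofList_le (J := maximalIdeal R)
      (Ideal.span_le.2 hxs))).2 hzero)
  have : IsSimpleModule R (ResidueField R) :=
    isSimpleModule_iff_isCoatom.2 (maximalIdeal.isMaximal R).out
  have hinj : Function.Injective f := f.injective_or_eq_zero.resolve_right hf
  have hses : IsShortExact f (LinearMap.range f).mkQ :=
    ⟨hinj, Submodule.mkQ_surjective _, fun x ↦ by simp⟩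
  exact hses.contravariant_vanishes₁ (extVanishes_quotient_ofList_self hreg hlt)
    (hs _ s.lt_succ_self _)

variable [IsNoetherianRing R]

theorem exists_isRegular_of_extVanishes (M : Type u) [AddCommGroup M] [Module R M]
    [Module.Finite R M] [Nontrivial M] (n : ℕ)
    (h : ∀ i < n, ExtVanishes R (ResidueField R) M i) :
    ∃ rs : List R, rs.length = n ∧ (∀ r ∈ rs, r ∈ maximalIdeal R) ∧
      RingTheory.Sequence.IsRegular M rs := by
  have hlt : maximalIdeal R • (⊤ : Submodule R M) < ⊤ :=
    lt_top_iff_ne_top.2 fun h ↦ top_ne_bot <|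
      Submodule.eq_bot_of_le_smul_of_le_jacobson_bot (maximalIdeal R) (⊤ : Submodule R M)
        Module.Finite.fg_top h.ge (IsLocalRing.maximalIdeal_le_jacobson _)
  have : Module.Finite R (R ⧸ maximalIdeal R) := inferInstance
  refine ModuleCat.exists_isRegular_of_exists_subsingleton_ext (maximalIdeal R) n
    (ModuleCat.of R M) hlt (ModuleCat.of R (R ⧸ maximalIdeal R)) ?_
    fun i hi ↦ extVanishes_iff_subsingleton.1 (h i hi)
  change Module.support R (R ⧸ maximalIdeal R) = _
  rw [Module.support_eq_zeroLocus, Ideal.annihilator_quotient]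

theorem HasFiniteSelfInjDim.exists_not_extVanishes_residueField (h : HasFiniteSelfInjDim R) :
    ∃ s : ℕ, (∀ i > s, ∀ (N : Type u) [AddCommGroup N] [Module R N] [Module.Finite R N],
      ExtVanishes R N R i) ∧ ¬ ExtVanishes R (ResidueField R) R s := by
  classical
  have hspec := Nat.find_spec h
  rcases hfind : Nat.find h with _ | s
  · rw [hfind] at hspec
    exact absurd (hspec 0 le_rfl R) not_extVanishes_self_zero
  rw [hfind] at hspec
  refine ⟨s, hspec, fun hk ↦ Nat.find_min h (m := s) (by omega) fun i hi N _ _ _ ↦ ?_⟩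
  rcases hi.eq_or_lt with rfl | hlt
  · exact extVanishes_of_extVanishes_succ_of_residueField
      (fun N _ _ _ ↦ hspec _ le_rfl N) hk N
  · exact hspec i hlt N

theorem eq_maximalIdeal_of_ofList_le {xs : List R}
    (hreg : RingTheory.Sequence.IsWeaklyRegular R xs)
    (hvanish : ∀ (N : Type u) [AddCommGroup N] [Module R N] [Module.Finite R N],
      ExtVanishes R N R (xs.length + 1))
    (p : Ideal R) (hp : p.IsPrime) (hle : Ideal.ofList xs ≤ p) : p = maximalIdeal R := by
  obtain ⟨q, hq, hqp⟩ := Ideal.exists_minimalPrimes_le hle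
  have := hq.1.1
  suffices hqmax : q = maximalIdeal R from
    ((maximalIdeal.isMaximal R).eq_of_le hp.ne_top (hqmax ▸ hqp)).symm
  by_contra hne
  have hass : q ∈ associatedPrimes R (R ⧸ Ideal.ofList xs) := by
    apply Module.associatedPrimes.minimalPrimes_annihilator_subset_associatedPrimes
    rwa [Ideal.annihilator_quotient]
  obtain ⟨f, hf⟩ := exists_linearMap_quotient_ne_zero_of_mem_associatedPrimes hass
  obtain ⟨e, he⟩ := exists_isReesClass_self hreg
  exact hf ((he.extVanishes_iff (smul_quotient_eq_zero_of_ofList_le hq.1.2)).1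
    (extVanishes_quotient_prime_of_ne_maximalIdeal hvanish q hne) f)

theorem HasFiniteSelfInjDim.exists_isGorensteinSystem (h : HasFiniteSelfInjDim R) :
    ∃ xs : List R, IsGorensteinSystem xs := by
  classical
  obtain ⟨s, hs, hk⟩ := h.exists_not_extVanishes_residueField
  have hdepth : ∃ i, ¬ ExtVanishes R (ResidueField R) R i := ⟨s, hk⟩
  have hlow : ∀ i < Nat.find hdepth, ExtVanishes R (ResidueField R) R i :=
    fun i hi ↦ not_not.1 (Nat.find_min hdepth hi)
  obtain ⟨xs, hlen, hmem, hreg⟩ := exists_isRegular_of_extVanishes R _ hlow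
  have hnot : ¬ ExtVanishes R (ResidueField R) R xs.length := hlen ▸ Nat.find_spec hdepth
  obtain rfl := length_eq_of_not_extVanishes_residueField hmem hreg.1 hnot hs hk
  exact ⟨xs, hmem, hreg,
    eq_maximalIdeal_of_ofList_le hreg.1 fun N _ _ _ ↦ hs _ (Nat.lt_succ_self _) N, hs,
    hlen ▸ hlow⟩

namespace IsGorensteinSystem

variable {xs : List R}

theorem exists_pow_le (h : IsGorensteinSystem xs) :
    ∃ t, maximalIdeal R ^ t ≤ Ideal.ofList xs := by
  have hrad : (Ideal.ofList xs).radical = maximalIdeal R := by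
    rw [Ideal.radical_eq_sInf]
    exact le_antisymm (sInf_le ⟨h.ofList_le, inferInstance⟩)
      (le_sInf fun p hp ↦ (h.eq_maximalIdeal p hp.2 hp.1).ge)
  rw [← hrad]
  exact Ideal.exists_radical_pow_le_of_fg _ (IsNoetherian.noetherian _)

theorem ringKrullDim_eq (h : IsGorensteinSystem xs) : ringKrullDim R = xs.length := by
  have : Nontrivial (R ⧸ Ideal.ofList xs) := Ideal.Quotient.nontrivial_iff.2
    (ne_top_of_le_ne_top (maximalIdeal.isMaximal R).ne_top h.ofList_le)
  have := h.krullDimLE_quotient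
  rw [← ringKrullDim_add_length_eq_ringKrullDim_of_isRegular xs h.isRegular,
    ringKrullDimZero_iff_ringKrullDim_eq_zero.1 this, zero_add]

end IsGorensteinSystem

end Gorenstein

section RegularSequencePowers

open RingTheory.Sequence

variable {R : Type u} [CommRing R]

theorem IsShortExact.quotSMulTopMap {A B C : Type u} [AddCommGroup A] [Module R A]
    [AddCommGroup B] [Module R B] [AddCommGroup C] [Module R C] {f : A →ₗ[R] B} {g : B →ₗ[R] C}
    (h : IsShortExact f g) {r : R} (hr : IsSMulRegular C r) :
    IsShortExact (QuotSMulTop.map r f) (QuotSMulTop.map r g) := by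
  refine ⟨?_, QuotSMulTop.map_surjective r h.surjective,
    QuotSMulTop.map_exact r h.exact h.surjective⟩
  have hexact := QuotSMulTop.map_first_exact_on_four_term_exact_of_isSMulRegular_last
    (f₁ := (0 : PUnit.{u + 1} →ₗ[R] A)) ((f.exact_zero_iff_injective _).2 h.injective) h.exact hr
  rw [map_zero] at hexact
  exact (LinearMap.exact_zero_iff_injective _ _).1 hexact

theorem isWeaklyRegular_of_isShortExact {rs : List R} {A B C : Type u} [AddCommGroup A]
    [Module R A] [AddCommGroup B] [Module R B] [AddCommGroup C] [Module R C] {f : A →ₗ[R] B}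
    {g : B →ₗ[R] C} (h : IsShortExact f g) (hA : IsWeaklyRegular A rs)
    (hC : IsWeaklyRegular C rs) : IsWeaklyRegular B rs := by
  induction rs generalizing A B C with
  | nil => exact IsWeaklyRegular.nil _ _
  | cons r rs ih =>
    rw [isWeaklyRegular_cons_iff] at hA hC ⊢
    exact ⟨isSMulRegular_of_range_eq_ker h.injective h.exact.linearMap_ker_eq.symm hA.1 hC.1,
      ih (h.quotSMulTopMap hC.1) hA.2 hC.2⟩

theorem isWeaklyRegular_of_subsingleton (rs : List R) (A : Type u) [AddCommGroup A] [Module R A]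
    [Subsingleton A] : IsWeaklyRegular A rs := by
  induction rs generalizing A with
  | nil => exact IsWeaklyRegular.nil _ _
  | cons r rs ih =>
    have : Subsingleton (QuotSMulTop r A) := (Submodule.mkQ_surjective _).subsingleton
    exact .cons (Function.injective_of_subsingleton _) (ih _)

section

variable {N : Type u} [AddCommGroup N] [Module R N]

/-- The map `N / x^n N → N / x^(n+1) N` induced by multiplication by `x`. -/
def quotSMulTopPowMul (x : R) (n : ℕ) : QuotSMulTop (x ^ n) N →ₗ[R] QuotSMulTop (x ^ (n + 1)) N :=
  Submodule.mapQ _ _ (x • LinearMap.id) (by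
    rintro _ ⟨z, -, rfl⟩
    exact ⟨z, trivial, by simp [smul_smul, pow_succ, mul_comm]⟩)

theorem pow_succ_smul_top_le (x : R) (n : ℕ) : x ^ (n + 1) • (⊤ : Submodule R N) ≤ x • ⊤ := by
  rintro _ ⟨z, -, rfl⟩
  exact ⟨x ^ n • z, trivial, by simp [smul_smul, pow_succ, mul_comm]⟩

/-- The projection `N / x^(n+1) N → N / x N`. -/
def quotSMulTopPowProj (x : R) (n : ℕ) : QuotSMulTop (x ^ (n + 1)) N →ₗ[R] QuotSMulTop x N :=
  Submodule.factor (pow_succ_smul_top_le x n)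

theorem isShortExact_quotSMulTopPow {x : R} (hx : IsSMulRegular N x) (n : ℕ) :
    IsShortExact (quotSMulTopPowMul (N := N) x n) (quotSMulTopPowProj x n) where
  injective := by
    rw [injective_iff_map_eq_zero]
    intro a ha
    obtain ⟨a, rfl⟩ := Submodule.Quotient.mk_surjective _ a
    obtain ⟨b, -, hb⟩ := (Submodule.Quotient.mk_eq_zero _).1 ha
    refine (Submodule.Quotient.mk_eq_zero _).2 ⟨b, trivial, hx ?_⟩
    simpa [smul_smul, pow_succ'] using hb
  surjective := Submodule.factor_surjective (pow_succ_smul_top_le x n)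
  exact y := by
    obtain ⟨y, rfl⟩ := Submodule.Quotient.mk_surjective _ y
    constructor
    · intro hy
      obtain ⟨b, -, rfl⟩ := (Submodule.Quotient.mk_eq_zero _).1 hy
      exact ⟨Submodule.Quotient.mk b, rfl⟩
    · rintro ⟨z, hz⟩
      obtain ⟨z, rfl⟩ := Submodule.Quotient.mk_surjective _ z
      obtain ⟨w, -, hw⟩ := (Submodule.Quotient.eq _).1 hz
      refine (Submodule.Quotient.mk_eq_zero _).2 ⟨z - x ^ n • w, trivial, ?_⟩
      have hw : x ^ (n + 1) • w = x • z - y := hw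
      change x • (z - x ^ n • w) = y
      rw [smul_sub, smul_smul, ← pow_succ', hw, sub_sub_cancel]

theorem isWeaklyRegular_quotSMulTop_pow {x : R} (hx : IsSMulRegular N x) {xs : List R}
    (h : IsWeaklyRegular (QuotSMulTop x N) xs) (n : ℕ) :
    IsWeaklyRegular (QuotSMulTop (x ^ n) N) xs := by
  induction n with
  | zero =>
    have : Subsingleton (QuotSMulTop (x ^ 0) N) := by
      rw [QuotSMulTop, Submodule.Quotient.subsingleton_iff, pow_zero, one_smul]
    exact isWeaklyRegular_of_subsingleton _ _
  | succ n ih => exact isWeaklyRegular_of_isShortExact (isShortExact_quotSMulTopPow hx n) ih h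

theorem isWeaklyRegular_map_pow {xs : List R} (h : IsWeaklyRegular N xs) (n : ℕ) :
    IsWeaklyRegular N (xs.map (· ^ n)) := by
  induction xs generalizing N with
  | nil => exact h
  | cons x xs ih =>
    rw [isWeaklyRegular_cons_iff] at h
    exact .cons (h.1.pow n) (ih (isWeaklyRegular_quotSMulTop_pow h.1 h.2 n))

end

theorem ofList_le_iff {xs : List R} {I : Ideal R} : Ideal.ofList xs ≤ I ↔ ∀ x ∈ xs, x ∈ I :=
  Ideal.span_le

theorem pow_mem_ofListPow {xs : List R} {x : R} (hx : x ∈ xs) (n : ℕ) :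
    x ^ n ∈ ofListPow xs n :=
  Ideal.subset_span (List.mem_map.2 ⟨x, hx, rfl⟩)

theorem ofListPow_le_pow {xs : List R} {I : Ideal R} (h : ∀ x ∈ xs, x ∈ I) (n : ℕ) :
    ofListPow xs n ≤ I ^ n :=
  ofList_le_iff.2 (List.forall_mem_map.2 fun x hx ↦ Ideal.pow_mem_pow (h x hx) n)

theorem exists_pow_le_ofListPow [IsNoetherianRing R] {xs : List R} {I : Ideal R}
    (h : ∃ t, I ^ t ≤ Ideal.ofList xs) (n : ℕ) : ∃ t, I ^ t ≤ ofListPow xs n := by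
  obtain ⟨t, ht⟩ := h
  have hxs : Ideal.ofList xs ≤ (ofListPow xs n).radical :=
    ofList_le_iff.2 fun x hx ↦ ⟨n, pow_mem_ofListPow hx n⟩
  have hI : I ≤ (ofListPow xs n).radical := fun y hy ↦ by
    rw [← Ideal.radical_idem]
    exact ⟨t, hxs (ht (Ideal.pow_mem_pow hy t))⟩
  exact Ideal.exists_pow_le_of_le_radical_of_fg hI (IsNoetherian.noetherian _)

theorem ofListPow_succ_le (xs : List R) (n : ℕ) :
    ofListPow xs (n + 1) ≤ ofListPow xs n :=
  ofList_le_iff.2 (List.forall_mem_map.2 fun x hx ↦ by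
    rw [pow_succ]
    exact Ideal.mul_mem_right _ _ (pow_mem_ofListPow hx n))

theorem prod_mul_mem_ofListPow_succ (xs : List R) (n : ℕ) {y : R}
    (hy : y ∈ ofListPow xs n) :
    xs.prod * y ∈ ofListPow xs (n + 1) := by
  suffices hle : ofListPow xs n ≤
      Submodule.comap (LinearMap.mulLeft R xs.prod) (ofListPow xs (n + 1)) from hle hy
  refine ofList_le_iff.2 (List.forall_mem_map.2 fun x hx ↦ ?_)
  obtain ⟨c, hc⟩ := List.dvd_prod hx
  rw [Submodule.mem_comap, LinearMap.mulLeft_apply, hc,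
    show x * c * x ^ n = c * x ^ (n + 1) by ring]
  exact Ideal.mul_mem_left _ _ (pow_mem_ofListPow hx (n + 1))

end RegularSequencePowers

section SelfInjective

variable {R : Type u} [CommRing R]

theorem injective_quotient_ofList {ys : List R}
    (hreg : RingTheory.Sequence.IsWeaklyRegular R ys)
    (hvanish : ∀ (N : Type u) [AddCommGroup N] [Module R N] [Module.Finite R N],
      ExtVanishes R N R (ys.length + 1)) :
    Module.Injective (R ⧸ Ideal.ofList ys) (R ⧸ Ideal.ofList ys) := by
  refine Module.Baer.injective fun I g ↦ ?_
  obtain ⟨e, he⟩ := exists_isReesClass_self hreg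
  have hkill := smul_quotient_eq_zero_of_ofList_le (le_refl (Ideal.ofList ys))
  let f : I.restrictScalars R →ₗ[R] R ⧸ Ideal.ofList ys := g.restrictScalars R
  obtain ⟨a, ha⟩ := (isShortExact_subtype_mkQ (I.restrictScalars R)).contravariant_exact₁
    (add_comm _ _) (extPrecomp f e) (hvanish _ _)
  obtain ⟨b, rfl⟩ := (he (R ⧸ Ideal.ofList ys) hkill).2.2 a
  rw [extPrecomp_extPrecomp] at ha
  have hbf := (he (I.restrictScalars R) fun r hr v ↦ Subtype.ext (hkill r hr v)).2.1 ha
  exact ⟨b.extendScalarsOfSurjective Ideal.Quotient.mk_surjective,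
    fun x hx ↦ DFunLike.congr_fun hbf ⟨x, hx⟩⟩

theorem exists_linearMap_extension_of_injective {J : Ideal R}
    (hJ : Module.Injective (R ⧸ J) (R ⧸ J)) {A B : Type u} [AddCommGroup A] [Module R A]
    [AddCommGroup B] [Module R B] (hB : Module.IsTorsionBySet R B J) {i : A →ₗ[R] B}
    (hi : Function.Injective i) (f : A →ₗ[R] R ⧸ J) : ∃ g : B →ₗ[R] R ⧸ J, ∀ a, g (i a) = f a := by
  have hA : Module.IsTorsionBySet R A J := fun a r ↦ hi (by
    rw [map_smul, map_zero]
    exact @hB (i a) r)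
  let := hA.module
  let := hB.module
  obtain ⟨g, hg⟩ := hJ.out (i.extendScalarsOfSurjective Ideal.Quotient.mk_surjective) hi
    (f.extendScalarsOfSurjective Ideal.Quotient.mk_surjective)
  exact ⟨g.restrictScalars R, hg⟩

variable [IsLocalRing R]

theorem exists_notMem_forall_mul_mem {J : Ideal R} (hJ : J ≠ ⊤)
    (ht : ∃ t, maximalIdeal R ^ t ≤ J) : ∃ s ∉ J, ∀ x ∈ maximalIdeal R, x * s ∈ J := by
  classical
  have hspec := Nat.find_spec ht
  rcases hfind : Nat.find ht with _ | t
  · rw [hfind, pow_zero, Ideal.one_eq_top] at hspec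
    exact absurd (top_le_iff.1 hspec) hJ
  · rw [hfind] at hspec
    obtain ⟨s, hs, hsJ⟩ := SetLike.not_le_iff_exists.1 (Nat.find_min ht (m := t) (by omega))
    exact ⟨s, hsJ, fun x hx ↦ hspec (pow_succ' (maximalIdeal R) t ▸ Ideal.mul_mem_mul hx hs)⟩

theorem exists_linearMap_ne_zero_of_isTorsionBySet {J : Ideal R} (hJ : J ≠ ⊤)
    (ht : ∃ t, maximalIdeal R ^ t ≤ J) (hinj : Module.Injective (R ⧸ J) (R ⧸ J))
    {Q : Type u} [AddCommGroup Q] [Module R Q] (hQ : Module.IsTorsionBySet R Q J) {z : Q}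
    (hz : z ≠ 0) : ∃ g : Q →ₗ[R] R ⧸ J, g z ≠ 0 := by
  obtain ⟨s, hs, hms⟩ := exists_notMem_forall_mul_mem hJ ht
  have hker : LinearMap.ker (LinearMap.toSpanSingleton R Q z) ≤
      LinearMap.ker (LinearMap.toSpanSingleton R (R ⧸ J) (Ideal.Quotient.mk J s)) := fun x hx ↦
    Ideal.Quotient.eq_zero_iff_mem.2 <| hms x <| (mem_maximalIdeal x).2 fun hunit ↦
      hz (hunit.smul_eq_zero.1 hx)
  obtain ⟨g, hg⟩ := exists_linearMap_extension_of_injective hinj hQ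
    (LinearMap.ker_eq_bot.1 (Submodule.ker_liftQ_eq_bot _ _ le_rfl le_rfl))
    (Submodule.liftQ _ _ hker)
  have hgz := hg (Submodule.Quotient.mk 1)
  rw [Submodule.liftQ_apply, Submodule.liftQ_apply, LinearMap.toSpanSingleton_apply_one,
    LinearMap.toSpanSingleton_apply_one] at hgz
  exact ⟨g, fun h ↦ hs (Ideal.Quotient.eq_zero_iff_mem.1 (hgz.symm.trans h))⟩

theorem exists_linearMap_ne_zero_of_notMem_smul_top {J : Ideal R} (hJ : J ≠ ⊤)
    (ht : ∃ t, maximalIdeal R ^ t ≤ J) (hinj : Module.Injective (R ⧸ J) (R ⧸ J))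
    {M : Type u} [AddCommGroup M] [Module R M] {z : M} (hz : z ∉ (J • ⊤ : Submodule R M)) :
    ∃ φ : M →ₗ[R] R ⧸ J, φ z ≠ 0 := by
  obtain ⟨g, hg⟩ := exists_linearMap_ne_zero_of_isTorsionBySet hJ ht hinj
    (Module.isTorsionBySet_quotient_ideal_smul M J) (mt (Submodule.Quotient.mk_eq_zero _).1 hz)
  exact ⟨g ∘ₗ Submodule.mkQ _, hg⟩

end SelfInjective

section LiftingToCompletion

variable {R : Type u} [CommRing R]

theorem exists_linearMap_adicCompletion {M : Type u} [AddCommGroup M] [Module R M] {I : Ideal R}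
    {J : ℕ → Ideal R} (hJ : Antitone J) (hJI : ∀ k, J k ≤ (I ^ k • ⊤ : Submodule R R))
    (F : ∀ k, M →ₗ[R] R ⧸ J k)
    (hF : ∀ k l (hkl : k ≤ l) m, Submodule.factor (hJ hkl) (F l m) = F k m) :
    ∃ φ : M →ₗ[R] AdicCompletion I R, ∀ m k, (φ m).val k = Submodule.factor (hJI k) (F k m) := by
  refine ⟨AdicCompletion.lift I (fun k ↦ Submodule.factor (hJI k) ∘ₗ F k) fun hkl ↦ ?_,
    fun m k ↦ AdicCompletion.eval_lift_apply ..⟩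
  ext m
  rw [LinearMap.comp_apply, LinearMap.comp_apply, LinearMap.comp_apply, ← hF _ _ hkl]
  exact (Submodule.factor_comp_apply ..).trans (Submodule.factor_comp_apply ..).symm

theorem ofListPow_antitone (xs : List R) : Antitone (ofListPow xs) :=
  antitone_nat_of_succ_le (ofListPow_succ_le xs)

theorem prod_smul_mem_ofListPow_smul_top {M : Type u} [AddCommGroup M] [Module R M]
    (xs : List R) (n : ℕ) :
    (ofListPow xs n • ⊤ : Submodule R M) ≤
      Submodule.comap (xs.prod • LinearMap.id) (ofListPow xs (n + 1) • ⊤ : Submodule R M) := by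
  refine Submodule.smul_le.2 fun r hr m _ ↦ ?_
  rw [Submodule.mem_comap, LinearMap.smul_apply, LinearMap.id_apply, smul_smul]
  exact Submodule.smul_mem_smul (prod_mul_mem_ofListPow_succ xs n hr) trivial

theorem smul_top_le_ker {M : Type u} [AddCommGroup M] [Module R M] {J : Ideal R}
    (φ : M →ₗ[R] R ⧸ J) : (J • ⊤ : Submodule R M) ≤ LinearMap.ker φ :=
  Submodule.smul_le.2 fun r hr m _ ↦ by
    rw [LinearMap.mem_ker, map_smul, smul_quotient_eq_zero_of_mem hr]

namespace IsGorensteinSystem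

variable [IsLocalRing R] {xs : List R}

theorem injective_quotient_ofListPow (h : IsGorensteinSystem xs) (n : ℕ) :
    Module.Injective (R ⧸ ofListPow xs n) (R ⧸ ofListPow xs n) := by
  refine injective_quotient_ofList (isWeaklyRegular_map_pow h.isRegular.1 n) fun N _ _ _ ↦ ?_
  rw [List.length_map]
  exact h.extVanishes_of_length_lt _ (Nat.lt_succ_self _) N

variable [IsNoetherianRing R] {M : Type u} [AddCommGroup M] [Module R M]

theorem mem_of_prod_smul_mem (h : IsGorensteinSystem xs)
    (hM : ∀ i < xs.length, ExtVanishes R (ResidueField R) M i) {n : ℕ} {m : M}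
    (hm : xs.prod • m ∈ (ofListPow xs (n + 1) • ⊤ : Submodule R M)) :
    m ∈ (ofListPow xs n • ⊤ : Submodule R M) := by
  obtain ⟨t, ht⟩ := exists_pow_le_ofListPow h.exists_pow_le (n + 1)
  exact mem_of_smul_mem_of_hasKoszulTransition (hasKoszulTransition_ofListPow n xs
    (isWeaklyRegular_map_pow h.isRegular.1 n) (isWeaklyRegular_map_pow h.isRegular.1 (n + 1)))
    ht hM hm

theorem mem_of_prod_mul_mem (h : IsGorensteinSystem xs) {n : ℕ} {r : R}
    (hr : xs.prod * r ∈ ofListPow xs (n + 1)) : r ∈ ofListPow xs n := by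
  have := h.mem_of_prod_smul_mem (M := R) h.extVanishes_residueField (n := n) (m := r)
  simp only [smul_eq_mul, Ideal.mul_top] at this
  exact this hr

theorem exists_linearMap_lift_succ (h : IsGorensteinSystem xs)
    (hM : ∀ i < xs.length, ExtVanishes R (ResidueField R) M i) {n : ℕ}
    (φ : M →ₗ[R] R ⧸ ofListPow xs n) : ∃ φ' : M →ₗ[R] R ⧸ ofListPow xs (n + 1),
      ∀ m, Submodule.factor (ofListPow_succ_le xs n) (φ' m) = φ m := by
  let mulM := Submodule.mapQ _ _ _ (prod_smul_mem_ofListPow_smul_top (M := M) xs n)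
  have hmulM : Function.Injective mulM := by
    refine (injective_iff_map_eq_zero _).2 fun a ha ↦ ?_
    obtain ⟨a, rfl⟩ := Submodule.Quotient.mk_surjective _ a
    exact (Submodule.Quotient.mk_eq_zero _).2
      (h.mem_of_prod_smul_mem hM ((Submodule.Quotient.mk_eq_zero _).1 ha))
  let mulR : (R ⧸ ofListPow xs n) →ₗ[R] R ⧸ ofListPow xs (n + 1) :=
    Submodule.mapQ _ _ (LinearMap.mulLeft R xs.prod) fun _ ↦ prod_mul_mem_ofListPow_succ xs n
  have hmulR : Function.Injective mulR := by
    refine (injective_iff_map_eq_zero _).2 fun a ha ↦ ?_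
    obtain ⟨a, rfl⟩ := Submodule.Quotient.mk_surjective _ a
    exact (Submodule.Quotient.mk_eq_zero _).2
      (h.mem_of_prod_mul_mem ((Submodule.Quotient.mk_eq_zero _).1 ha))
  have hfactor : ∀ y, mulR (Submodule.factor (ofListPow_succ_le xs n) y) = xs.prod • y := by
    intro y
    obtain ⟨y, rfl⟩ := Submodule.Quotient.mk_surjective _ y
    rfl
  obtain ⟨g, hg⟩ := exists_linearMap_extension_of_injective (h.injective_quotient_ofListPow (n + 1))
    (Module.isTorsionBySet_quotient_ideal_smul M _) hmulM
    (mulR ∘ₗ Submodule.liftQ _ φ (smul_top_le_ker φ))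
  refine ⟨g ∘ₗ Submodule.mkQ _, fun m ↦ hmulR ?_⟩
  rw [hfactor, ← map_smul]
  exact hg (Submodule.Quotient.mk m)

theorem exists_compatible_linearMaps (h : IsGorensteinSystem xs)
    (hM : ∀ i < xs.length, ExtVanishes R (ResidueField R) M i) {n : ℕ}
    (φ : M →ₗ[R] R ⧸ ofListPow xs n) : ∃ F : ∀ k, M →ₗ[R] R ⧸ ofListPow xs (n + k), F 0 = φ ∧
      ∀ k l (hkl : k ≤ l) m,
        Submodule.factor (ofListPow_antitone xs (Nat.add_le_add_left hkl n)) (F l m) = F k m := by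
  choose lift hlift using fun k ↦ h.exists_linearMap_lift_succ hM (n := k)
  refine ⟨fun k ↦ Nat.rec φ (fun k ψ ↦ lift (n + k) ψ) k, rfl, fun k l hkl m ↦ ?_⟩
  induction l, hkl using Nat.le_induction with
  | base => exact DFunLike.congr_fun (Submodule.mapQ_id _) _
  | succ l hkl ih =>
    rw [← ih, ← hlift (n + l) _ m]
    exact (Submodule.factor_comp_apply _ _ _).symm

theorem exists_linearMap_adicCompletion_val_ne_zero (h : IsGorensteinSystem xs)
    (hM : ∀ i < xs.length, ExtVanishes R (ResidueField R) M i) {n : ℕ} (hn : n ≠ 0) {z : M}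
    (hz : z ∉ (ofListPow xs n • ⊤ : Submodule R M)) {N : ℕ}
    (hN : maximalIdeal R ^ N ≤ ofListPow xs n) :
    ∃ φ : M →ₗ[R] AdicCompletion (maximalIdeal R) R, (φ z).val N ≠ 0 := by
  have hle : ∀ k, ofListPow xs k ≤ maximalIdeal R ^ k := ofListPow_le_pow h.mem_maximalIdeal
  have hne : ofListPow xs n ≠ ⊤ := ne_top_of_le_ne_top (maximalIdeal.isMaximal R).ne_top
    ((hle n).trans (Ideal.pow_le_self hn))
  obtain ⟨φ₀, hφ₀⟩ := exists_linearMap_ne_zero_of_notMem_smul_top hne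
    (exists_pow_le_ofListPow h.exists_pow_le n) (h.injective_quotient_ofListPow n) hz
  obtain ⟨F, rfl, hF⟩ := h.exists_compatible_linearMaps hM φ₀
  have hle' : ∀ k, ofListPow xs (n + k) ≤ (maximalIdeal R ^ k • ⊤ : Submodule R R) := fun k ↦ by
    rw [smul_eq_mul, Ideal.mul_top]
    exact (hle _).trans (Ideal.pow_le_pow_right (Nat.le_add_left k n))
  obtain ⟨φ, hφ⟩ := exists_linearMap_adicCompletion
    (fun _ _ hkl ↦ ofListPow_antitone xs (Nat.add_le_add_left hkl n)) hle' F hF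
  refine ⟨φ, fun hzero ↦ hφ₀ ?_⟩
  have hN' : (maximalIdeal R ^ N • ⊤ : Submodule R R) ≤ ofListPow xs (n + 0) := by
    rwa [smul_eq_mul, Ideal.mul_top]
  rw [← hF 0 N N.zero_le z, ← Submodule.factor_comp_apply (hle' N) hN', ← hφ z N, hzero, map_zero]

end IsGorensteinSystem

end LiftingToCompletion

section IntegralSeparation

variable {A : Type*} [CommRing A]

theorem eq_of_le_of_ne_bot_of_height_le_one [IsDomain A] {p q : Ideal A} [p.IsPrime] [q.IsPrime]
    (hpq : p ≤ q) (hp : p ≠ ⊥) (hq : q.height ≤ 1) : p = q := by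
  by_contra hne
  have hlt : p.height + 1 ≤ q.height :=
    Ideal.height_add_one_le_of_lt_of_isPrime (lt_of_le_of_ne hpq hne)
  have hone : 1 ≤ p.height := Order.one_le_iff_ne_zero.2 (mt Ideal.height_eq_zero_iff_eq_bot.1 hp)
  exact absurd ((add_le_add_left hone 1).trans (hlt.trans hq)) (by norm_num)

theorem map_maximalIdeal_le_jacobson_bot [IsLocalRing A] (D : Type*) [CommRing D] [Algebra A D]
    [Algebra.IsIntegral A D] :
    (maximalIdeal A).map (algebraMap A D) ≤ (⊥ : Ideal D).jacobson := by
  refine le_sInf fun Q ⟨_, hQ⟩ ↦ Ideal.map_le_iff_le_comap.2 ?_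
  rw [eq_maximalIdeal (Ideal.isMaximal_comap_of_isIntegral_of_isMaximal (R := A) Q)]

variable [IsNoetherianRing A]

theorem exists_isPrime_maximal_notMem [IsReduced A] {z : A} (hz : z ≠ 0) :
    ∃ P : Ideal A, P.IsPrime ∧ z ∉ P ∧ ∀ Q : Ideal A, Q.IsPrime → P < Q → z ∈ Q := by
  have hne : {P : Ideal A | P.IsPrime ∧ z ∉ P}.Nonempty := by
    by_contra hempty
    refine hz (IsNilpotent.eq_zero (mem_nilradical.1 ?_))
    rw [nilradical_eq_sInf, Submodule.mem_sInf]
    exact fun p hp ↦ not_not.1 fun hzp ↦ hempty ⟨p, hp, hzp⟩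
  obtain ⟨P, ⟨hP, hzP⟩, hmax⟩ :=
    set_has_maximal_iff_noetherian.2 (inferInstanceAs (IsNoetherian A A)) _ hne
  exact ⟨P, hP, hzP, fun Q hQ hPQ ↦ not_not.1 fun hzQ ↦ hmax Q ⟨hQ, hzQ⟩ hPQ⟩

variable [IsLocalRing A]

theorem exists_mem_minimalPrimes_span_singleton [IsDomain A] {z : A} (hz : z ≠ 0)
    (hzm : z ∈ maximalIdeal A) (h : ∀ Q : Ideal A, Q.IsPrime → Q ≠ ⊥ → z ∈ Q) {y : A}
    (hy : y ∈ maximalIdeal A) : ∃ q ∈ (Ideal.span {z}).minimalPrimes, y ∈ q := by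
  rcases eq_or_ne y 0 with rfl | hy0
  · obtain ⟨q, hq, -⟩ :=
      Ideal.exists_minimalPrimes_le ((Ideal.span_singleton_le_iff_mem (maximalIdeal A)).2 hzm)
    exact ⟨q, hq, q.zero_mem⟩
  obtain ⟨Q, hQ, -⟩ :=
    Ideal.exists_minimalPrimes_le ((Ideal.span_singleton_le_iff_mem (maximalIdeal A)).2 hy)
  have hQprime : Q.IsPrime := hQ.1.1
  have hyQ : y ∈ Q := hQ.1.2 (Ideal.mem_span_singleton_self y)
  have hzQ : z ∈ Q := h Q hQprime (Submodule.ne_bot_iff _ |>.2 ⟨y, hyQ, hy0⟩)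
  obtain ⟨q, hq, hqQ⟩ := Ideal.exists_minimalPrimes_le ((Ideal.span_singleton_le_iff_mem Q).2 hzQ)
  have hqprime : q.IsPrime := hq.1.1
  have hq0 : q ≠ ⊥ :=
    Submodule.ne_bot_iff _ |>.2 ⟨z, hq.1.2 (Ideal.mem_span_singleton_self z), hz⟩
  have hqQ : q = Q := eq_of_le_of_ne_bot_of_height_le_one hqQ hq0
    (Ideal.height_le_one_of_isPrincipal_of_mem_minimalPrimes _ Q hQ)
  exact ⟨q, hq, hqQ ▸ hyQ⟩

theorem exists_maximalIdeal_pow_le_span_singleton [IsDomain A] {z : A} (hz : z ≠ 0)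
    (h : ∀ Q : Ideal A, Q.IsPrime → Q ≠ ⊥ → z ∈ Q) :
    ∃ N, maximalIdeal A ^ N ≤ Ideal.span {z} := by
  by_cases hzm : z ∈ maximalIdeal A
  swap
  · refine ⟨0, le_top.trans_eq (Ideal.span_singleton_eq_top.2 ?_).symm⟩
    simpa using hzm
  have hcover : (maximalIdeal A : Set A) ⊆ ⋃ q ∈ (Ideal.span {z}).minimalPrimes, (q : Set A) :=
    fun y hy ↦ by simpa using exists_mem_minimalPrimes_span_singleton hz hzm h hy
  rw [Ideal.subset_union_prime_finite
    (Ideal.finite_minimalPrimes_of_isNoetherianRing A _) ⊥ ⊥ fun q hq _ _ ↦ hq.1.1] at hcover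
  obtain ⟨q, hq, hmq⟩ := hcover
  refine Ideal.exists_pow_le_of_le_radical_of_fg ?_ (IsNoetherian.noetherian _)
  rw [Ideal.radical_eq_sInf]
  rintro x hx
  refine Submodule.mem_sInf.2 fun Q ⟨hzQ, hQ⟩ ↦
    hq.2 ⟨hQ, hzQ⟩ ((le_maximalIdeal hQ.ne_top).trans hmq) (hmq hx)

theorem algebraMap_eq_zero_of_forall_mem_map_maximalIdeal_pow {D : Type*} [CommRing D]
    [Algebra A D] [Algebra.IsIntegral A D] {z : A} {N : ℕ}
    (hN : maximalIdeal A ^ N ≤ RingHom.ker (algebraMap A D) ⊔ Ideal.span {z})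
    (hz : ∀ n, algebraMap A D z ∈ (maximalIdeal A).map (algebraMap A D) ^ n) :
    algebraMap A D z = 0 := by
  set I := (maximalIdeal A).map (algebraMap A D)
  have hle : I ^ N ≤ I * I ^ N := calc
    I ^ N = (maximalIdeal A ^ N).map (algebraMap A D) := (Ideal.map_pow _ _ _).symm
    _ ≤ (RingHom.ker (algebraMap A D) ⊔ Ideal.span {z}).map (algebraMap A D) := Ideal.map_mono hN
    _ ≤ I ^ (N + 1) := by
      rw [Ideal.map_le_iff_le_comap]
      refine sup_le (fun x hx ↦ ?_) ((Ideal.span_singleton_le_iff_mem _).2 (hz (N + 1)))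
      rw [Ideal.mem_comap, (RingHom.mem_ker).1 hx]
      exact zero_mem _
    _ = I * I ^ N := pow_succ' _ _
  have hfg : (I ^ N).FG := (Ideal.FG.map (IsNoetherian.noetherian _) _).pow
  have hbot := Submodule.eq_bot_of_le_smul_of_le_jacobson_bot I (I ^ N) hfg hle
    (map_maximalIdeal_le_jacobson_bot D)
  exact (Submodule.mem_bot _).1 (hbot ▸ hz N)

theorem exists_maximalIdeal_pow_le_sup_span_singleton {z : A} {P : Ideal A} [P.IsPrime]
    (hzP : z ∉ P) (hmax : ∀ Q : Ideal A, Q.IsPrime → P < Q → z ∈ Q) :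
    ∃ N, maximalIdeal A ^ N ≤ P ⊔ Ideal.span {z} := by
  let π := Ideal.Quotient.mk P
  have hπ : Function.Surjective π := Ideal.Quotient.mk_surjective
  have : IsLocalRing (A ⧸ P) := .of_surjective' π hπ
  obtain ⟨N, hN⟩ : ∃ N, maximalIdeal (A ⧸ P) ^ N ≤ Ideal.span {π z} := by
    refine exists_maximalIdeal_pow_le_span_singleton
      (mt Ideal.Quotient.eq_zero_iff_mem.1 hzP) fun Q hQ hQ0 ↦
        hmax (Q.comap π) (Q.comap_isPrime π) ?_
    have hlt := (Ideal.orderEmbeddingOfSurjective π hπ).lt_iff_lt.2 (bot_lt_iff_ne_bot.2 hQ0)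
    have hbot : (⊥ : Ideal (A ⧸ P)).comap π = P := Ideal.mk_ker
    exact hbot.symm.trans_lt hlt
  refine ⟨N, ?_⟩
  rw [← map_maximalIdeal_of_surjective π hπ, ← Ideal.map_pow, ← Set.image_singleton,
    ← Ideal.map_span, Ideal.map_le_iff_le_comap, Ideal.comap_map_of_surjective π hπ,
    ← RingHom.ker_eq_comap_bot, Ideal.mk_ker, sup_comm] at hN
  exact hN

theorem eq_zero_of_forall_algebraMap_mem_map_maximalIdeal_pow [IsReduced A] {B : Type*}
    [CommRing B] [Algebra A B] [Algebra.IsIntegral A B]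
    (hinj : Function.Injective (algebraMap A B)) {z : A}
    (hz : ∀ n, algebraMap A B z ∈ (maximalIdeal A).map (algebraMap A B) ^ n) : z = 0 := by
  by_contra hz0
  obtain ⟨P, hP, hzP, hmax⟩ := exists_isPrime_maximal_notMem hz0
  obtain ⟨N, hN⟩ := exists_maximalIdeal_pow_le_sup_span_singleton hzP hmax
  obtain ⟨Q, -, _, hQP⟩ := Ideal.exists_ideal_over_prime_of_isIntegral P (⊥ : Ideal B) (by
    rw [← RingHom.ker_eq_comap_bot, (RingHom.injective_iff_ker_eq_bot _).1 hinj]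
    exact bot_le)
  have hker : RingHom.ker (algebraMap A (B ⧸ Q)) = P := by
    rw [IsScalarTower.algebraMap_eq A B (B ⧸ Q), ← RingHom.comap_ker, Ideal.Quotient.algebraMap_eq,
      Ideal.mk_ker, hQP]
  refine hzP (hker ▸ RingHom.mem_ker.2
    (algebraMap_eq_zero_of_forall_mem_map_maximalIdeal_pow (N := N) (by rwa [hker]) fun n ↦ ?_))
  have hmem := Ideal.mem_map_of_mem (algebraMap B (B ⧸ Q)) (hz n)
  rwa [Ideal.map_pow, Ideal.map_map, ← IsScalarTower.algebraMap_eq,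
    ← IsScalarTower.algebraMap_apply] at hmem

end IntegralSeparation

section NoetherianCompletion

theorem exists_ringHom_adicCompletion_comp_algebraMap_eq {A S : Type*} [CommRing A] [CommRing S]
    {I : Ideal A} {J : Ideal S} [IsAdicComplete J S] {ρ : A →+* S} (hρ : I.map ρ ≤ J) :
    ∃ F : AdicCompletion I A →+* S, F.comp (algebraMap A (AdicCompletion I A)) = ρ := by
  have hpow : ∀ k, I ^ k ≤ (J ^ k).comap ρ := fun k ↦ by
    rw [← Ideal.map_le_iff_le_comap, Ideal.map_pow]
    exact Ideal.pow_right_mono hρ k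
  let f : ∀ k, AdicCompletion I A →+* S ⧸ J ^ k := fun k ↦
    (Ideal.quotientMap (J ^ k) ρ (hpow k)).comp (AdicCompletion.evalₐ I k).toRingHom
  have hf_mk : ∀ k s, f k (AdicCompletion.mk I A s) = Ideal.Quotient.mk (J ^ k) (ρ (s k)) :=
    fun k s ↦ congrArg (Ideal.quotientMap (J ^ k) ρ (hpow k)) (AdicCompletion.evalₐ_mk I k s)
  have hf : ∀ {k l : ℕ} (hkl : k ≤ l), (Ideal.Quotient.factorPow J hkl).comp (f l) = f k := by
    intro k l hkl
    ext x
    induction x using AdicCompletion.induction_on with | _ s =>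
    rw [RingHom.comp_apply, hf_mk, hf_mk, Ideal.Quotient.factor_mk, eq_comm,
      Ideal.Quotient.mk_eq_mk_iff_sub_mem, ← map_sub]
    have hs := SModEq.sub_mem.1 (s.2 hkl)
    rw [smul_eq_mul, Ideal.mul_top] at hs
    exact hpow k hs
  refine ⟨IsAdicComplete.liftRingHom J f hf, DFunLike.coe_injective ?_⟩
  refine IsHausdorff.funext' J fun k a ↦ (IsAdicComplete.mk_liftRingHom J f hf k _).trans ?_
  exact congrArg (Ideal.quotientMap (J ^ k) ρ (hpow k)) (AdicCompletion.evalₐ_of I k a)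

theorem isNoetherianRing_adicCompletion_idealOfVars (σ R : Type*) [Finite σ] [CommRing R]
    [IsNoetherianRing R] :
    IsNoetherianRing
      (AdicCompletion (MvPolynomial.idealOfVars σ R) (MvPolynomial σ R)) :=
  isNoetherianRing_of_ringEquiv _ (MvPowerSeries.toAdicCompletionAlgEquiv σ R).toRingEquiv

-- `S` is a quotient of a power series ring over `R`, one variable for each generator of `J`.
theorem isNoetherianRing_of_isAdicComplete {R S : Type*} [CommRing R] [IsNoetherianRing R]
    [CommRing S] [Algebra R S] {J : Ideal S} [IsAdicComplete J S] (hJ : J.FG)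
    (hsurj : Function.Surjective ((Ideal.Quotient.mk J).comp (algebraMap R S))) :
    IsNoetherianRing S := by
  obtain ⟨n, a, ha⟩ := Submodule.fg_iff_exists_fin_generating_family.1 hJ
  let ρ : MvPolynomial (Fin n) R →+* S := MvPolynomial.eval₂Hom (algebraMap R S) a
  let I := MvPolynomial.idealOfVars (Fin n) R
  have hI : I.map ρ = J := by
    have hX : ρ ∘ MvPolynomial.X = a := funext fun i ↦ MvPolynomial.eval₂_X _ _ _
    exact (Ideal.map_span _ _).trans (by rw [← Set.range_comp, hX]; exact ha)
  obtain ⟨F, hF⟩ := exists_ringHom_adicCompletion_comp_algebraMap_eq hI.le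
  let A := AdicCompletion I (MvPolynomial (Fin n) R)
  have hmap : (I.map (algebraMap _ A)).map F = J := by rw [Ideal.map_map, hF, hI]
  have : IsAdicComplete (I.map (algebraMap _ A)) A :=
    AdicCompletion.isAdicComplete_self I (IsNoetherian.noetherian _)
  have : IsHausdorff ((I.map (algebraMap _ A)).map F) S := by rw [hmap]; infer_instance
  have := isNoetherianRing_adicCompletion_idealOfVars (Fin n) R
  suffices h :
      Function.Surjective ((Ideal.Quotient.mk ((I.map (algebraMap _ A)).map F)).comp F) from
    isNoetherianRing_of_surjective _ _ F (surjective_of_mk_map_comp_surjective F h)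
  rw [hmap]
  intro y
  obtain ⟨r, rfl⟩ := hsurj y
  refine ⟨algebraMap (MvPolynomial (Fin n) R) A (MvPolynomial.C r),
    congrArg (Ideal.Quotient.mk J) ?_⟩
  exact (DFunLike.congr_fun hF _).trans (MvPolynomial.eval₂_C _ _ _)

variable {R : Type*} [CommRing R] [IsNoetherianRing R]

theorem mem_map_pow_iff_val_eq_zero {I : Ideal R} {x : AdicCompletion I R} {N : ℕ} :
    x ∈ I.map (algebraMap R (AdicCompletion I R)) ^ N ↔ x.val N = 0 := by
  change _ ↔ x ∈ LinearMap.ker (AdicCompletion.eval I R N)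
  rw [← Ideal.map_pow, ← AdicCompletion.pow_smul_top_eq_ker_eval (IsNoetherian.noetherian I),
    Ideal.smul_top_eq_map, Submodule.restrictScalars_mem]

theorem exists_sub_algebraMap_mem_map_pow {I : Ideal R} (x : AdicCompletion I R) (N : ℕ) :
    ∃ r : R, x - algebraMap R _ r ∈ I.map (algebraMap R (AdicCompletion I R)) ^ N := by
  obtain ⟨r, hr⟩ := Submodule.Quotient.mk_surjective _ (x.val N)
  exact ⟨r, mem_map_pow_iff_val_eq_zero.2 (sub_eq_zero.2 hr.symm)⟩

instance isNoetherianRing_adicCompletion (I : Ideal R) : IsNoetherianRing (AdicCompletion I R) := by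
  have hI : I.FG := IsNoetherian.noetherian I
  have := AdicCompletion.isAdicComplete_self I hI
  refine isNoetherianRing_of_isAdicComplete (R := R) (hI.map (algebraMap R (AdicCompletion I R)))
    fun y ↦ ?_
  obtain ⟨x, rfl⟩ := Ideal.Quotient.mk_surjective y
  obtain ⟨r, hr⟩ := exists_sub_algebraMap_mem_map_pow x 1
  rw [pow_one, ← Ideal.Quotient.mk_eq_mk_iff_sub_mem] at hr
  exact ⟨r, hr.symm⟩

end NoetherianCompletion

section FractionRing

open scoped nonZeroDivisors

variable {R S K L : Type*} [CommRing R] [CommRing S] [Algebra R S] [CommRing K] [Algebra R K]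
  [CommRing L] [Algebra S L] [Algebra R L] [IsScalarTower R S L]

theorem nonempty_algHom_of_flat [IsFractionRing R K] [IsFractionRing S L] [Module.Flat R S] :
    Nonempty (K →ₐ[R] L) := by
  have hunit : ∀ y : R⁰, IsUnit (Algebra.ofId R L y) := fun y ↦ by
    have hreg : IsSMulRegular S (y : R) := Module.Flat.isSMulRegular_of_isRegular
      (isRegular_iff_mem_nonZeroDivisors.2 y.2)
    have hy : algebraMap R S y ∈ S⁰ := by
      refine mem_nonZeroDivisors_iff.2 ⟨fun z hz ↦ hreg ?_, fun z hz ↦ hreg ?_⟩ <;>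
        simp only [Algebra.smul_def, mul_zero]
      · exact hz
      · rwa [mul_comm]
    rw [Algebra.ofId_apply, IsScalarTower.algebraMap_apply R S L]
    exact IsLocalization.map_units L ⟨_, hy⟩
  exact ⟨IsLocalization.liftAlgHom hunit⟩

theorem mem_of_apply_mem_span_image [IsFractionRing R K] [IsFractionRing S L]
    [Module.FaithfullyFlat R S] (ι : K →ₐ[R] L) {N : Submodule R K} {m : K}
    (hm : ι m ∈ Submodule.span S (ι '' N)) : m ∈ N := by
  classical
  obtain ⟨T', hT', hmT⟩ := Submodule.mem_span_finite_of_mem_span hm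
  obtain ⟨T, hTN, rfl⟩ := Finset.subset_set_image_iff.1 hT'
  obtain ⟨b, hb⟩ := IsLocalization.exist_integer_multiples_of_finset R⁰ (insert m T)
  choose! c hc using hb
  have hι : ∀ t ∈ insert m T, algebraMap S L (algebraMap R S (c t)) = (b : R) • ι t := fun t ht ↦ by
    rw [← IsScalarTower.algebraMap_apply, ← ι.commutes, hc t ht, map_smul]
  let I : Ideal R := Submodule.comap (Algebra.linearMap R K) ((b : R) • N)
  have hspan : Submodule.span S (ι '' T) ≤
      (Submodule.map (Algebra.linearMap S L) (I.map (algebraMap R S))).comap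
        (LinearMap.lsmul S L (algebraMap R S b)) := by
    refine Submodule.span_le.2 ?_
    rintro _ ⟨t, ht, rfl⟩
    have htI : c t ∈ I := by
      change algebraMap R K (c t) ∈ (b : R) • N
      rw [hc t (Finset.mem_insert_of_mem ht)]
      exact Submodule.smul_mem_pointwise_smul _ _ _ (hTN ht)
    refine ⟨_, Ideal.mem_map_of_mem _ htI, ?_⟩
    exact (hι t (Finset.mem_insert_of_mem ht)).trans (algebraMap_smul S (b : R) (ι t)).symm
  rw [Finset.coe_image] at hmT
  obtain ⟨s, hs, hsm⟩ := hspan hmT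
  have hcs : s = algebraMap R S (c m) := IsFractionRing.injective S L <| by
    rw [hι m (Finset.mem_insert_self _ _), ← algebraMap_smul S (b : R) (ι m)]
    exact hsm
  have hcm : c m ∈ I := by
    rw [← Ideal.comap_map_eq_self_of_faithfullyFlat (B := S) I, Ideal.mem_comap, ← hcs]
    exact hs
  obtain ⟨n, hn, hnm⟩ := (Submodule.mem_smul_pointwise_iff_exists _ _ _).1 hcm
  have hbn : (b : R) • n = (b : R) • m := hnm.trans (hc m (Finset.mem_insert_self _ _))
  rw [Algebra.smul_def, Algebra.smul_def] at hbn
  rwa [← (IsLocalization.map_units K b).mul_left_cancel hbn]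

theorem fg_of_forall_mul_mem_range [IsFractionRing R K] [IsFractionRing S L]
    [Module.FaithfullyFlat R S] [IsNoetherianRing S] (ι : K →ₐ[R] L) {M : Submodule R K} {w : S}
    (hw : w ∈ S⁰)
    (hM : ∀ m ∈ M, algebraMap S L w * ι m ∈ LinearMap.range (Algebra.linearMap S L)) : M.FG := by
  classical
  have hinj : Function.Injective (LinearMap.mulLeft S (algebraMap S L w)) := fun _ _ h ↦
    (IsLocalization.map_units L ⟨w, hw⟩).mul_left_cancel h
  have hle : (Submodule.span S (ι '' M)).map (LinearMap.mulLeft S (algebraMap S L w)) ≤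
      LinearMap.range (Algebra.linearMap S L) :=
    Submodule.map_le_iff_le_comap.2 <| Submodule.span_le.2 <| Set.forall_mem_image.2 hM
  have hfg : (Submodule.span S (ι '' M)).FG :=
    Submodule.fg_of_fg_map_injective _ hinj (isNoetherian_submodule.1 inferInstance _ hle)
  obtain ⟨T', hT', hspan⟩ := (Submodule.fg_span_iff_fg_span_finset_subset _).1 hfg
  obtain ⟨T, hTM, rfl⟩ := Finset.subset_set_image_iff.1 hT'
  refine ⟨T, le_antisymm (Submodule.span_le.2 hTM) fun m hm ↦ ?_⟩
  refine mem_of_apply_mem_span_image (S := S) ι ?_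
  refine Submodule.span_mono (Set.image_mono Submodule.subset_span) ?_
  rw [← Finset.coe_image, ← hspan]
  exact Submodule.subset_span ⟨m, hm, rfl⟩

theorem algebraMap_apply_eq_mul_of_subalgebra [IsFractionRing R K] (ι : K →ₐ[R] L)
    {B : Subalgebra R K} (φ : B →ₗ[R] S) (m : B) :
    algebraMap S L (φ m) = algebraMap S L (φ 1) * ι m := by
  obtain ⟨b, a, hba⟩ := IsLocalization.exists_integer_multiple' R⁰ (m : K)
  have hbm : (b : R) • m = a • (1 : B) := Subtype.ext <| by
    change (b : R) • (m : K) = a • (1 : K)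
    rw [Algebra.smul_def, Algebra.smul_def, mul_one, mul_comm, hba]
  have hφ : (b : R) • φ m = a • φ 1 := by rw [← map_smul, hbm, map_smul]
  have hunit : IsUnit (algebraMap R L b) := by
    rw [← ι.commutes]
    exact (IsLocalization.map_units K b).map ι
  refine hunit.mul_left_cancel ?_
  calc algebraMap R L b * algebraMap S L (φ m)
      = algebraMap S L ((b : R) • φ m) := by
        rw [Algebra.smul_def, map_mul, IsScalarTower.algebraMap_apply R S L]
    _ = algebraMap R L a * algebraMap S L (φ 1) := by
        rw [hφ, Algebra.smul_def, map_mul, IsScalarTower.algebraMap_apply R S L]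
    _ = algebraMap R L b * (algebraMap S L (φ 1) * ι m) := by
        rw [← ι.commutes, ← ι.commutes, hba, map_mul]
        ring

theorem exists_mem_nonZeroDivisors_of_forall_mul_ne_zero [IsNoetherianRing S] {C : Ideal S}
    (hC : ∀ z : S, z ≠ 0 → ∃ w ∈ C, z * w ≠ 0) : ∃ w ∈ C, w ∈ S⁰ := by
  by_contra! hdisj
  obtain ⟨z, hz, hz0⟩ := SetLike.exists_of_lt
    (Ideal.bot_lt_annihilator_of_disjoint_nonZeroDivisors (Set.disjoint_left.2 hdisj))
  obtain ⟨w, hw, hzw⟩ := hC z hz0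
  exact hzw (congrArg Subtype.val (Module.mem_annihilator.1 hz ⟨w, hw⟩))

theorem finite_subalgebra_of_forall_exists_linearMap [IsFractionRing R K] [IsFractionRing S L]
    [Module.FaithfullyFlat R S] [IsNoetherianRing S] (ι : K →ₐ[R] L) {B : Subalgebra R K}
    (hB : ∀ z : S, z ≠ 0 → ∃ φ : B →ₗ[R] S, z * φ 1 ≠ 0) : Module.Finite R B := by
  obtain ⟨_, ⟨φ, rfl⟩, hφ⟩ := exists_mem_nonZeroDivisors_of_forall_mul_ne_zero
    (C := LinearMap.range (LinearMap.applyₗ' S (1 : B) : (B →ₗ[R] S) →ₗ[S] S)) fun z hz ↦ by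
      obtain ⟨φ, hφ⟩ := hB z hz
      exact ⟨φ 1, ⟨φ, rfl⟩, hφ⟩
  refine Module.Finite.iff_fg.2 (fg_of_forall_mul_mem_range (M := Subalgebra.toSubmodule B) ι hφ
    fun m hm ↦ ⟨φ ⟨m, hm⟩, ?_⟩)
  exact algebraMap_apply_eq_mul_of_subalgebra ι φ ⟨m, hm⟩

theorem nonempty_algHom_integralClosure (ι : K →ₐ[R] L) :
    Nonempty (integralClosure R K →ₐ[R] integralClosure S L) :=
  ⟨AlgHom.codRestrict (ι.comp (integralClosure R K).val)
    ((integralClosure S L).restrictScalars R) fun m ↦ (m.2.map ι).tower_top⟩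

theorem algebraMap_mem_map_of_smul_one_mem {C B : Type*} [CommRing C] [Algebra R C] [CommRing B]
    [Algebra R B] (ψ : C →ₐ[R] B) {J : Ideal R} {r : R}
    (hr : r • (1 : C) ∈ (J • ⊤ : Submodule R C)) :
    algebraMap R B r ∈ J.map (algebraMap R B) := by
  rw [Ideal.smul_top_eq_map, Submodule.restrictScalars_mem, ← Algebra.algebraMap_eq_smul_one] at hr
  have := Ideal.mem_map_of_mem (ψ : C →+* B) hr
  rwa [Ideal.map_map, AlgHom.comp_algebraMap, AlgHom.coe_toRingHom, AlgHom.commutes] at this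

end FractionRing

section FiniteIntegralClosure

variable {R : Type u} [CommRing R] [IsNoetherianRing R] [IsLocalRing R]

theorem exists_smul_one_notMem_of_sub_algebraMap_mem
    [IsReduced (AdicCompletion (maximalIdeal R) R)] {z : AdicCompletion (maximalIdeal R) R}
    (hz : z ≠ 0) : ∃ n ≠ 0, ∀ r : R,
      z - algebraMap R _ r ∈
        (maximalIdeal R).map (algebraMap R (AdicCompletion (maximalIdeal R) R)) ^ n →
      r • (1 : integralClosure R (FractionRing R)) ∉
        (maximalIdeal R ^ n • ⊤ : Submodule R (integralClosure R (FractionRing R))) := by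
  let S := AdicCompletion (maximalIdeal R) R
  let B := integralClosure S (FractionRing S)
  obtain ⟨ι⟩ : Nonempty (FractionRing R →ₐ[R] FractionRing S) := nonempty_algHom_of_flat (S := S)
  obtain ⟨ψ⟩ : Nonempty (integralClosure R (FractionRing R) →ₐ[R] B) :=
    nonempty_algHom_integralClosure ι
  have hinj : Function.Injective (algebraMap S B) := fun a b hab ↦
    IsFractionRing.injective S (FractionRing S) (congrArg Subtype.val hab)
  obtain ⟨n, hn⟩ : ∃ n, algebraMap S B z ∉ (maximalIdeal S).map (algebraMap S B) ^ n := by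
    by_contra! hmem
    exact hz (eq_zero_of_forall_algebraMap_mem_map_maximalIdeal_pow hinj hmem)
  refine ⟨n, fun hn0 ↦ hn (by simp [hn0]), fun r hzr hr ↦ hn ?_⟩
  rw [AdicCompletion.maximalIdeal_eq_map, ← Ideal.map_pow]
  have hr' := algebraMap_mem_map_of_smul_one_mem ψ hr
  rw [IsScalarTower.algebraMap_apply R S B, IsScalarTower.algebraMap_eq R S B, ← Ideal.map_map,
    Ideal.map_pow] at hr'
  have hsum := add_mem (Ideal.mem_map_of_mem (algebraMap S B) hzr) hr'
  rwa [← map_add, sub_add_cancel] at hsum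

theorem IsGorensteinSystem.finite_integralClosure {xs : List R} (h : IsGorensteinSystem xs)
    [IsReduced (AdicCompletion (maximalIdeal R) R)]
    (hM : ∀ i < xs.length,
      ExtVanishes R (ResidueField R) (integralClosure R (FractionRing R)) i) :
    Module.Finite R (integralClosure R (FractionRing R)) := by
  let S := AdicCompletion (maximalIdeal R) R
  have : Module.FaithfullyFlat R S := Module.FaithfullyFlat.of_flat_of_isLocalHom
  obtain ⟨ι⟩ : Nonempty (FractionRing R →ₐ[R] FractionRing S) := nonempty_algHom_of_flat (S := S)
  refine finite_subalgebra_of_forall_exists_linearMap (S := S) ι fun z hz ↦ ?_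
  obtain ⟨n, hn, hz⟩ := exists_smul_one_notMem_of_sub_algebraMap_mem hz
  obtain ⟨N, hN⟩ := exists_pow_le_ofListPow h.exists_pow_le n
  obtain ⟨r, hr⟩ := exists_sub_algebraMap_mem_map_pow z N
  have hpow : ofListPow xs n ≤ maximalIdeal R ^ n := ofListPow_le_pow h.mem_maximalIdeal n
  have hr1 := hz r <| by
    rw [← Ideal.map_pow] at hr ⊢
    exact Ideal.map_mono (hN.trans hpow) hr
  obtain ⟨φ, hφ⟩ := h.exists_linearMap_adicCompletion_val_ne_zero hM hn
    (fun hmem ↦ hr1 (Submodule.smul_mono_left hpow hmem)) hN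
  refine ⟨φ, fun hzφ ↦ hφ (mem_map_pow_iff_val_eq_zero.1 ?_)⟩
  have hφr : φ (r • 1) = -((z - algebraMap R S r) * φ 1) := by
    rw [map_smul, Algebra.smul_def, sub_mul, hzφ, zero_sub, neg_neg]
  rw [hφr]
  exact neg_mem (Ideal.mul_mem_right _ _ hr)

end FiniteIntegralClosure

section Duality

variable {R : Type u} [CommRing R] {M N V W : Type u} [AddCommGroup M] [Module R M]
  [AddCommGroup N] [Module R N] [AddCommGroup V] [Module R V] [AddCommGroup W] [Module R W]

theorem extPostcomp_sum {α : Type*} (s : Finset α) (f : α → M →ₗ[R] N) {i : ℕ}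
    (e : ModuleExt R V M i) : extPostcomp (∑ a ∈ s, f a) e = ∑ a ∈ s, extPostcomp (f a) e := by
  classical
  induction s using Finset.induction_on with
  | empty => simp [extPostcomp_zero]
  | insert a s ha ih => rw [Finset.sum_insert ha, Finset.sum_insert ha, extPostcomp_add, ih]

theorem ExtVanishes.pi {i : ℕ} (h : ExtVanishes R V M i) (n : ℕ) :
    ExtVanishes R V (Fin n → M) i := by
  intro e
  have hid : ∑ a : Fin n, LinearMap.single R (fun _ ↦ M) a ∘ₗ LinearMap.proj a =
      LinearMap.id := by
    ext x
    simp
  rw [← extPostcomp_id e, ← hid, extPostcomp_sum]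
  refine Finset.sum_eq_zero fun a _ ↦ ?_
  rw [← extPostcomp_extPostcomp, h (extPostcomp _ e), map_zero]

theorem ExtVanishes.linearMap_fin {i : ℕ} (h : ExtVanishes R V W i) (n : ℕ) :
    ExtVanishes R V ((Fin n → R) →ₗ[R] W) i :=
  (h.pi n).of_linearEquiv_right ((Pi.basisFun R (Fin n)).constr R)

theorem IsShortExact.lcomp {A B C : Type u} [AddCommGroup A] [Module R A] [AddCommGroup B]
    [Module R B] [AddCommGroup C] [Module R C] {f : A →ₗ[R] B} {g : B →ₗ[R] C}
    (h : IsShortExact f g) (hC : ExtVanishes R C W 1) :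
    IsShortExact (LinearMap.lcomp R W g) (LinearMap.lcomp R W f) where
  injective := LinearMap.lcomp_injective_of_surjective g h.surjective
  surjective u := by
    obtain ⟨e, he⟩ := h.contravariant_exact₁ rfl (extOfLinearMap u) (hC _)
    obtain ⟨v, rfl⟩ := extOfLinearMap_bijective.2 e
    rw [extPrecomp_extOfLinearMap] at he
    exact ⟨v, extOfLinearMap_bijective.1 he⟩
  exact := LinearMap.exact_lcomp_of_exact_of_surjective W h.exact h.surjective

theorem extVanishes_linearMap_of_forall_extVanishes_succ [IsNoetherianRing R] {d : ℕ}
    (hV : ∀ i < d, ExtVanishes R V W i) {i : ℕ} (hi : i < d) (N : Type u) [AddCommGroup N]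
    [Module R N] [Module.Finite R N] (hN : ∀ j, ExtVanishes R N W (j + 1)) :
    ExtVanishes R V (N →ₗ[R] W) i := by
  induction i generalizing N with
  | zero =>
    obtain ⟨n, f, hf⟩ := Module.Finite.exists_fin' R N
    exact ((isShortExact_subtype_ker f hf).lcomp (hN 0)).covariant_vanishes₁_zero
      ((hV 0 hi).linearMap_fin n)
  | succ i ih =>
    obtain ⟨n, f, hf⟩ := Module.Finite.exists_fin' R N
    have hses := isShortExact_subtype_ker f hf
    have hker : ∀ j, ExtVanishes R (LinearMap.ker f) W (j + 1) := fun j ↦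
      hses.contravariant_vanishes₁ (extVanishes_succ_of_projective _) (hN _)
    exact (hses.lcomp (hN 0)).covariant_vanishes₁ (ih (Nat.lt_of_succ_lt hi) _ hker)
      ((hV _ hi).linearMap_fin n)

variable [IsNoetherianRing R] [IsLocalRing R]

theorem extVanishes_of_isWeaklyRegular [Module.Finite R W] {d : ℕ}
    (hW : ∀ i > d, ∀ (N : Type u) [AddCommGroup N] [Module R N] [Module.Finite R N],
      ExtVanishes R N W i)
    {rs : List R} (hrs : ∀ r ∈ rs, r ∈ maximalIdeal R) (N : Type u) [AddCommGroup N] [Module R N]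
    [Module.Finite R N] (hreg : RingTheory.Sequence.IsWeaklyRegular N rs) {i : ℕ}
    (hi : d < i + rs.length) : ExtVanishes R N W i := by
  induction rs generalizing N i with
  | nil => exact hW i hi N
  | cons x rs ih =>
    rw [RingTheory.Sequence.isWeaklyRegular_cons_iff] at hreg
    refine .of_quotSMulTop_left (hrs x List.mem_cons_self) hreg.1 ?_
    refine ih (fun r hr ↦ hrs r (List.mem_cons_of_mem _ hr)) _ hreg.2 ?_
    rw [List.length_cons] at hi
    lia

theorem IsGorensteinSystem.extVanishes_residueField_dual {xs : List R}
    (h : IsGorensteinSystem xs) [Module.Finite R N] [Nontrivial N]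
    (hN : ∀ i < xs.length, ExtVanishes R (ResidueField R) N i) {i : ℕ} (hi : i < xs.length) :
    ExtVanishes R (ResidueField R) (N →ₗ[R] R) i := by
  obtain ⟨rs, hlen, hrs, hreg⟩ := exists_isRegular_of_extVanishes N _ hN
  refine extVanishes_linearMap_of_forall_extVanishes_succ h.extVanishes_residueField hi N fun j ↦ ?_
  exact extVanishes_of_isWeaklyRegular h.extVanishes_of_length_lt hrs N hreg.1 (by lia)

theorem exists_le_not_extVanishes_residueField {d : ℕ} (hd : ringKrullDim R ≤ d) (M : Type u)
    [AddCommGroup M] [Module R M] [Module.Finite R M] [Nontrivial M] :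
    ∃ i ≤ d, ¬ ExtVanishes R (ResidueField R) M i := by
  by_contra! hM
  obtain ⟨rs, hlen, -, hreg⟩ :=
    exists_isRegular_of_extVanishes M (d + 1) fun i hi ↦ hM i (Nat.lt_succ_iff.1 hi)
  let Q := M ⧸ Ideal.ofList rs • (⊤ : Submodule R M)
  have : Nontrivial Q := Submodule.Quotient.nontrivial_iff.2 hreg.2.symm
  have hQ : 0 ≤ Module.supportDim R Q :=
    Order.krullDim_nonneg_iff.2 <|
      Order.krullDim_ne_bot_iff.1 (Module.supportDim_ne_bot_of_nontrivial R Q)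
  have hle : ((d + 1 : ℕ) : WithBot ℕ∞) ≤ d :=
    calc ((d + 1 : ℕ) : WithBot ℕ∞) ≤ Module.supportDim R Q + rs.length := by
          rw [hlen]
          exact le_add_of_nonneg_left hQ
      _ = Module.supportDim R M := Module.supportDim_add_length_eq_supportDim_of_isRegular rs hreg
      _ ≤ d := (Module.supportDim_le_ringKrullDim R M).trans hd
  exact Nat.not_succ_le_self d (by exact_mod_cast hle)

end Duality

section Conductor

open scoped nonZeroDivisors

variable {R K : Type*} [CommRing R] [CommRing K] [Algebra R K] [IsFractionRing R K]
  (B : Subalgebra R K)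

theorem algebraMap_subalgebra_injective : Function.Injective (algebraMap R B) := fun _ _ h ↦
  IsFractionRing.injective R K (congrArg Subtype.val h)

theorem algebraMap_apply_eq_apply_one_smul (φ : B →ₗ[R] R) (m : B) :
    algebraMap R B (φ m) = φ 1 • m :=
  Subtype.ext <| (algebraMap_apply_eq_mul_of_subalgebra (AlgHom.id R K) φ m).trans
    (Algebra.smul_def _ _).symm

theorem applyₗ_one_injective :
    Function.Injective (LinearMap.applyₗ (1 : B) : (B →ₗ[R] R) →ₗ[R] R) := by
  intro φ ψ (h : φ 1 = ψ 1)
  refine LinearMap.ext fun m ↦ algebraMap_subalgebra_injective B ?_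
  rw [algebraMap_apply_eq_apply_one_smul, algebraMap_apply_eq_apply_one_smul, h]

theorem range_applyₗ_one :
    LinearMap.range (LinearMap.applyₗ (1 : B) : (B →ₗ[R] R) →ₗ[R] R) =
      Module.annihilator R (B ⧸ LinearMap.range (Algebra.linearMap R B)) := by
  ext c
  simp only [Submodule.annihilator_quotient, Submodule.mem_colon, Set.mem_univ, true_imp_iff]
  constructor
  · rintro ⟨φ, rfl⟩ m
    exact ⟨φ m, algebraMap_apply_eq_apply_one_smul B φ m⟩
  · intro hc
    let e := LinearEquiv.ofInjective (Algebra.linearMap R B) (algebraMap_subalgebra_injective B)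
    let μ := (c • (LinearMap.id : B →ₗ[R] B)).codRestrict _ hc
    refine ⟨e.symm.toLinearMap ∘ₗ μ, ?_⟩
    change e.symm (μ 1) = c
    rw [LinearEquiv.symm_apply_eq]
    exact Subtype.ext (Algebra.algebraMap_eq_smul_one c).symm

/-- Evaluation at `1` identifies the dual of an intermediate ring `R ⊆ B ⊆ K` of the total ring of
fractions `K` with the conductor `Ann_R(B / R)`. -/
def dualEquivAnnihilatorQuotient :
    (B →ₗ[R] R) ≃ₗ[R] Module.annihilator R (B ⧸ LinearMap.range (Algebra.linearMap R B)) :=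
  (LinearEquiv.ofInjective _ (applyₗ_one_injective B)).trans
    (LinearEquiv.ofEq _ _ (range_applyₗ_one B))

theorem isTorsion_quotient_range :
    Module.IsTorsion R (B ⧸ LinearMap.range (Algebra.linearMap R B)) := by
  intro q
  obtain ⟨m, rfl⟩ := Submodule.Quotient.mk_surjective _ q
  obtain ⟨b, a, hba⟩ := IsLocalization.exists_integer_multiple R⁰ (m : K)
  refine ⟨b, (Submodule.Quotient.mk_eq_zero _).2 ⟨a, Subtype.ext hba⟩⟩

theorem nontrivial_annihilator_quotient_range [Nontrivial R] [Module.Finite R B] :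
    Nontrivial (Module.annihilator R (B ⧸ LinearMap.range (Algebra.linearMap R B))) := by
  obtain ⟨b, hb, hb0⟩ :=
    Submodule.annihilator_top_inter_nonZeroDivisors (isTorsion_quotient_range B)
  rw [Submodule.annihilator_top] at hb
  exact nontrivial_of_ne ⟨b, hb⟩ 0 fun h ↦ nonZeroDivisors.ne_zero hb0 (congrArg Subtype.val h)

end Conductor

section Depth

variable {R M : Type} [CommRing R] [AddCommGroup M] [Module R M]

theorem extVanishes_iff_subsingleton_extMod {N : Type} [AddCommGroup N] [Module R N] {i : ℕ} :
    ExtVanishes R M N i ↔ Subsingleton (ExtMod R M N i) :=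
  extVanishes_iff_subsingleton.trans (subsingleton_extFunctor_iff _ _ i).symm

theorem HasFiniteInjDim.hasFiniteSelfInjDim (h : HasFiniteInjDim R R) :
    HasFiniteSelfInjDim R := by
  obtain ⟨n, hn⟩ := h
  exact ⟨n + 1, fun i hi N _ _ _ ↦
    extVanishes_iff_subsingleton_extMod.2 (hn (ModuleCat.of R N) i hi)⟩

variable [IsLocalRing R]

theorem moduleDepth_le_of_not_extVanishes {i : ℕ} (h : ¬ ExtVanishes R (ResidueField R) M i) :
    moduleDepth R M ≤ i := by
  rw [extVanishes_iff_subsingleton_extMod, not_subsingleton_iff_nontrivial] at h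
  exact sInf_le ⟨i, rfl, h⟩

theorem natCast_le_moduleDepth_iff {d : ℕ} :
    d ≤ moduleDepth R M ↔ ∀ i < d, ExtVanishes R (ResidueField R) M i := by
  constructor
  · intro hd i hi
    by_contra h
    have hle : (d : WithBot ℕ∞) ≤ i := hd.trans (moduleDepth_le_of_not_extVanishes h)
    exact hi.not_ge (by exact_mod_cast hle)
  · intro h
    refine le_sInf ?_
    rintro _ ⟨i, rfl, hi⟩
    have hdi : d ≤ i := by
      by_contra! hlt
      exact not_subsingleton_iff_nontrivial.2 hi (extVanishes_iff_subsingleton_extMod.1 (h i hlt))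
    exact_mod_cast hdi

theorem moduleDepth_le_ringKrullDim [IsNoetherianRing R] [Module.Finite R M] [Nontrivial M] :
    moduleDepth R M ≤ ringKrullDim R := by
  obtain ⟨d, hd⟩ : ∃ d : ℕ, ringKrullDim R = d :=
    ⟨_, Order.krullDim_eq_length_of_finiteDimensionalOrder⟩
  obtain ⟨i, hi, hM⟩ := exists_le_not_extVanishes_residueField hd.le M
  rw [hd]
  have hle : (i : WithBot ℕ∞) ≤ d := by exact_mod_cast hi
  exact (moduleDepth_le_of_not_extVanishes hM).trans hle

end Depth

-- STATEMENT 15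
theorem stmt15 (R : Type) [CommRing R] [IsLocalRing R]
    (hau : AnalyticallyUnramified R) (hgor : IsGorensteinLocal R)
    (hcm : moduleDepth R (IntClosure R) = ringKrullDim R) :
    moduleDepth R ↥(conductorIdeal R) = ringKrullDim R := by
  have : IsNoetherianRing R := hgor.1
  have : IsReduced (AdicCompletion (maximalIdeal R) R) := hau
  obtain ⟨xs, hxs⟩ := hgor.2.hasFiniteSelfInjDim.exists_isGorensteinSystem
  have hext : ∀ i < xs.length, ExtVanishes R (ResidueField R) (IntClosure R) i :=
    natCast_le_moduleDepth_iff.1 (hxs.ringKrullDim_eq.symm.trans hcm.symm).le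
  have : Module.Finite R (IntClosure R) := hxs.finite_integralClosure hext
  have : Nontrivial (conductorIdeal R) :=
    nontrivial_annihilator_quotient_range (integralClosure R (FractionRing R))
  refine le_antisymm moduleDepth_le_ringKrullDim ?_
  rw [hxs.ringKrullDim_eq]
  refine natCast_le_moduleDepth_iff.2 fun i hi ↦ ?_
  exact (hxs.extVanishes_residueField_dual hext hi).of_linearEquiv_right
    (dualEquivAnnihilatorQuotient (integralClosure R (FractionRing R)))
end
end

section
/- Let (R, m) be an analytically unramified Noetherian local ring containing a field, with conductor ideal 𝔠, and suppose m = 𝔠 + yR for some y ∈ R. Then for every system of parameters x_1, …, x_d of R, the conductor is not contained in the parameter ideal: 𝔠 ⊄ (x_1, …, x_d)R. -/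
open CategoryTheory IsLocalRing

set_option synthInstance.maxHeartbeats 1000000
set_option maxHeartbeats 1000000

noncomputable section

/-!
Let `q = (x₁, …, x_d)` and suppose `𝔠 ⊆ q`.

If `𝔠 ≠ q`, exchanging a suitable `xᵢ` for `y` produces `d` generators of `m`. Then the completion
of `R` is a power series ring over a field, hence normal; normality descends to `R`, so `𝔠 = R`,
which is absurd.

If `𝔠 = q` and `d ≥ 2`, let `y ^ ℓ ∈ q`. The completion `B` of `R` is generated by
`1, y, …, y ^ (ℓ - 1)` over `A = k⟦x₁, …, x_d⟧`. Let `Q` be a prime of `B` lying over `0` and `μ`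
the minimal polynomial of `y` modulo `Q`. As `A` is normal, `B / Q = A[Y] / (μ)` is free over `A`,
so a vector `r` with `xᵢ rⱼ = xⱼ rᵢ` is a multiple of `x` modulo `Q`. Moreover `y` is a root of a
polynomial `μ g ≡ Y ^ ℓ` modulo `(x)`, and `g(y)` kills `Q`, so `y ^ (ℓ - 1)` acts on `Q` as an
element of `(x) B`. Hence `y ^ (ℓ - 1) r` is a multiple of `x` in `B`. For `b` integral over `R`,
applying this to `rⱼ = xⱼ b` and cancelling a nonzerodivisor of `q` gives `y ^ (ℓ - 1) b ∈ R`. So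
`y ^ ℓ ∈ 𝔠` implies `y ^ (ℓ - 1) ∈ 𝔠`, and descending to the exponent `0` gives `𝔠 = R`.

If `𝔠 = q` and `d ≤ 1`, then `𝔠` is principal, generated by a nonzerodivisor; being an ideal of `R̄`
as well, it forces `R̄ = R`.
-/

section IntegrallyClosed

open PowerSeries

/-- Almost integrality expressed through divisibility, which transfers along faithfully flat maps
without comparing fraction fields. -/
theorem isIntegrallyClosed_iff_forall_dvd {D : Type*} [CommRing D] [IsDomain D]
    [IsNoetherianRing D] :
    IsIntegrallyClosed D ↔
      ∀ c u v : D, c ≠ 0 → v ≠ 0 → (∀ n, v ^ n ∣ c * u ^ n) → v ∣ u := by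
  let K := FractionRing D
  have dvd_iff (c u v : D) (hv : v ≠ 0) :
      v ∣ c * u ↔ c • (algebraMap D K u / algebraMap D K v) ∈ (algebraMap D K).range := by
    have hv' : algebraMap D K v ≠ 0 := by simpa using hv
    simp only [dvd_def, RingHom.mem_range, Algebra.smul_def]
    refine exists_congr fun w ↦ ?_
    rw [← (IsFractionRing.injective D K).eq_iff, map_mul, map_mul]
    rw [← mul_div_assoc, eq_div_iff hv', eq_comm, mul_comm (algebraMap D K v)]
  have almostIntegral_iff (c u v : D) (hv : v ≠ 0) : (∀ n, v ^ n ∣ c * u ^ n) ↔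
      ∀ n, c • (algebraMap D K u / algebraMap D K v) ^ n ∈ (algebraMap D K).range := by
    simp only [dvd_iff _ _ _ (pow_ne_zero _ hv), map_pow, div_pow]
  rw [isIntegrallyClosed_iff K]
  constructor
  · intro h c u v hc hv hdvd
    have hint : IsAlmostIntegral D (algebraMap D K u / algebraMap D K v) :=
      ⟨c, mem_nonZeroDivisors_of_ne_zero hc, (almostIntegral_iff c u v hv).mp hdvd⟩
    simpa using (dvd_iff 1 u v hv).mpr (by simpa using h hint.isIntegral)
  · intro h w hw
    obtain ⟨u, v, hv, rfl⟩ := IsFractionRing.div_surjective (A := D) w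
    have hv := nonZeroDivisors.ne_zero hv
    obtain ⟨c, hc, hcw⟩ := hw.isAlmostIntegral
    have := h c u v (nonZeroDivisors.ne_zero hc) hv ((almostIntegral_iff c u v hv).mpr hcw)
    simpa using (dvd_iff 1 u v hv).mp (by simpa using this)

variable {D K : Type*} [CommRing D] [Field K] [Algebra D K]

theorem isAlmostIntegral_of_X_mul [FaithfulSMul D K] {w : K⟦X⟧}
    (hw : IsAlmostIntegral D⟦X⟧ (X * w)) : IsAlmostIntegral D⟦X⟧ w := by
  obtain ⟨c, hc, h⟩ := hw
  refine ⟨c, hc, fun n ↦ ?_⟩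
  obtain ⟨f, hf⟩ := h n
  have hf : PowerSeries.map (algebraMap D K) f = X ^ n * (c • w ^ n) := by
    rw [← algebraMap_apply'', hf, mul_pow, mul_smul_comm]
  obtain ⟨g, rfl⟩ : X ^ n ∣ f := X_pow_dvd_iff.mpr fun m hm ↦ by
    have := X_pow_dvd_iff.mp (Dvd.intro _ hf.symm) m hm
    simpa using this
  refine ⟨g, mul_left_cancel₀ (pow_ne_zero n X_ne_zero) ?_⟩
  rw [← hf, map_mul, map_pow, map_X, algebraMap_apply'']

variable [IsDomain D] [IsNoetherianRing D] [IsFractionRing D K]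

theorem isIntegral_constantCoeff_of_isAlmostIntegral {w : K⟦X⟧}
    (hw : IsAlmostIntegral D⟦X⟧ w) : IsIntegral D (constantCoeff w) := by
  obtain ⟨c, hc, h⟩ := hw
  obtain ⟨r, c', hc'₀, rfl⟩ :=
    WfDvdMonoid.max_power_factor (nonZeroDivisors.ne_zero hc) X_prime.irreducible
  rw [X_dvd_iff] at hc'₀
  suffices IsAlmostIntegral D (constantCoeff w) from this.isIntegral
  refine ⟨constantCoeff c', mem_nonZeroDivisors_of_ne_zero hc'₀, fun n ↦ ?_⟩
  obtain ⟨f, hf⟩ := h n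
  refine ⟨coeff r f, ?_⟩
  calc algebraMap D K (coeff r f)
      = coeff r ((X ^ r * c') • w ^ n) := by rw [← hf, algebraMap_apply'', coeff_map]
    _ = coeff r (X ^ r * (map (algebraMap D K) c' * w ^ n)) := by
      rw [Algebra.smul_def, algebraMap_apply'', RingHom.map_mul, RingHom.map_pow, map_X, mul_assoc]
    _ = constantCoeff (map (algebraMap D K) c' * w ^ n) := by simp [coeff_X_pow_mul']
    _ = constantCoeff c' • constantCoeff w ^ n := by
      rw [RingHom.map_mul, RingHom.map_pow, Algebra.smul_def]
      rfl

variable [IsIntegrallyClosed D]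

theorem mem_range_of_isAlmostIntegral {w : K⟦X⟧} (hw : IsAlmostIntegral D⟦X⟧ w) :
    w ∈ (algebraMap D⟦X⟧ K⟦X⟧).range := by
  suffices h : ∀ m, ∀ w : K⟦X⟧, IsAlmostIntegral D⟦X⟧ w → ∃ a, algebraMap D K a = coeff m w by
    choose a ha using fun m ↦ h m w hw
    exact ⟨mk a, by ext m; simp [algebraMap_apply'', ha]⟩
  intro m
  induction m with
  | zero =>
    intro w hw
    simpa using
      IsIntegrallyClosed.isIntegral_iff.mp (isIntegral_constantCoeff_of_isAlmostIntegral hw)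
  | succ m ih =>
    intro w hw
    obtain ⟨a, ha⟩ := IsIntegrallyClosed.isIntegral_iff.mp
      (isIntegral_constantCoeff_of_isAlmostIntegral hw)
    obtain ⟨w', hw'⟩ : X ∣ w - algebraMap D⟦X⟧ K⟦X⟧ (C a) := by
      simp [X_dvd_iff, algebraMap_apply'', ha]
    have hX : IsAlmostIntegral D⟦X⟧ (X * w') :=
      hw' ▸ sub_mem (mem_completeIntegralClosure.mpr hw)
        (algebraMap_mem (completeIntegralClosure D⟦X⟧ K⟦X⟧) (C a))
    obtain ⟨b, hb⟩ := ih w' (isAlmostIntegral_of_X_mul hX)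
    refine ⟨b, ?_⟩
    rw [hb, ← coeff_succ_X_mul, ← hw']
    simp [algebraMap_apply'']

variable (D) in
theorem isIntegrallyClosed_powerSeries : IsIntegrallyClosed D⟦X⟧ := by
  rw [isIntegrallyClosed_iff_forall_dvd]
  intro c u v hc hv h
  let K := FractionRing D
  let φ := algebraMap D⟦X⟧ K⟦X⟧
  have hφ : Function.Injective φ := map_injective _ (IsFractionRing.injective D K)
  have hφ0 {a : D⟦X⟧} (ha : a ≠ 0) : φ a ≠ 0 := (map_ne_zero_iff φ hφ).mpr ha
  obtain ⟨w, hw⟩ : φ v ∣ φ u := isIntegrallyClosed_iff_forall_dvd.mp inferInstance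
    _ _ _ (hφ0 hc) (hφ0 hv) fun n ↦ by simpa using map_dvd φ (h n)
  have hw_almost : IsAlmostIntegral D⟦X⟧ w := by
    refine ⟨c, mem_nonZeroDivisors_of_ne_zero hc, fun n ↦ ?_⟩
    obtain ⟨f, hf⟩ := h n
    refine ⟨f, mul_left_cancel₀ (pow_ne_zero n (hφ0 hv)) ?_⟩
    calc φ v ^ n * φ f = φ c * φ u ^ n := by rw [← map_pow, ← map_mul, ← hf, map_mul, map_pow]
      _ = φ v ^ n * (c • w ^ n) := by rw [hw, Algebra.smul_def]; ring
  obtain ⟨w', rfl⟩ := mem_range_of_isAlmostIntegral hw_almost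
  exact ⟨w', hφ (by rw [hw, map_mul])⟩

theorem isIntegrallyClosed_mvPowerSeries (k : Type*) [Field k] (n : ℕ) :
    IsIntegrallyClosed (MvPowerSeries (Fin n) k) := by
  induction n with
  | zero => exact .of_equiv (MvPowerSeries.isEmptyEquiv (Fin 0) k).symm.toRingEquiv
  | succ n ih =>
    have : IsDomain (MvPowerSeries (Fin n) k) := NoZeroDivisors.to_isDomain _
    have := isIntegrallyClosed_powerSeries (MvPowerSeries (Fin n) k)
    exact .of_equiv (MvPowerSeries.finSuccEquiv k n).symm.toRingEquiv

end IntegrallyClosed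

section PowerSeries

variable (k : Type*) (n : ℕ)

theorem mem_span_range_X_of_constantCoeff_eq_zero [CommRing k] {n : ℕ} {f : MvPowerSeries (Fin n) k}
    (hf : MvPowerSeries.constantCoeff f = 0) :
    f ∈ Ideal.span (Set.range (MvPowerSeries.X : Fin n → MvPowerSeries (Fin n) k)) := by
  induction n with
  | zero =>
    rw [(MvPowerSeries.isEmptyEquiv (Fin 0) k).injective (hf.trans (map_zero _).symm)]
    exact zero_mem _
  | succ n ih =>
    let e := MvPowerSeries.finSuccEquiv k n
    let ι : MvPowerSeries (Fin n) k →+* MvPowerSeries (Fin (n + 1)) k :=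
      e.symm.toRingHom.comp PowerSeries.C
    have hιX (j : Fin n) : ι (MvPowerSeries.X j) = MvPowerSeries.X j.succ :=
      e.symm_apply_eq.mpr (MvPowerSeries.finSuccEquiv_X_succ j).symm
    obtain ⟨g, hg⟩ : PowerSeries.X ∣ e f - PowerSeries.C (PowerSeries.constantCoeff (e f)) := by
      simp [PowerSeries.X_dvd_iff]
    have hf_eq : f = ι (PowerSeries.constantCoeff (e f)) + MvPowerSeries.X 0 * e.symm g := by
      apply e.injective
      rw [map_add, map_mul, MvPowerSeries.finSuccEquiv_X_zero, e.apply_symm_apply, ← hg]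
      simp [ι]
    have hconst : MvPowerSeries.constantCoeff (PowerSeries.constantCoeff (e f)) = 0 := by
      rw [← hf, ← MvPowerSeries.coeff_zero_eq_constantCoeff_apply,
        ← MvPowerSeries.coeff_zero_eq_constantCoeff_apply,
        ← PowerSeries.coeff_zero_eq_constantCoeff_apply, MvPowerSeries.coeff_coeff_finSuccEquiv,
        Finsupp.cons_zero_zero]
    have hι : ι (PowerSeries.constantCoeff (e f)) ∈ Ideal.span (Set.range MvPowerSeries.X) := by
      refine Ideal.span_mono ?_ (Ideal.map_span ι _ ▸ Ideal.mem_map_of_mem ι (ih hconst))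
      rintro _ ⟨_, ⟨j, rfl⟩, rfl⟩
      exact ⟨j.succ, (hιX j).symm⟩
    rw [hf_eq]
    exact add_mem hι (Ideal.mul_mem_right _ _ (Ideal.subset_span ⟨0, rfl⟩))

theorem maximalIdeal_mvPowerSeries [Field k] :
    maximalIdeal (MvPowerSeries (Fin n) k) = Ideal.span (Set.range MvPowerSeries.X) := by
  refine le_antisymm (fun f hf ↦ ?_) (Ideal.span_le.mpr ?_)
  · rw [mem_maximalIdeal, mem_nonunits_iff, MvPowerSeries.isUnit_iff_constantCoeff,
      isUnit_iff_ne_zero, not_not] at hf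
    exact mem_span_range_X_of_constantCoeff_eq_zero k hf
  · rintro _ ⟨i, rfl⟩
    simp [MvPowerSeries.isUnit_iff_constantCoeff]

theorem ringKrullDim_mvPowerSeries_le [Field k] : ringKrullDim (MvPowerSeries (Fin n) k) ≤ n := by
  refine (ringKrullDim_le_spanFinrank_maximalIdeal _).trans ?_
  rw [maximalIdeal_mvPowerSeries]
  have hcard : (Set.range (MvPowerSeries.X (R := k) (σ := Fin n))).ncard ≤ n := by
    simpa using Finite.card_range_le (MvPowerSeries.X (R := k) (σ := Fin n))
  exact_mod_cast (Submodule.spanFinrank_span_le_ncard_of_finite (Set.finite_range _)).trans hcard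

theorem prime_mvPowerSeries_X_zero [Field k] :
    Prime (MvPowerSeries.X 0 : MvPowerSeries (Fin (n + 1)) k) := by
  have : IsDomain (MvPowerSeries (Fin n) k) := NoZeroDivisors.to_isDomain _
  rw [← MulEquiv.prime_iff (MvPowerSeries.finSuccEquiv k n), MvPowerSeries.finSuccEquiv_X_zero]
  exact PowerSeries.X_prime

theorem not_mvPowerSeries_X_dvd_X [CommRing k] [Nontrivial k] {σ : Type*} {i j : σ} (hij : i ≠ j) :
    ¬ (MvPowerSeries.X i : MvPowerSeries σ k) ∣ MvPowerSeries.X j := by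
  rw [MvPowerSeries.X_dvd_iff]
  intro h
  simpa using h (Finsupp.single j 1) (Finsupp.single_eq_of_ne hij)

end PowerSeries

section Completion

theorem isPrecomplete_pi {A ι : Type*} [Finite ι] [CommRing A] (I : Ideal A) [IsPrecomplete I A] :
    IsPrecomplete I (ι → A) := by
  classical
  have := Fintype.ofFinite ι
  rw [← AdicCompletion.of_surjective_iff]
  intro t
  choose a ha using fun i ↦ AdicCompletion.of_surjective I A (AdicCompletion.pi I (fun _ ↦ A) t i)
  refine ⟨a, (AdicCompletion.piEquivOfFintype I fun _ ↦ A).injective (funext fun i ↦ ?_)⟩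
  rw [AdicCompletion.piEquivOfFintype_apply, AdicCompletion.piEquivOfFintype_apply, ← ha]
  rfl

theorem ringKrullDim_le_of_isIntegral {A B : Type*} [CommRing A] [CommRing B] [Algebra A B]
    [Algebra.IsIntegral A B] : ringKrullDim B ≤ ringKrullDim A :=
  Order.krullDim_le_of_strictMono (PrimeSpectrum.comap (algebraMap A B)) fun P Q h ↦
    Ideal.IsIntegral.comap_lt_comap (R := A) (I := P.asIdeal) (J := Q.asIdeal) h

theorem ringKrullDim_le_of_faithfullyFlat {A B : Type*} [CommRing A] [CommRing B] [Algebra A B]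
    [Module.FaithfullyFlat A B] : ringKrullDim A ≤ ringKrullDim B := by
  refine iSup_le fun l ↦ ?_
  obtain ⟨P, hP⟩ := PrimeSpectrum.comap_surjective_of_faithfullyFlat (B := B) l.last
  have : P.asIdeal.LiesOver l.last.asIdeal := ⟨by rw [← hP]; rfl⟩
  obtain ⟨L, hL, -⟩ := Ideal.exists_ltSeries_of_hasGoingDown (S := B) l P.asIdeal
  rw [← hL]
  exact le_iSup (fun p : LTSeries (PrimeSpectrum B) ↦ (p.length : WithBot ℕ∞)) L

end Completion

section CoefficientField

open MvPolynomial in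
theorem subsingleton_h1Cotangent_iff (K L : Type*) [CommRing K] [CommRing L] [Algebra K L] :
    Subsingleton (Algebra.H1Cotangent K L) ↔ ∀ u : MvPolynomial L K, aeval id u = 0 →
      (∀ i, aeval (id : L → L) (pderiv i u) = 0) →
      u ∈ RingHom.ker (aeval (R := K) (id : L → L)) ^ 2 := by
  let P := Algebra.Generators.self K L
  have cotangentComplex_eq_zero_iff (u : P.toExtension.ker) :
      P.toExtension.cotangentComplex (.mk u) = 0 ↔
        ∀ i, aeval (id : L → L) (pderiv i (u.1 : MvPolynomial L K)) = 0 := by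
    rw [Algebra.Extension.cotangentComplex_mk,
      ← LinearEquiv.map_eq_zero_iff P.cotangentSpaceBasis.repr, Finsupp.ext_iff]
    exact forall_congr' fun i ↦ Eq.congr_left (P.cotangentSpaceBasis_repr_one_tmul u.1 i)
  change Subsingleton P.toExtension.H1Cotangent ↔ _
  rw [Algebra.Extension.subsingleton_h1Cotangent, injective_iff_map_eq_zero]
  constructor
  · intro h u hu hdu
    have := h (.mk ⟨u, hu⟩) ((cotangentComplex_eq_zero_iff ⟨u, hu⟩).mpr hdu)
    rwa [Algebra.Extension.Cotangent.mk_eq_zero_iff] at this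
  · intro h a ha
    obtain ⟨u, rfl⟩ := Algebra.Extension.Cotangent.mk_surjective a
    rw [Algebra.Extension.Cotangent.mk_eq_zero_iff]
    exact h u.1 u.2 ((cotangentComplex_eq_zero_iff u).mp ha)

open MvPolynomial in
theorem formallySmooth_of_perfectField (K L : Type*) [Field K] [Field L] [Algebra K L]
    [PerfectField K] : Algebra.FormallySmooth K L := by
  refine ⟨inferInstance, (subsingleton_h1Cotangent_iff K L).mpr fun u hu hdu ↦ ?_⟩
  -- `u` involves finitely many elements of `L`, so it already lives over a finitely generated
  -- subextension, where formal smoothness is known.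
  let E := IntermediateField.adjoin K (u.vars : Set L)
  have hE : Algebra.EssFiniteType K E := IntermediateField.essFiniteType_iff.mpr ⟨u.vars, rfl⟩
  let incl : MvPolynomial E K →ₐ[K] MvPolynomial L K := rename Subtype.val
  have aeval_incl (w : MvPolynomial E K) : aeval id (incl w) = algebraMap E L (aeval id w) := by
    rw [aeval_rename, ← aeval_algebraMap_apply]
    rfl
  have aeval_eq_zero {w : MvPolynomial E K} (hw : aeval id (incl w) = 0) :
      aeval (id : E → E) w = 0 :=
    (algebraMap E L).injective (by rw [← aeval_incl, hw, map_zero])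
  obtain ⟨v, hvu⟩ : ∃ v, incl v = u := exists_rename_eq_of_vars_subset_range u _
    Subtype.val_injective fun z hz ↦ ⟨⟨z, IntermediateField.subset_adjoin _ _ hz⟩, rfl⟩
  rw [← hvu] at hu hdu ⊢
  have hv : v ∈ RingHom.ker (aeval (R := K) (id : E → E)) ^ 2 :=
    (subsingleton_h1Cotangent_iff K E).mp Algebra.FormallySmooth.subsingleton_h1Cotangent v
      (aeval_eq_zero hu) fun i ↦ aeval_eq_zero <| by
        rw [← pderiv_rename Subtype.val_injective]
        exact hdu i
  have ker_le : (RingHom.ker (aeval (R := K) (id : E → E))).map incl ≤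
      RingHom.ker (aeval (R := K) (id : L → L)) := by
    refine Ideal.map_le_iff_le_comap.mpr fun w hw ↦ ?_
    rw [RingHom.mem_ker] at hw
    rw [Ideal.mem_comap, RingHom.mem_ker, aeval_incl, hw, map_zero]
  exact Ideal.pow_right_mono ker_le 2 (Ideal.map_pow incl _ 2 ▸ Ideal.mem_map_of_mem incl hv)

theorem exists_perfectField_ringHom (F : Type*) [Field F] :
    ∃ (K : Type) (_ : Field K) (_ : PerfectField K), Nonempty (K →+* F) := by
  obtain ⟨p, hp⟩ := CharP.exists F
  rcases CharP.char_is_prime_or_zero F p with hprime | rfl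
  · have := Fact.mk hprime
    exact ⟨ZMod p, inferInstance, inferInstance, ⟨ZMod.castHom dvd_rfl F⟩⟩
  · have := CharP.charP_to_charZero F
    exact ⟨ℚ, inferInstance, inferInstance, ⟨algebraMap ℚ F⟩⟩

theorem exists_coefficientField (F R : Type*) [Field F] [CommRing R] [IsLocalRing R]
    [IsNoetherianRing R] [Algebra F R] :
    ∃ s : ResidueField R →+* AdicCompletion (maximalIdeal R) R,
      ∀ t, ∃ c, t - s c ∈ maximalIdeal (AdicCompletion (maximalIdeal R) R) := by
  obtain ⟨K, _, _, ⟨f⟩⟩ := exists_perfectField_ringHom F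
  let := ((algebraMap F R).comp f).toAlgebra
  have := formallySmooth_of_perfectField K (ResidueField R)
  obtain ⟨s, hs⟩ := Algebra.FormallySmooth.exists_adicCompletionEvalOneₐ_comp_eq
    (AlgHom.id K (ResidueField R) : ResidueField R →ₐ[K] R ⧸ maximalIdeal R)
  refine ⟨s.toRingHom, fun t ↦ ⟨AdicCompletion.evalOneₐ (maximalIdeal R) t, ?_⟩⟩
  rw [AdicCompletion.maximalIdeal_eq_map, ← AdicCompletion.ker_evalOneₐ_eq_map _
    (maximalIdeal R).fg_of_isNoetherianRing, RingHom.mem_ker, map_sub, sub_eq_zero]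
  exact congr($hs (AdicCompletion.evalOneₐ (maximalIdeal R) t)).symm

end CoefficientField

section CohenStructure

theorem exists_ringHom_mvPowerSeries {T k σ : Type*} [CommRing T] [CommRing k] [Finite σ]
    (J : Ideal T) [IsAdicComplete J T] (s : k →+* T) {x : σ → T} (hx : ∀ i, x i ∈ J) :
    ∃ φ : MvPowerSeries σ k →+* T,
      (∀ c, φ (MvPowerSeries.C c) = s c) ∧ ∀ i, φ (MvPowerSeries.X i) = x i := by
  let : UniformSpace k := ⊥
  have : DiscreteTopology k := ⟨rfl⟩
  let : WithIdeal T := ⟨J⟩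
  have hs : Continuous s := continuous_of_discreteTopology
  obtain ⟨_, _⟩ : CompleteSpace T ∧ T2Space T :=
    (IsAdic.isAdicComplete_iff (I := J) (by rfl)).mp inferInstance
  have hx' : MvPowerSeries.HasEval x :=
    { hpow i := WithIdeal.isTopologicallyNilpotent_of_mem (hx i)
      tendsto_zero := by simp }
  exact ⟨MvPowerSeries.eval₂Hom hs hx', fun c ↦ by simp [MvPowerSeries.coe_eval₂Hom],
    fun i ↦ by simp [MvPowerSeries.coe_eval₂Hom]⟩

theorem span_range_eq_top_of_sup_smul_top {A M ι : Type*} [CommRing A] [AddCommGroup M]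
    [Module A M] [Finite ι] (I : Ideal A) [IsPrecomplete I A] [IsHausdorff I M] {v : ι → M}
    (h : Submodule.span A (Set.range v) ⊔ I • ⊤ = ⊤) : Submodule.span A (Set.range v) = ⊤ := by
  have := Fintype.ofFinite ι
  have := isPrecomplete_pi (ι := ι) I
  rw [← Fintype.range_linearCombination, LinearMap.range_eq_top]
  refine surjective_of_mkQ_comp_surjective (I := I) ?_
  rw [← LinearMap.range_eq_top, LinearMap.range_comp, Fintype.range_linearCombination]
  rwa [Submodule.map_mkQ_eq_top, sup_comm]

theorem exists_sub_sum_mul_pow_mem {T k : Type*} [CommRing T] (I : Ideal T) (y : T) (s : k → T)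
    (hs : ∀ t, ∃ c, t - s c ∈ I ⊔ Ideal.span {y}) (n : ℕ) (t : T) :
    ∃ (c : Fin n → k) (t' : T), t - (∑ i, s (c i) * y ^ (i : ℕ) + y ^ n * t') ∈ I := by
  induction n with
  | zero => exact ⟨Fin.elim0, t, by simp⟩
  | succ n ih =>
    obtain ⟨c, t', h⟩ := ih
    obtain ⟨c', hc'⟩ := hs t'
    obtain ⟨q, hq, r, hr, hqr⟩ := Submodule.mem_sup.mp hc'
    obtain ⟨w, rfl⟩ := Ideal.mem_span_singleton.mp hr
    refine ⟨Fin.snoc c c', w, ?_⟩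
    simp only [Fin.sum_univ_castSucc, Fin.snoc_castSucc, Fin.snoc_last, Fin.val_castSucc,
      Fin.val_last]
    convert add_mem h (I.mul_mem_left (y ^ n) hq) using 1
    linear_combination -y ^ n * hqr

theorem exists_algebra_mvPowerSeries {T k σ : Type*} [CommRing T] [CommRing k] [Finite σ]
    (J : Ideal T) [IsAdicComplete J T] (s : k →+* T) (hs : ∀ t, ∃ c, t - s c ∈ J)
    {x : σ → T} {y : T} {ℓ : ℕ} (hJ : J = Ideal.span (Set.range x) ⊔ Ideal.span {y})
    (hy : y ^ ℓ ∈ Ideal.span (Set.range x)) :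
    ∃ _ : Algebra (MvPowerSeries σ k) T, (∀ i, algebraMap (MvPowerSeries σ k) T (.X i) = x i) ∧
      Submodule.span (MvPowerSeries σ k) (Set.range fun i : Fin ℓ ↦ y ^ (i : ℕ)) = ⊤ := by
  have hxJ (i : σ) : x i ∈ J := hJ ▸ Ideal.mem_sup_left (Ideal.subset_span ⟨i, rfl⟩)
  obtain ⟨φ, hC, hX⟩ := exists_ringHom_mvPowerSeries J s hxJ
  let := φ.toAlgebra
  refine ⟨inferInstance, hX, ?_⟩
  let I : Ideal (MvPowerSeries σ k) := Ideal.span (Set.range MvPowerSeries.X)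
  have hI : I.map (algebraMap (MvPowerSeries σ k) T) = Ideal.span (Set.range x) := by
    rw [Ideal.map_span, ← Set.range_comp]
    exact congrArg (fun f ↦ Ideal.span (Set.range f)) (funext hX)
  have : IsHausdorff I T := IsHausdorff.of_map (J := J) (by rw [hI, hJ]; exact le_sup_left)
  refine span_range_eq_top_of_sup_smul_top I (top_le_iff.mp fun t _ ↦ ?_)
  obtain ⟨c, t', h⟩ := exists_sub_sum_mul_pow_mem (Ideal.span (Set.range x)) y s (hJ ▸ hs) ℓ t
  have hsum : ∑ i, s (c i) * y ^ (i : ℕ) ∈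
      Submodule.span (MvPowerSeries σ k) (Set.range fun i : Fin ℓ ↦ y ^ (i : ℕ)) := by
    refine sum_mem fun i _ ↦ ?_
    rw [← hC]
    exact Submodule.smul_mem _ (MvPowerSeries.C (c i)) (Submodule.subset_span ⟨i, rfl⟩)
  have hrest : t - ∑ i, s (c i) * y ^ (i : ℕ) ∈ (I • ⊤ : Submodule (MvPowerSeries σ k) T) := by
    rw [Ideal.smul_top_eq_map, Submodule.restrictScalars_mem, hI]
    convert add_mem h (Ideal.mul_mem_right t' _ hy) using 1
    ring
  simpa using Submodule.add_mem_sup hsum hrest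

theorem algebraMap_injective_of_ringKrullDim_le {A B : Type*} [CommRing A] [IsDomain A]
    [CommRing B] [Algebra A B] [Algebra.IsIntegral A B] [FiniteRingKrullDim A]
    (h : ringKrullDim A ≤ ringKrullDim B) : Function.Injective (algebraMap A B) := by
  rw [injective_iff_map_eq_zero]
  intro a ha
  by_contra hne
  let A' := A ⧸ RingHom.ker (algebraMap A B)
  let : Algebra A' B := (RingHom.kerLift (algebraMap A B)).toAlgebra
  have : IsScalarTower A A' B := .of_algebraMap_eq fun _ ↦ rfl
  have : Algebra.IsIntegral A' B := .tower_top A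
  have hlt : ringKrullDim A + 1 ≤ ringKrullDim A :=
    calc ringKrullDim A + 1
      _ ≤ ringKrullDim A' + 1 := by gcongr; exact h.trans ringKrullDim_le_of_isIntegral
      _ ≤ ringKrullDim A := ringKrullDim_succ_le_of_surjective (Ideal.Quotient.mk _)
        Ideal.Quotient.mk_surjective (mem_nonZeroDivisors_of_ne_zero hne)
        (Ideal.Quotient.eq_zero_iff_mem.mpr ha)
  have hbot := ringKrullDim_ne_bot (R := A)
  have htop := ringKrullDim_ne_top (R := A)
  generalize ringKrullDim A = e at hlt hbot htop
  lift e to ℕ∞ using hbot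
  lift e to ℕ using by simpa using htop
  norm_cast at hlt
  lia

theorem exists_algebra_mvPowerSeries_adicCompletion (F : Type*) {R : Type*} [Field F] [CommRing R]
    [Algebra F R] [IsLocalRing R] [IsNoetherianRing R] {d ℓ : ℕ}
    (hd : (d : WithBot ℕ∞) = ringKrullDim R) {x : Fin d → R} {y : R}
    (hm : maximalIdeal R = Ideal.span (Set.range x) ⊔ Ideal.span {y})
    (hy : y ^ ℓ ∈ Ideal.span (Set.range x)) :
    ∃ _ : Algebra (MvPowerSeries (Fin d) (ResidueField R)) (AdicCompletion (maximalIdeal R) R),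
      FaithfulSMul (MvPowerSeries (Fin d) (ResidueField R)) (AdicCompletion (maximalIdeal R) R) ∧
      (∀ i, algebraMap (MvPowerSeries (Fin d) (ResidueField R)) (AdicCompletion (maximalIdeal R) R)
        (.X i) = algebraMap R _ (x i)) ∧
      Submodule.span (MvPowerSeries (Fin d) (ResidueField R))
        (Set.range fun i : Fin ℓ ↦
          algebraMap R (AdicCompletion (maximalIdeal R) R) y ^ (i : ℕ)) = ⊤ := by
  let A := MvPowerSeries (Fin d) (ResidueField R)
  let B := AdicCompletion (maximalIdeal R) R
  obtain ⟨s, hs⟩ := exists_coefficientField F R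
  have hspan : Ideal.span (Set.range fun i ↦ algebraMap R B (x i)) =
      (Ideal.span (Set.range x)).map (algebraMap R B) := by
    rw [Ideal.map_span, ← Set.range_comp]
    rfl
  have hmB : maximalIdeal B = Ideal.span (Set.range fun i ↦ algebraMap R B (x i)) ⊔
      Ideal.span {algebraMap R B y} := by
    rw [AdicCompletion.maximalIdeal_eq_map, hspan, ← Set.image_singleton, ← Ideal.map_span,
      ← Ideal.map_sup]
    exact congrArg _ hm
  obtain ⟨_, hX, htop⟩ := exists_algebra_mvPowerSeries (maximalIdeal B) s hs hmB
    (hspan ▸ map_pow (algebraMap R B) y ℓ ▸ Ideal.mem_map_of_mem _ hy)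
  refine ⟨inferInstance, ?_, hX, htop⟩
  have : Module.Finite A B := ⟨Submodule.fg_def.mpr ⟨_, Set.finite_range _, htop⟩⟩
  have : IsDomain A := NoZeroDivisors.to_isDomain _
  have : Module.FaithfullyFlat R B := .of_flat_of_isLocalHom
  rw [faithfulSMul_iff_algebraMap_injective]
  exact algebraMap_injective_of_ringKrullDim_le <|
    (ringKrullDim_mvPowerSeries_le _ _).trans (hd.le.trans ringKrullDim_le_of_faithfullyFlat)

end CohenStructure

section PowerGenerated

open Polynomial

variable {A B : Type*} [CommRing A] [CommRing B] [Algebra A B] {I : Ideal A} {y : B} {ℓ : ℕ}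

theorem exists_isDistinguishedAt_aeval_eq_zero [Nontrivial A]
    (hspan : Submodule.span A (Set.range fun i : Fin ℓ ↦ y ^ (i : ℕ)) = ⊤)
    (hy : y ^ ℓ ∈ I.map (algebraMap A B)) :
    ∃ h : A[X], h.IsDistinguishedAt I ∧ h.natDegree = ℓ ∧ aeval y h = 0 := by
  obtain ⟨a, haI, ha⟩ := (Submodule.mem_ideal_smul_span_iff_exists_sum I _ _).mp
    (show y ^ ℓ ∈ I • Submodule.span A _ by
      rwa [hspan, Ideal.smul_top_eq_map, Submodule.restrictScalars_mem])
  rw [Finsupp.sum_fintype _ _ (by simp)] at ha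
  let p : A[X] := ∑ i, C (a i) * X ^ (i : ℕ)
  have hp : p.degree < (X ^ ℓ : A[X]).degree := by
    rw [degree_X_pow]
    exact degree_sum_fin_lt a
  have hdeg : (X ^ ℓ - p).natDegree = ℓ := by
    apply natDegree_eq_of_degree_eq_some
    rw [degree_sub_eq_left_of_degree_lt hp, degree_X_pow]
  refine ⟨X ^ ℓ - p, ⟨⟨fun {i} hi ↦ ?_⟩, (monic_X_pow ℓ).sub_of_left hp⟩, hdeg, ?_⟩
  · rw [hdeg] at hi
    rw [coeff_sub, coeff_X_pow, if_neg hi.ne, zero_sub, finsetSum_coeff]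
    refine neg_mem (sum_mem fun j _ ↦ ?_)
    rw [coeff_C_mul]
    exact I.mul_mem_right _ (haI j)
  · simp [p, ← ha, Algebra.smul_def]

theorem isDistinguishedAt_of_mul_left [I.IsPrime] {f g : A[X]} (hf : f.Monic)
    (hfg : (f * g).IsDistinguishedAt I) : g.IsDistinguishedAt I := by
  have hg : g.Monic := hf.of_mul_monic_left hfg.monic
  let π := Ideal.Quotient.mk I
  have hdvd : g.map π ∣ X ^ (f * g).natDegree :=
    ⟨f.map π, by rw [← hfg.map_eq_X_pow, Polynomial.map_mul, mul_comm]⟩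
  obtain ⟨i, -, hi⟩ := (dvd_prime_pow prime_X _).mp hdvd
  have hgX : g.map π = X ^ i := eq_of_monic_of_associated (hg.map π) (monic_X_pow i) hi
  have hdeg : g.natDegree = i := by rw [← hg.natDegree_map π, hgX, natDegree_X_pow]
  refine ⟨⟨fun {j} hj ↦ ?_⟩, hg⟩
  rw [← Ideal.Quotient.eq_zero_iff_mem, ← coeff_map, hgX, coeff_X_pow, if_neg (by lia)]

theorem pow_natDegree_sub_aeval_mem_map {g : A[X]} (hg : g.IsDistinguishedAt I) (y : B) :
    y ^ g.natDegree - aeval y g ∈ I.map (algebraMap A B) := by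
  rw [aeval_eq_sum_range, Finset.sum_range_succ, hg.monic.coeff_natDegree, one_smul,
    sub_add_cancel_right]
  refine neg_mem (sum_mem fun i hi ↦ ?_)
  rw [Algebra.smul_def]
  exact Ideal.mul_mem_right _ _ (Ideal.mem_map_of_mem _ (hg.mem (Finset.mem_range.mp hi)))

theorem adjoin_eq_top_of_span_pow_eq_top
    (hspan : Submodule.span A (Set.range fun i : Fin ℓ ↦ y ^ (i : ℕ)) = ⊤) :
    Algebra.adjoin A {y} = ⊤ := by
  rw [← Algebra.toSubmodule_eq_top, ← top_le_iff, ← hspan, Submodule.span_le]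
  rintro _ ⟨i, rfl⟩
  exact pow_mem (Algebra.self_mem_adjoin_singleton A y) i

theorem isIntegral_of_span_pow_eq_top
    (hspan : Submodule.span A (Set.range fun i : Fin ℓ ↦ y ^ (i : ℕ)) = ⊤) :
    Algebra.IsIntegral A B :=
  have : Module.Finite A B := ⟨Submodule.fg_def.mpr ⟨_, Set.finite_range _, hspan⟩⟩
  inferInstance

theorem exists_isPrime_faithfulSMul_quotient [IsDomain A] [Algebra.IsIntegral A B]
    [FaithfulSMul A B] : ∃ Q : Ideal B, Q.IsPrime ∧ FaithfulSMul A (B ⧸ Q) := by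
  obtain ⟨Q, -, hQ, hQ'⟩ := Ideal.exists_ideal_over_prime_of_isIntegral (⊥ : Ideal A) (⊥ : Ideal B)
    (by rw [← RingHom.ker_eq_comap_bot,
      (RingHom.injective_iff_ker_eq_bot _).mp (FaithfulSMul.algebraMap_injective A B)])
  refine ⟨Q, hQ, (faithfulSMul_iff_algebraMap_injective _ _).mpr ?_⟩
  rw [RingHom.injective_iff_ker_eq_bot, IsScalarTower.algebraMap_eq A B, ← RingHom.comap_ker,
    Ideal.Quotient.algebraMap_eq, Ideal.mk_ker, hQ']

theorem exists_eq_smul_of_prime_smul_eq {A M : Type*} [CommRing A] [AddCommGroup M] [Module A M]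
    [Module.Free A M] {p q : A} (hp : Prime p) (hpq : ¬ p ∣ q) {u v : M} (h : p • u = q • v) :
    ∃ w, v = p • w := by
  let b := Module.Free.chooseBasis A M
  have hdvd i : p ∣ b.repr v i := (hp.dvd_or_dvd ⟨b.repr u i, by
    simpa using congr(b.repr $h i).symm⟩).resolve_left hpq
  have hv : v ∈ Ideal.span {p} • Submodule.span A (Set.range b) :=
    (Submodule.mem_ideal_smul_span_iff_exists_sum _ _ _).mpr
      ⟨b.repr v, fun i ↦ Ideal.mem_span_singleton.mpr (hdvd i), b.linearCombination_repr v⟩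
  rw [Submodule.ideal_span_singleton_smul, Submodule.mem_smul_pointwise_iff_exists] at hv
  obtain ⟨w, -, hw⟩ := hv
  exact ⟨w, hw.symm⟩

theorem exists_forall_mul_eq_smul {ι : Type*} [Finite ι] {a : ι → A} {r : ι → B}
    (hr : ∀ i j, a i • r j = a j • r i) {c : B}
    (hc : c ∈ (Ideal.span (Set.range a)).map (algebraMap A B)) :
    ∃ s, ∀ m, c * r m = a m • s := by
  have := Fintype.ofFinite ι
  rw [Ideal.map_span, ← Set.range_comp] at hc
  obtain ⟨e, rfl⟩ := Ideal.mem_span_range_iff_exists_fun.mp hc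
  refine ⟨∑ i, e i * r i, fun m ↦ ?_⟩
  simp only [Function.comp_apply, Finset.sum_mul, Finset.smul_sum, mul_assoc, ← Algebra.smul_def,
    hr _ m, mul_smul_comm]

theorem exists_sub_smul_mem [IsDomain A] {Q : Ideal B} [Module.Free A (B ⧸ Q)] {ι : Type*}
    {a : ι → A} {i j : ι} (hi : Prime (a i)) (hij : ¬ a i ∣ a j) {r : ι → B}
    (hr : ∀ i j, a i • r j = a j • r i) : ∃ w, ∀ m, r m - a m • w ∈ Q := by
  let π := Ideal.Quotient.mkₐ A Q
  obtain ⟨w, hw⟩ : ∃ w, π (r i) = a i • w :=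
    exists_eq_smul_of_prime_smul_eq hi hij (by simpa only [map_smul] using congr(π $(hr i j)))
  obtain ⟨w, rfl⟩ := Ideal.Quotient.mkₐ_surjective A Q w
  refine ⟨w, fun m ↦ ?_⟩
  have h : a i • π (r m - a m • w) = 0 :=
    calc a i • π (r m - a m • w) = π (a i • r m) - a i • a m • π w := by
          rw [map_sub, smul_sub, map_smul, map_smul]
      _ = 0 := by rw [hr i m, map_smul, hw, smul_comm, sub_self]
  exact Ideal.Quotient.eq_zero_iff_mem.mp ((smul_eq_zero_iff_right hi.ne_zero).mp h)

variable [IsDomain A] [IsIntegrallyClosed A] {Q : Ideal B} [Q.IsPrime] [FaithfulSMul A (B ⧸ Q)]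

theorem free_quotient_of_adjoin_eq_top [Algebra.IsIntegral A B]
    (hadj : Algebra.adjoin A {y} = ⊤) : Module.Free A (B ⧸ Q) := by
  have hadj' : Algebra.adjoin A {Ideal.Quotient.mkₐ A Q y} = ⊤ := by
    rw [← Set.image_singleton, ← AlgHom.map_adjoin, hadj, Algebra.map_top, AlgHom.range_eq_top]
    exact Ideal.Quotient.mkₐ_surjective A Q
  exact .of_basis (PowerBasis.ofAdjoinEqTop' (Algebra.IsIntegral.isIntegral _) hadj').basis

theorem exists_mem_map_forall_pow_mul_eq [I.IsPrime]
    (hspan : Submodule.span A (Set.range fun i : Fin ℓ ↦ y ^ (i : ℕ)) = ⊤)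
    (hy : y ^ ℓ ∈ I.map (algebraMap A B)) :
    ∃ c ∈ I.map (algebraMap A B), ∀ t ∈ Q, y ^ (ℓ - 1) * t = c * t := by
  have := isIntegral_of_span_pow_eq_top hspan
  have aeval_mem_iff (p : A[X]) : aeval y p ∈ Q ↔ minpoly A (Ideal.Quotient.mkₐ A Q y) ∣ p := by
    rw [← minpoly.isIntegrallyClosed_dvd_iff (Algebra.IsIntegral.isIntegral _), aeval_algHom_apply]
    exact Ideal.Quotient.eq_zero_iff_mem.symm
  set μ := minpoly A (Ideal.Quotient.mkₐ A Q y)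
  have hint : IsIntegral A (Ideal.Quotient.mkₐ A Q y) := Algebra.IsIntegral.isIntegral _
  have hμ : μ.Monic := minpoly.monic hint
  obtain ⟨h, hh, rfl, hhy⟩ := exists_isDistinguishedAt_aeval_eq_zero hspan hy
  obtain ⟨g, rfl⟩ : μ ∣ h := (aeval_mem_iff h).mp (hhy ▸ Q.zero_mem)
  have hg := isDistinguishedAt_of_mul_left hμ hh
  have aeval_g_mul {t : B} (ht : t ∈ Q) : aeval y g * t = 0 := by
    obtain ⟨p, rfl⟩ : ∃ p, aeval y p = t := by
      simpa [Algebra.adjoin_singleton_eq_range_aeval] using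
        (adjoin_eq_top_of_span_pow_eq_top hspan).ge (Algebra.mem_top (x := t))
    obtain ⟨w, rfl⟩ := (aeval_mem_iff p).mp ht
    rw [← map_mul, ← mul_assoc, mul_comm g, map_mul, hhy, zero_mul]
  obtain ⟨j, hj⟩ : ∃ j, (μ * g).natDegree - 1 = j + g.natDegree := by
    have := minpoly.natDegree_pos hint
    rw [hμ.natDegree_mul hg.monic]
    exact ⟨μ.natDegree - 1, by lia⟩
  refine ⟨y ^ j * (y ^ g.natDegree - aeval y g),
    Ideal.mul_mem_left _ _ (pow_natDegree_sub_aeval_mem_map hg y), fun t ht ↦ ?_⟩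
  rw [hj]
  linear_combination y ^ j * aeval_g_mul ht

theorem exists_forall_pow_mul_eq_smul [FaithfulSMul A B] {ι : Type*} [Finite ι] {a : ι → A}
    {i j : ι} (hi : Prime (a i)) (hij : ¬ a i ∣ a j) (ha : (Ideal.span (Set.range a)).IsPrime)
    (hspan : Submodule.span A (Set.range fun i : Fin ℓ ↦ y ^ (i : ℕ)) = ⊤)
    (hy : y ^ ℓ ∈ (Ideal.span (Set.range a)).map (algebraMap A B))
    {r : ι → B} (hr : ∀ i j, a i • r j = a j • r i) :
    ∃ s, ∀ m, y ^ (ℓ - 1) * r m = a m • s := by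
  have := isIntegral_of_span_pow_eq_top hspan
  obtain ⟨Q, _, _⟩ := exists_isPrime_faithfulSMul_quotient (A := A) (B := B)
  have := free_quotient_of_adjoin_eq_top (Q := Q) (adjoin_eq_top_of_span_pow_eq_top hspan)
  obtain ⟨w, hw⟩ := exists_sub_smul_mem (Q := Q) hi hij hr
  obtain ⟨c, hc, hcQ⟩ := exists_mem_map_forall_pow_mul_eq (Q := Q) hspan hy
  obtain ⟨s, hs⟩ := exists_forall_mul_eq_smul hr hc
  refine ⟨y ^ (ℓ - 1) * w + s - c * w, fun m ↦ ?_⟩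
  have hsplit := hcQ _ (hw m)
  simp only [Algebra.smul_def] at hsplit hs ⊢
  linear_combination hsplit + hs m

end PowerGenerated

section Regular

theorem dvd_of_algebraMap_dvd_algebraMap {A B : Type*} [CommRing A] [CommRing B] [Algebra A B]
    [Module.FaithfullyFlat A B] {u v : A} (h : algebraMap A B v ∣ algebraMap A B u) : v ∣ u := by
  rw [← Ideal.mem_span_singleton,
    ← Ideal.comap_map_eq_self_of_faithfullyFlat (B := B) (Ideal.span {v}), Ideal.mem_comap,
    Ideal.map_span, Set.image_singleton]
  exact Ideal.mem_span_singleton.mpr h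

theorem isIntegrallyClosed_of_faithfullyFlat (A B : Type*) [CommRing A] [IsDomain A]
    [IsNoetherianRing A] [CommRing B] [IsDomain B] [IsNoetherianRing B] [IsIntegrallyClosed B]
    [Algebra A B] [Module.FaithfullyFlat A B] : IsIntegrallyClosed A := by
  rw [isIntegrallyClosed_iff_forall_dvd]
  intro c u v hc hv h
  have hinj : Function.Injective (algebraMap A B) := FaithfulSMul.algebraMap_injective A B
  refine dvd_of_algebraMap_dvd_algebraMap (B := B) <|
    isIntegrallyClosed_iff_forall_dvd.mp inferInstance (algebraMap A B c) _ _
      ((map_ne_zero_iff _ hinj).mpr hc) ((map_ne_zero_iff _ hinj).mpr hv) fun n ↦ ?_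
  simpa using map_dvd (algebraMap A B) (h n)

theorem nonempty_ringEquiv_mvPowerSeries (F : Type*) {R : Type*} [Field F] [CommRing R]
    [Algebra F R] [IsLocalRing R] [IsNoetherianRing R] {d : ℕ}
    (hd : (d : WithBot ℕ∞) = ringKrullDim R) {x : Fin d → R}
    (hx : maximalIdeal R = Ideal.span (Set.range x)) :
    Nonempty (MvPowerSeries (Fin d) (ResidueField R) ≃+* AdicCompletion (maximalIdeal R) R) := by
  obtain ⟨_, _, -, htop⟩ := exists_algebra_mvPowerSeries_adicCompletion F hd (y := 0) (ℓ := 1)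
    (by simpa using hx) (by simp)
  refine ⟨.ofBijective (algebraMap _ _) ⟨FaithfulSMul.algebraMap_injective _ _, fun t ↦ ?_⟩⟩
  have ht : t ∈ Submodule.span (MvPowerSeries (Fin d) (ResidueField R)) {1} := by
    have : t ∈ (⊤ : Submodule (MvPowerSeries (Fin d) (ResidueField R)) _) := trivial
    simpa [← htop, Set.range_unique] using this
  obtain ⟨a, rfl⟩ := Submodule.mem_span_singleton.mp ht
  exact ⟨a, Algebra.algebraMap_eq_smul_one a⟩

theorem isDomain_and_isIntegrallyClosed_of_maximalIdeal_eq_span (F : Type*) {R : Type*} [Field F]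
    [CommRing R] [Algebra F R] [IsLocalRing R] [IsNoetherianRing R] {d : ℕ}
    (hd : (d : WithBot ℕ∞) = ringKrullDim R) {x : Fin d → R}
    (hx : maximalIdeal R = Ideal.span (Set.range x)) : IsDomain R ∧ IsIntegrallyClosed R := by
  let A := MvPowerSeries (Fin d) (ResidueField R)
  let B := AdicCompletion (maximalIdeal R) R
  obtain ⟨e⟩ := nonempty_ringEquiv_mvPowerSeries F hd hx
  have : IsDomain A := NoZeroDivisors.to_isDomain _
  have : IsIntegrallyClosed A := isIntegrallyClosed_mvPowerSeries _ _
  have : IsDomain B := e.symm.injective.isDomain e.symm.toRingHom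
  have : IsIntegrallyClosed B := .of_equiv e
  have : IsNoetherianRing B := isNoetherianRing_of_ringEquiv A e
  have : Module.FaithfullyFlat R B := .of_flat_of_isLocalHom
  have : IsDomain R := (FaithfulSMul.algebraMap_injective R B).isDomain (algebraMap R B)
  exact ⟨this, isIntegrallyClosed_of_faithfullyFlat R B⟩

end Regular

section Generators

variable {R ι : Type*} [CommRing R] {x : ι → R}

theorem exists_notMem_forall_exists_sub_mul_mem_of_covBy {J : Ideal R}
    (hJ : J ⋖ Ideal.span (Set.range x)) : ∃ i, x i ∉ J ∧ ∀ j, ∃ a, x j - a * x i ∈ J := by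
  obtain ⟨i, hi⟩ : ∃ i, x i ∉ J := by
    by_contra! h
    exact hJ.lt.not_ge (Ideal.span_le.mpr (Set.range_subset_iff.mpr h))
  have hsup : J ⊔ Ideal.span {x i} = Ideal.span (Set.range x) := by
    refine (hJ.eq_or_eq le_sup_left (sup_le hJ.le ?_)).resolve_left fun h ↦
      hi (h ▸ Ideal.mem_sup_right (Ideal.mem_span_singleton_self _))
    exact Ideal.span_mono (Set.singleton_subset_iff.mpr ⟨i, rfl⟩)
  refine ⟨i, hi, fun j ↦ ?_⟩
  obtain ⟨u, hu, v, hv, huv⟩ := Submodule.mem_sup.mp (hsup.ge (Ideal.subset_span ⟨j, rfl⟩))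
  obtain ⟨a, rfl⟩ := Ideal.mem_span_singleton'.mp hv
  exact ⟨a, by rwa [← huv, add_sub_cancel_right]⟩

variable [IsLocalRing R]

theorem le_span_sub_mul_sup_maximalIdeal_mul [Finite ι] (hx : ∀ j, x j ∈ maximalIdeal R)
    {J : Ideal R} (hJ : J ≤ Ideal.span (Set.range x)) {i : ι} (hi : x i ∉ J) {a : ι → R}
    (ha : ∀ j, x j - a j * x i ∈ J) :
    J ≤ Ideal.span ((fun j ↦ x j - a j * x i) '' {i}ᶜ) ⊔ maximalIdeal R * maximalIdeal R := by
  have := Fintype.ofFinite ι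
  have mul_mem {e : R} (he : e * x i ∈ J) : e * x i ∈ maximalIdeal R * maximalIdeal R := by
    refine Ideal.mul_mem_mul (fun h ↦ hi ?_) (hx i)
    exact (Ideal.unit_mul_mem_iff_mem J h).mp he
  have sub_mem (j : ι) : x j - a j * x i ∈
      Ideal.span ((fun j ↦ x j - a j * x i) '' {i}ᶜ) ⊔ maximalIdeal R * maximalIdeal R := by
    rcases eq_or_ne j i with rfl | hji
    · have : x j - a j * x j = (1 - a j) * x j := by ring
      exact Ideal.mem_sup_right (this ▸ mul_mem (this ▸ ha j))
    · exact Ideal.mem_sup_left (Ideal.subset_span ⟨j, hji, rfl⟩)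
  intro t ht
  obtain ⟨e, rfl⟩ := Ideal.mem_span_range_iff_exists_fun.mp (hJ ht)
  have hsplit : ∑ j, e j * x j = ∑ j, e j * (x j - a j * x i) + (∑ j, e j * a j) * x i := by
    simp only [Finset.sum_mul, ← Finset.sum_add_distrib]
    exact Finset.sum_congr rfl fun j _ ↦ by ring
  have hJsum : ∑ j, e j * (x j - a j * x i) ∈ J := sum_mem fun j _ ↦ J.mul_mem_left _ (ha j)
  rw [hsplit] at ht ⊢
  exact add_mem (sum_mem fun j _ ↦ Ideal.mul_mem_left _ _ (sub_mem j))
    (Ideal.mem_sup_right (mul_mem ((J.add_mem_iff_right hJsum).mp ht)))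

theorem exists_maximalIdeal_eq_span_range [IsNoetherianRing R] [Finite ι]
    (hx : ∀ j, x j ∈ maximalIdeal R) {I : Ideal R} (hI : I < Ideal.span (Set.range x)) {y : R}
    (hy : maximalIdeal R = I ⊔ Ideal.span {y}) :
    ∃ w : ι → R, maximalIdeal R = Ideal.span (Set.range w) := by
  classical
  obtain ⟨J, hIJ, hJ⟩ := exists_le_covBy_of_lt hI
  obtain ⟨i, hi, h⟩ := exists_notMem_forall_exists_sub_mul_mem_of_covBy hJ
  choose a ha using h
  let w : ι → R := Function.update (fun j ↦ x j - a j * x i) i y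
  have hym : y ∈ maximalIdeal R := hy ▸ Ideal.mem_sup_right (Ideal.mem_span_singleton_self y)
  have hw : Ideal.span (Set.range w) ≤ maximalIdeal R := by
    rw [Ideal.span_le, Set.range_subset_iff]
    intro j
    rcases eq_or_ne j i with rfl | hji
    · simpa [w] using hym
    · rw [show w j = x j - a j * x i from Function.update_of_ne hji _ _]
      exact sub_mem (hx j) (Ideal.mul_mem_left _ _ (hx i))
  have himage : Ideal.span ((fun j ↦ x j - a j * x i) '' {i}ᶜ) ≤ Ideal.span (Set.range w) := by
    refine Ideal.span_mono ?_
    rintro _ ⟨j, hji, rfl⟩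
    exact ⟨j, Function.update_of_ne hji _ _⟩
  have hyw : Ideal.span {y} ≤ Ideal.span (Set.range w) :=
    Ideal.span_mono (Set.singleton_subset_iff.mpr ⟨i, Function.update_self _ _ _⟩)
  refine ⟨w, le_antisymm (Submodule.le_of_le_smul_of_le_jacobson_bot
    (IsNoetherian.noetherian _) (maximalIdeal_le_jacobson _) ?_) hw⟩
  calc maximalIdeal R = I ⊔ Ideal.span {y} := hy
    _ ≤ Ideal.span (Set.range w) ⊔ maximalIdeal R * maximalIdeal R :=
      sup_le (hIJ.trans ((le_span_sub_mul_sup_maximalIdeal_mul hx hJ.le hi ha).trans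
        (sup_le_sup_right himage _))) (hyw.trans le_sup_left)

end Generators

section Conductor

theorem sum_mul_dvd_pow_mul_sum_mul (F : Type*) {R : Type*} [Field F] [CommRing R] [Algebra F R]
    [IsLocalRing R] [IsNoetherianRing R] {n ℓ : ℕ}
    (hd : ((n + 2 : ℕ) : WithBot ℕ∞) = ringKrullDim R) {x : Fin (n + 2) → R} {y : R}
    (hm : maximalIdeal R = Ideal.span (Set.range x) ⊔ Ideal.span {y})
    (hy : y ^ (ℓ + 1) ∈ Ideal.span (Set.range x)) {r : Fin (n + 2) → R}
    (hr : ∀ i j, x i * r j = x j * r i) (c : Fin (n + 2) → R) :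
    ∑ j, c j * x j ∣ y ^ ℓ * ∑ j, c j * r j := by
  let A := MvPowerSeries (Fin (n + 2)) (ResidueField R)
  let B := AdicCompletion (maximalIdeal R) R
  have : Module.FaithfullyFlat R B := .of_flat_of_isLocalHom
  have : IsDomain A := NoZeroDivisors.to_isDomain _
  have : IsIntegrallyClosed A := isIntegrallyClosed_mvPowerSeries _ _
  obtain ⟨_, _, hX, hspan⟩ := exists_algebra_mvPowerSeries_adicCompletion F hd hm hy
  have hprime : (Ideal.span (Set.range (MvPowerSeries.X : Fin (n + 2) → A))).IsPrime :=
    maximalIdeal_mvPowerSeries (ResidueField R) (n + 2) ▸ inferInstance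
  have hmap : (Ideal.span (Set.range (MvPowerSeries.X : Fin (n + 2) → A))).map (algebraMap A B) =
      (Ideal.span (Set.range x)).map (algebraMap R B) := by
    rw [Ideal.map_span, Ideal.map_span, ← Set.range_comp, ← Set.range_comp]
    exact congrArg (fun f ↦ Ideal.span (Set.range f)) (funext hX)
  obtain ⟨s, hs⟩ := exists_forall_pow_mul_eq_smul
    (prime_mvPowerSeries_X_zero (ResidueField R) (n + 1))
    (not_mvPowerSeries_X_dvd_X (ResidueField R) zero_ne_one) hprime hspan
    (hmap ▸ map_pow (algebraMap R B) y (ℓ + 1) ▸ Ideal.mem_map_of_mem _ hy)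
    (r := fun j ↦ algebraMap R B (r j)) fun i j ↦ by
      rw [Algebra.smul_def, Algebra.smul_def, hX, hX]
      simpa only [map_mul] using congrArg (algebraMap R B) (hr i j)
  refine dvd_of_algebraMap_dvd_algebraMap (B := B) ⟨s, ?_⟩
  simp only [Algebra.smul_def, hX, add_tsub_cancel_right] at hs
  simp only [map_mul, map_sum, map_pow, Finset.mul_sum, Finset.sum_mul]
  exact Finset.sum_congr rfl fun j _ ↦ by linear_combination algebraMap R B (c j) * hs j

variable {R : Type} [CommRing R]

theorem mem_conductorIdeal_iff {r : R} :
    r ∈ conductorIdeal R ↔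
      ∀ b : FractionRing R, IsIntegral R b → ∃ a, algebraMap R (FractionRing R) a = r • b := by
  rw [conductorIdeal, Module.mem_annihilator, (Submodule.Quotient.mk_surjective _).forall,
    Subtype.forall]
  refine forall₂_congr fun b hb ↦ ?_
  rw [← Submodule.Quotient.mk_smul, Submodule.Quotient.mk_eq_zero, LinearMap.mem_range]
  exact exists_congr fun a ↦ Subtype.ext_iff

theorem conductorIdeal_eq_top_iff :
    conductorIdeal R = ⊤ ↔
      ∀ b : FractionRing R, IsIntegral R b → ∃ a, algebraMap R (FractionRing R) a = b := by
  simp [Ideal.eq_top_iff_one, mem_conductorIdeal_iff]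

theorem mem_conductorIdeal_of_algebraMap_eq_smul {a r : R} {b : FractionRing R}
    (hr : r ∈ conductorIdeal R) (hb : IsIntegral R b)
    (ha : algebraMap R (FractionRing R) a = r • b) : a ∈ conductorIdeal R := by
  refine mem_conductorIdeal_iff.mpr fun b' hb' ↦ ?_
  obtain ⟨t, ht⟩ := mem_conductorIdeal_iff.mp hr (b * b') (hb.mul hb')
  exact ⟨t, by rw [ht, Algebra.smul_def a, ha, smul_mul_assoc]⟩

theorem conductorIdeal_eq_top_of_eq_span_singleton {x : R} (hx : x ∈ nonZeroDivisors R)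
    (h : conductorIdeal R = Ideal.span {x}) : conductorIdeal R = ⊤ := by
  have hxc : x ∈ conductorIdeal R := h ▸ Ideal.mem_span_singleton_self x
  refine conductorIdeal_eq_top_iff.mpr fun b hb ↦ ?_
  obtain ⟨a, ha⟩ := mem_conductorIdeal_iff.mp hxc b hb
  obtain ⟨t, rfl⟩ : x ∣ a :=
    Ideal.mem_span_singleton.mp (h ▸ mem_conductorIdeal_of_algebraMap_eq_smul hxc hb ha)
  refine ⟨t, (isRegular_iff_mem_nonZeroDivisors.mpr hx).isSMulRegular ?_⟩
  change x • algebraMap R (FractionRing R) t = x • b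
  rw [← ha, map_mul, Algebra.smul_def]

variable [IsLocalRing R]

theorem exists_mem_nonZeroDivisors_of_conductorIdeal_ne_top (h : conductorIdeal R ≠ ⊤)
    {q : Ideal R} (hq : q.radical = maximalIdeal R) : ∃ z ∈ q, z ∈ nonZeroDivisors R := by
  obtain ⟨z, hzm, hz⟩ : ∃ z ∈ maximalIdeal R, z ∈ nonZeroDivisors R := by
    contrapose! h
    have isUnit_of_mem (z : R) (hz : z ∈ nonZeroDivisors R) : IsUnit z :=
      not_not.mp fun hu ↦ h z hu hz
    let e : R ≃ₐ[R] FractionRing R :=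
      IsLocalization.atUnits R (nonZeroDivisors R) isUnit_of_mem
    exact conductorIdeal_eq_top_iff.mpr fun b _ ↦ e.surjective b
  obtain ⟨n, hn⟩ := hq.ge hzm
  exact ⟨z ^ n, hn, pow_mem hz n⟩

variable [IsNoetherianRing R]

theorem pow_mem_conductorIdeal_of_pow_succ_mem (F : Type*) [Field F] [Algebra F R] {n ℓ : ℕ}
    (hd : ((n + 2 : ℕ) : WithBot ℕ∞) = ringKrullDim R) {x : Fin (n + 2) → R}
    (hx : conductorIdeal R = Ideal.span (Set.range x)) {z : R} (hzc : z ∈ conductorIdeal R)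
    (hz : z ∈ nonZeroDivisors R) {y : R}
    (hm : maximalIdeal R = conductorIdeal R ⊔ Ideal.span {y})
    (hy : y ^ (ℓ + 1) ∈ conductorIdeal R) : y ^ ℓ ∈ conductorIdeal R := by
  have hxc (j) : x j ∈ conductorIdeal R := hx ▸ Ideal.subset_span ⟨j, rfl⟩
  obtain ⟨c, rfl⟩ := Ideal.mem_span_range_iff_exists_fun.mp (hx ▸ hzc)
  refine mem_conductorIdeal_iff.mpr fun b hb ↦ ?_
  choose r hr using fun j ↦ mem_conductorIdeal_iff.mp (hxc j) b hb
  have hxr (i j) : x i * r j = x j * r i :=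
    IsFractionRing.injective R (FractionRing R) <| by
      rw [map_mul, map_mul, hr, hr, ← Algebra.smul_def, ← Algebra.smul_def, smul_comm]
  obtain ⟨a, ha⟩ := sum_mul_dvd_pow_mul_sum_mul F hd (hx ▸ hm) (hx ▸ hy) hxr c
  refine ⟨a, (isRegular_iff_mem_nonZeroDivisors.mpr hz).isSMulRegular ?_⟩
  have hsum : algebraMap R (FractionRing R) (∑ j, c j * r j) = (∑ j, c j * x j) • b := by
    simp only [map_sum, map_mul, hr, Algebra.smul_def, Finset.sum_mul, mul_assoc]
  change (∑ j, c j * x j) • algebraMap R (FractionRing R) a = (∑ j, c j * x j) • y ^ ℓ • b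
  rw [smul_comm, ← hsum, Algebra.smul_def, Algebra.smul_def, ← map_mul, ← map_mul, ha]

theorem conductorIdeal_ne_span_range (F : Type*) [Field F] [Algebra F R] {d : ℕ} {x : Fin d → R}
    (hx : IsSystemOfParameters R x) {y : R}
    (hm : maximalIdeal R = conductorIdeal R ⊔ Ideal.span {y}) :
    conductorIdeal R ≠ Ideal.span (Set.range x) := by
  intro h
  obtain ⟨hd, -, hrad⟩ := hx
  rw [← h] at hrad
  have htop : conductorIdeal R ≠ ⊤ :=
    ne_top_of_le_ne_top (maximalIdeal.isMaximal R).ne_top (le_sup_left.trans hm.ge)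
  obtain ⟨z, hzc, hz⟩ := exists_mem_nonZeroDivisors_of_conductorIdeal_ne_top htop hrad
  match d with
  | 0 =>
    have : z = 0 := by simpa [h] using hzc
    exact zero_notMem_nonZeroDivisors (this ▸ hz)
  | 1 =>
    rw [Set.range_unique] at h
    obtain ⟨c, rfl⟩ := Ideal.mem_span_singleton'.mp (h ▸ hzc)
    exact htop (conductorIdeal_eq_top_of_eq_span_singleton (mul_mem_nonZeroDivisors.mp hz).2 h)
  | n + 2 =>
    have pow_notMem (N : ℕ) : y ^ N ∉ conductorIdeal R := by
      induction N with
      | zero => rwa [pow_zero, ← Ideal.eq_top_iff_one]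
      | succ N ih => exact mt (pow_mem_conductorIdeal_of_pow_succ_mem F hd h hzc hz hm) ih
    obtain ⟨N, hN⟩ : y ∈ (conductorIdeal R).radical :=
      hrad ▸ hm ▸ Ideal.mem_sup_right (Ideal.mem_span_singleton_self y)
    exact pow_notMem N hN

end Conductor

theorem stmt19_general (R : Type) [CommRing R] [IsLocalRing R] [IsNoetherianRing R]
    (hfield : ∃ F : Subring R, IsField ↥F)
    (y : R) (hy : maximalIdeal R = conductorIdeal R + Ideal.span {y}) :
    ∀ (d : ℕ) (x : Fin d → R), IsSystemOfParameters R x →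
      ¬ conductorIdeal R ≤ Ideal.span (Set.range x) := by
  intro d x hx hle
  obtain ⟨F, hF⟩ := hfield
  let := hF.toField
  obtain ⟨w, hw⟩ := exists_maximalIdeal_eq_span_range hx.2.1
    (hle.lt_of_ne (conductorIdeal_ne_span_range F hx hy)) hy
  obtain ⟨_, _⟩ := isDomain_and_isIntegrallyClosed_of_maximalIdeal_eq_span F hx.1 hw
  have htop : conductorIdeal R = ⊤ :=
    conductorIdeal_eq_top_iff.mpr fun b hb ↦ IsIntegrallyClosed.isIntegral_iff.mp hb
  exact ne_top_of_le_ne_top (maximalIdeal.isMaximal R).ne_top (le_sup_left.trans hy.ge) htop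

-- STATEMENT 19
theorem stmt19 (R : Type) [CommRing R] [IsLocalRing R] [IsNoetherianRing R]
    (hau : AnalyticallyUnramified R)
    (hfield : ∃ F : Subring R, IsField ↥F)
    (y : R) (hy : maximalIdeal R = conductorIdeal R + Ideal.span {y}) :
    ∀ (d : ℕ) (x : Fin d → R), IsSystemOfParameters R x →
      ¬ conductorIdeal R ≤ Ideal.span (Set.range x) :=
  stmt19_general R hfield y hy
end
end
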